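/- Let u ∈ H¹(ℝ²) and let a* = ‖Q‖²_{L²}, where Q is the unique positive radial H¹ solution of −ΔQ + Q − Q³ = 0 on ℝ². Then ∫_{ℝ²}|u|⁴ ≤ (2/a*) (∫_{ℝ²}|∇u|²)(∫_{ℝ²}|u|²), and the constant is sharp. -/

import Mathlib

open MeasureTheory

/-- The Laplacian on ℝ², as the trace of the second derivative. -/
noncomputable def lap2 (f : EuclideanSpace ℝ (Fin 2) → ℝ)
    (x : EuclideanSpace ℝ (Fin 2)) : ℝ :=
  ∑ i : Fin 2,
    fderiv ℝ (fun y => fderiv ℝ f y (EuclideanSpace.single i (1 : ℝ))) x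
      (EuclideanSpace.single i (1 : ℝ))

open Filter Topology
open Set Pointwise in
theorem volume_add_volume_le_volume_add {s t : Set ℝ} (hs : MeasurableSet s) (ht : MeasurableSet t)
    (hs₀ : s.Nonempty) (ht₀ : t.Nonempty) : volume s + volume t ≤ volume (s + t) := by
  have key : ∀ K L : Set ℝ, IsCompact K → IsCompact L → K.Nonempty → L.Nonempty →
      volume K + volume L ≤ volume (K + L) := by
    intro K L hK hL hK₀ hL₀
    obtain ⟨a, haK, ha⟩ := hK.exists_isGreatest hK₀
    obtain ⟨b, hbL, hb⟩ := hL.exists_isLeast hL₀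
    have h1 : volume (K + {b}) = volume K := by
      rw [add_singleton]; simp
    have h2 : volume ({a} + L) = volume L := by
      rw [singleton_add]; simp
    have hdisj : AEDisjoint volume (K + {b}) ({a} + L) := by
      refine measure_mono_null (t := {a + b}) ?_ (by simp)
      rintro x ⟨hx1, hx2⟩
      rw [add_singleton] at hx1
      rw [singleton_add] at hx2
      obtain ⟨k, hk, rfl⟩ := hx1
      obtain ⟨l, hl, hkl⟩ := hx2
      have := ha hk
      have := hb hl
      simp only [mem_singleton_iff] at *
      linarith
    rw [← h1, ← h2, ← measure_union₀ ?_ hdisj]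
    · exact measure_mono (union_subset (add_subset_add_left (by simpa using hbL))
        (add_subset_add_right (by simpa using haK)))
    · exact (isCompact_singleton.add hL).measurableSet.nullMeasurableSet
  rw [hs.measure_eq_iSup_isCompact, ht.measure_eq_iSup_isCompact]
  obtain ⟨x, hx⟩ := hs₀
  obtain ⟨y, hy⟩ := ht₀
  simp only [iSup_and']
  refine ENNReal.biSup_add_biSup_le' ⟨∅, by simp⟩ ⟨∅, by simp⟩ ?_
  rintro K ⟨hKs, hK⟩ L ⟨hLt, hL⟩
  calc volume K + volume L ≤ volume (insert x K) + volume (insert y L) := by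
        gcongr <;> exact subset_insert _ _
    _ ≤ volume (insert x K + insert y L) :=
        key _ _ (hK.insert x) (hL.insert y) (insert_nonempty _ _) (insert_nonempty _ _)
    _ ≤ volume (s + t) := measure_mono
        (add_subset_add (insert_subset hx hKs) (insert_subset hy hLt))

open Set Pointwise in
/-- One-dimensional sup-convolution inequality behind the Brunn-Minkowski inequality. -/
theorem add_mul_integral_div_le_integral {f g H : ℝ → ℝ} {F G : ℝ}
    (hf : Measurable f) (hg : Measurable g) (hH : Integrable H)
    (hf₀ : 0 ≤ f) (hg₀ : 0 ≤ g) (hH₀ : 0 ≤ H) (hfi : Integrable f) (hgi : Integrable g)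
    (hF : IsLUB (range f) F) (hG : IsLUB (range g) G) (hF₀ : 0 < F) (hG₀ : 0 < G)
    (h : ∀ x y, 0 < f x → 0 < g y → f x + g y ≤ H (x + y)) :
    (F + G) * ((∫ x, f x) / F + (∫ x, g x) / G) ≤ ∫ x, H x := by
  have hfF : ∀ x, f x / F ≤ 1 := fun x => (div_le_one hF₀).2 (hF.1 ⟨x, rfl⟩)
  have hgG : ∀ x, g x / G ≤ 1 := fun x => (div_le_one hG₀).2 (hG.1 ⟨x, rfl⟩)
  have key : ENNReal.ofReal ((∫ x, f x) / F + (∫ x, g x) / G)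
      ≤ ENNReal.ofReal ((∫ x, H x) / (F + G)) := by
    rw [ENNReal.ofReal_add (div_nonneg (integral_nonneg hf₀) hF₀.le)
      (div_nonneg (integral_nonneg hg₀) hG₀.le), ← integral_div, ← integral_div, ← integral_div,
      ofReal_integral_eq_lintegral_ofReal (hfi.div_const F)
        (Filter.Eventually.of_forall fun x => div_nonneg (hf₀ x) hF₀.le),
      ofReal_integral_eq_lintegral_ofReal (hgi.div_const G)
        (Filter.Eventually.of_forall fun x => div_nonneg (hg₀ x) hG₀.le),
      ofReal_integral_eq_lintegral_ofReal (hH.div_const (F + G))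
        (Filter.Eventually.of_forall fun x => div_nonneg (hH₀ x) (by positivity)),
      lintegral_eq_lintegral_meas_lt volume
        (Filter.Eventually.of_forall fun x => div_nonneg (hf₀ x) hF₀.le)
        (hf.div_const F).aemeasurable,
      lintegral_eq_lintegral_meas_lt volume
        (Filter.Eventually.of_forall fun x => div_nonneg (hg₀ x) hG₀.le)
        (hg.div_const G).aemeasurable,
      lintegral_eq_lintegral_meas_lt volume
        (Filter.Eventually.of_forall fun x => div_nonneg (hH₀ x) (by positivity))
        (hH.div_const (F + G)).aemeasurable,
      ← lintegral_add_left]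
    · refine setLIntegral_mono' measurableSet_Ioi fun s (hs : 0 < s) => ?_
      rcases lt_or_ge s 1 with hs1 | hs1
      · obtain ⟨_, ⟨x, rfl⟩, hx, -⟩ := hF.exists_between (b := F * s) (by nlinarith)
        obtain ⟨_, ⟨y, rfl⟩, hy, -⟩ := hG.exists_between (b := G * s) (by nlinarith)
        refine (volume_add_volume_le_volume_add
          (measurableSet_lt measurable_const (hf.div_const F))
          (measurableSet_lt measurable_const (hg.div_const G))
          ⟨x, (lt_div_iff₀ hF₀).2 (by rwa [mul_comm])⟩
          ⟨y, (lt_div_iff₀ hG₀).2 (by rwa [mul_comm])⟩).trans (measure_mono ?_)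
        rintro _ ⟨a, ha, b, hb, rfl⟩
        simp only [mem_ofPred_eq] at ha hb ⊢
        rw [lt_div_iff₀ (by positivity)] at ha hb ⊢
        have := h a b (by nlinarith) (by nlinarith)
        linarith
      · have h1 : {a | s < f a / F} = ∅ := by
          ext a; simpa using (hfF a).trans hs1
        have h2 : {a | s < g a / G} = ∅ := by
          ext a; simpa using (hgG a).trans hs1
        simp [h1, h2]
    · exact Antitone.measurable fun s t hst => measure_mono fun x hx => lt_of_le_of_lt hst hx
  rw [ENNReal.ofReal_le_ofReal_iff (div_nonneg (integral_nonneg hH₀) (by positivity)),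
    le_div_iff₀ (by positivity)] at key
  linarith

/-- A bounded open set in the plane: lengths of vertical slices. -/
theorem slice_properties {A : Set (ℝ × ℝ)} (hA : IsOpen A) (hAb : Bornology.IsBounded A) :
    Measurable (fun x => volume.real (Prod.mk x ⁻¹' A)) ∧
    Integrable (fun x => volume.real (Prod.mk x ⁻¹' A)) ∧
    (∫ x, volume.real (Prod.mk x ⁻¹' A)) = volume.real A ∧
    (∀ x, volume (Prod.mk x ⁻¹' A) ≠ ⊤) ∧
    BddAbove (Set.range fun x => volume.real (Prod.mk x ⁻¹' A)) := by
  have hAfin : volume A ≠ ⊤ := hAb.measure_lt_top.ne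
  obtain ⟨R, hR⟩ := hAb.subset_closedBall 0
  have hsub : ∀ x, Prod.mk x ⁻¹' A ⊆ Metric.closedBall 0 R := by
    intro x y hy
    have := hR hy
    simp only [mem_closedBall_zero_iff, Prod.norm_def] at this ⊢
    exact (le_max_right _ _).trans this
  have hfin : ∀ x, volume (Prod.mk x ⁻¹' A) ≠ ⊤ := fun x =>
    (measure_mono (hsub x) |>.trans_lt measure_closedBall_lt_top).ne
  have hm : Measurable (fun x => volume (Prod.mk x ⁻¹' A)) :=
    measurable_measure_prodMk_left hA.measurableSet
  have hl : ∫⁻ x, volume (Prod.mk x ⁻¹' A) = volume A :=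
    (Measure.prod_apply hA.measurableSet).symm
  refine ⟨hm.ennreal_toReal, integrable_toReal_of_lintegral_ne_top hm.aemeasurable
    (by rwa [hl]), ?_, hfin, ?_⟩
  · have := integral_toReal (μ := volume) hm.aemeasurable (Filter.Eventually.of_forall fun x => (hfin x).lt_top)
    rw [hl] at this
    exact this
  · refine ⟨volume.real (Metric.closedBall (0 : ℝ) R), ?_⟩
    rintro _ ⟨x, rfl⟩
    exact measureReal_mono (hsub x) measure_closedBall_lt_top.ne

open Set Pointwise in
theorem brunnMinkowski_plane {A B : Set (ℝ × ℝ)} (hA : IsOpen A) (hB : IsOpen B)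
    (hA₀ : A.Nonempty) (hB₀ : B.Nonempty) (hAb : Bornology.IsBounded A)
    (hBb : Bornology.IsBounded B) :
    √(volume.real A) + √(volume.real B) ≤ √(volume.real (A + B)) := by
  have hAB : IsOpen (A + B) := hA.add_right
  have hABb : Bornology.IsBounded (A + B) := hAb.add hBb
  obtain ⟨mA, iA, eA, fA, bA⟩ := slice_properties hA hAb
  obtain ⟨mB, iB, eB, fB, bB⟩ := slice_properties hB hBb
  obtain ⟨-, iC, eC, fC, -⟩ := slice_properties hAB hABb
  have hpos : ∀ {S : Set (ℝ × ℝ)} {x y : ℝ}, IsOpen S → (x, y) ∈ S →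
      volume (Prod.mk x ⁻¹' S) ≠ ⊤ → 0 < volume.real (Prod.mk x ⁻¹' S) := by
    intro S x y hS hxy hfin
    exact ENNReal.toReal_pos
      ((hS.preimage (Continuous.prodMk_right x)).measure_pos volume ⟨y, hxy⟩).ne' hfin
  have hlA := isLUB_csSup (range_nonempty _) bA
  have hlB := isLUB_csSup (range_nonempty _) bB
  set F := sSup (range fun x => volume.real (Prod.mk x ⁻¹' A))
  set G := sSup (range fun x => volume.real (Prod.mk x ⁻¹' B))
  have hF : 0 < F := by
    obtain ⟨⟨x, y⟩, hxy⟩ := hA₀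
    exact (hpos hA hxy (fA x)).trans_le (hlA.1 ⟨x, rfl⟩)
  have hG : 0 < G := by
    obtain ⟨⟨x, y⟩, hxy⟩ := hB₀
    exact (hpos hB hxy (fB x)).trans_le (hlB.1 ⟨x, rfl⟩)
  have key := add_mul_integral_div_le_integral mA mB iC (fun _ => measureReal_nonneg)
    (fun _ => measureReal_nonneg) (fun _ => measureReal_nonneg) iA iB hlA hlB hF hG (by
      intro x y hx hy
      have hxA : (Prod.mk x ⁻¹' A).Nonempty := by
        by_contra h
        simp [not_nonempty_iff_eq_empty.1 h] at hx
      have hyB : (Prod.mk y ⁻¹' B).Nonempty := by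
        by_contra h
        simp [not_nonempty_iff_eq_empty.1 h] at hy
      have h1 := volume_add_volume_le_volume_add
        (hA.preimage (Continuous.prodMk_right x)).measurableSet
        (hB.preimage (Continuous.prodMk_right y)).measurableSet hxA hyB
      have h2 : Prod.mk x ⁻¹' A + Prod.mk y ⁻¹' B ⊆ Prod.mk (x + y) ⁻¹' (A + B) := by
        rintro _ ⟨a, ha, b, hb, rfl⟩
        exact ⟨(x, a), ha, (y, b), hb, rfl⟩
      have h3 := h1.trans (measure_mono h2)
      have h4 := ENNReal.toReal_mono (fC (x + y)) h3
      rwa [ENNReal.toReal_add (fA x) (fB y)] at h4)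
  rw [eA, eB, eC] at key
  have ha : 0 ≤ volume.real A := measureReal_nonneg
  have hb : 0 ≤ volume.real B := measureReal_nonneg
  generalize volume.real A = a at *
  generalize volume.real B = b at *
  refine Real.le_sqrt_of_sq_le (le_trans ?_ key)
  obtain ⟨p, hp, rfl⟩ : ∃ p, 0 ≤ p ∧ a = p ^ 2 := ⟨√a, Real.sqrt_nonneg _, (Real.sq_sqrt ha).symm⟩
  obtain ⟨q, hq, rfl⟩ : ∃ p, 0 ≤ p ∧ b = p ^ 2 := ⟨√b, Real.sqrt_nonneg _, (Real.sq_sqrt hb).symm⟩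
  rw [Real.sqrt_sq hp, Real.sqrt_sq hq]
  have : (F + G) * (p ^ 2 / F + q ^ 2 / G) - (p + q) ^ 2 = (G * p - F * q) ^ 2 / (F * G) := by
    field_simp
    ring
  have h5 : 0 ≤ (G * p - F * q) ^ 2 / (F * G) := by positivity
  linarith

open Pointwise in
theorem brunnMinkowski_euclidean {A B : Set (EuclideanSpace ℝ (Fin 2))} (hA : IsOpen A)
    (hB : IsOpen B) (hA₀ : A.Nonempty) (hB₀ : B.Nonempty) (hAb : Bornology.IsBounded A)
    (hBb : Bornology.IsBounded B) :
    √(volume.real A) + √(volume.real B) ≤ √(volume.real (A + B)) := by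
  let e : EuclideanSpace ℝ (Fin 2) ≃L[ℝ] ℝ × ℝ :=
    (EuclideanSpace.equiv (Fin 2) ℝ).trans (ContinuousLinearEquiv.finTwoArrow ℝ ℝ)
  have he : MeasurePreserving e :=
    (volume_preserving_finTwoArrow ℝ).comp (PiLp.volume_preserving_ofLp (Fin 2))
  have hv : ∀ S : Set (EuclideanSpace ℝ (Fin 2)), volume.real (e '' S) = volume.real S := by
    intro S
    rw [measureReal_def, measureReal_def, ← he.measure_preimage_emb
      e.toHomeomorph.measurableEmbedding, Set.preimage_image_eq _ e.injective]
  have himg : ∀ {S : Set (EuclideanSpace ℝ (Fin 2))}, IsOpen S → IsOpen (e '' S) :=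
    fun h => e.toHomeomorph.isOpenMap _ h
  have hbd : ∀ {S : Set (EuclideanSpace ℝ (Fin 2))}, Bornology.IsBounded S →
      Bornology.IsBounded (e '' S) := fun h => e.lipschitz.isBounded_image h
  have := brunnMinkowski_plane (himg hA) (himg hB) (hA₀.image e) (hB₀.image e) (hbd hAb) (hbd hBb)
  rwa [← Set.image_add, hv, hv, hv] at this

/-- Nonincreasing Lipschitz compactly supported radial profiles. -/
structure IsProfile (f : ℝ → ℝ) : Prop where
  antitone : Antitone f
  nonneg : ∀ r, 0 ≤ f r
  lipschitz : ∃ K, LipschitzWith K f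
  vanishing : ∃ R, ∀ r, R ≤ r → f r = 0

theorem ae_comp_norm {p : ℝ → Prop} (hp : ∀ᵐ r, p r) :
    ∀ᵐ x : EuclideanSpace ℝ (Fin 2), p ‖x‖ := by
  obtain ⟨N, hN, hNm, hN0⟩ := exists_measurable_superset_of_null (ae_iff.1 hp)
  set g : ℝ → ℝ := N.indicator 1 with hg
  have hg0 : g =ᵐ[volume] 0 := indicator_meas_zero hN0
  have h0 : (fun y : ℝ => y ^ (Module.finrank ℝ (EuclideanSpace ℝ (Fin 2)) - 1) • g y)
      =ᵐ[volume.restrict (Set.Ioi 0)] 0 := by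
    filter_upwards [ae_restrict_of_ae hg0] with y hy
    simp [hy]
  have hint : Integrable (fun x : EuclideanSpace ℝ (Fin 2) => g ‖x‖) := by
    rw [integrable_fun_norm_addHaar volume (f := g)]
    exact (integrable_zero _ _ _).congr h0.symm
  have hzero : ∫ x : EuclideanSpace ℝ (Fin 2), g ‖x‖ = 0 := by
    rw [integral_fun_norm_addHaar volume g, integral_congr_ae h0]
    simp
  have hnn : ∀ r, 0 ≤ g r := fun r => Set.indicator_nonneg (by simp) r
  rw [integral_eq_zero_iff_of_nonneg (fun x => hnn _) hint] at hzero
  filter_upwards [hzero] with x hx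
  by_contra h
  have : ‖x‖ ∈ N := hN h
  simp [hg, this] at hx

theorem integral_pow_eq_of_equimeasurable {α : Type*} [MeasurableSpace α] {μ : Measure α}
    {u v : α → ℝ} (hu : Measurable u) (hv : Measurable v) (hu₀ : 0 ≤ u) (hv₀ : 0 ≤ v)
    (h : ∀ s, 0 ≤ s → μ {x | s < u x} = μ {x | s < v x}) {p : ℕ} (hp : p ≠ 0) :
    ∫ x, u x ^ p ∂μ = ∫ x, v x ^ p ∂μ := by
  have key : ∫⁻ x, ENNReal.ofReal (u x ^ p) ∂μ = ∫⁻ x, ENNReal.ofReal (v x ^ p) ∂μ := by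
    rw [lintegral_eq_lintegral_meas_lt μ (Filter.Eventually.of_forall fun x => pow_nonneg (hu₀ x) p)
        (hu.pow_const p).aemeasurable,
      lintegral_eq_lintegral_meas_lt μ (Filter.Eventually.of_forall fun x => pow_nonneg (hv₀ x) p)
        (hv.pow_const p).aemeasurable]
    refine setLIntegral_congr_fun measurableSet_Ioi fun t (ht : 0 < t) => ?_
    obtain ⟨c, hc, rfl⟩ : ∃ c : ℝ, 0 ≤ c ∧ c ^ p = t :=
      ⟨t ^ (p : ℝ)⁻¹, by positivity, Real.rpow_inv_natCast_pow ht.le hp⟩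
    simp only [pow_lt_pow_iff_left₀ hc (hu₀ _) hp, pow_lt_pow_iff_left₀ hc (hv₀ _) hp]
    exact h c hc
  rw [integral_eq_lintegral_of_nonneg_ae
      (Filter.Eventually.of_forall fun x => pow_nonneg (hu₀ x) p)
      (hu.pow_const p).aestronglyMeasurable, key,
    integral_eq_lintegral_of_nonneg_ae
      (Filter.Eventually.of_forall fun x => pow_nonneg (hv₀ x) p)
      (hv.pow_const p).aestronglyMeasurable]

section SupConvolution

variable {V : Type*} [NormedAddCommGroup V]

/-- Hopf-Lax sup-convolution of `w` at time `t`. -/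
noncomputable def supConv (t : ℝ) (w : V → ℝ) (x : V) : ℝ := ⨆ y, (w y - ‖x - y‖ ^ 2 / (4 * t))

theorem bddAbove_supConv {t : ℝ} (ht : 0 < t) {w : V → ℝ} (hw : BddAbove (Set.range w)) (x : V) :
    BddAbove (Set.range fun y => w y - ‖x - y‖ ^ 2 / (4 * t)) := by
  obtain ⟨M, hM⟩ := hw
  refine ⟨M, ?_⟩
  rintro _ ⟨y, rfl⟩
  have h1 : w y ≤ M := hM ⟨y, rfl⟩
  have h2 : 0 ≤ ‖x - y‖ ^ 2 / (4 * t) := by positivity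
  dsimp only
  linarith

theorem lt_supConv_iff {t : ℝ} (ht : 0 < t) {w : V → ℝ} (hw : BddAbove (Set.range w)) {x : V}
    {s : ℝ} : s < supConv t w x ↔ ∃ y, s < w y - ‖x - y‖ ^ 2 / (4 * t) :=
  lt_ciSup_iff (bddAbove_supConv ht hw x)

theorem le_supConv {t : ℝ} (ht : 0 < t) {w : V → ℝ} (hw : BddAbove (Set.range w)) (x y : V) :
    w y - ‖x - y‖ ^ 2 / (4 * t) ≤ supConv t w x :=
  le_ciSup (bddAbove_supConv ht hw x) y

theorem self_le_supConv {t : ℝ} (ht : 0 < t) {w : V → ℝ} (hw : BddAbove (Set.range w)) (x : V) :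
    w x ≤ supConv t w x := by
  simpa using le_supConv ht hw x x

theorem measurable_supConv [MeasurableSpace V] [BorelSpace V] {t : ℝ} (ht : 0 < t) {w : V → ℝ}
    (hw : BddAbove (Set.range w)) : Measurable (supConv t w) := by
  refine measurable_of_Ioi fun s => IsOpen.measurableSet ?_
  have : supConv t w ⁻¹' Set.Ioi s = ⋃ y, {x | s < w y - ‖x - y‖ ^ 2 / (4 * t)} := by
    ext x
    simp [lt_supConv_iff ht hw]
  rw [this]
  exact isOpen_iUnion fun y => isOpen_lt continuous_const (by fun_prop)

theorem supConv_sub_le {t : ℝ} (ht : 0 < t) {w : V → ℝ} {x : V} {C : ℝ}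
    (h : ∀ y, w y - w x ≤ ‖x - y‖ ^ 2 / (4 * t) + C * t) : (supConv t w x - w x) / t ≤ C := by
  rw [div_le_iff₀ ht, sub_le_iff_le_add]
  refine ciSup_le fun y => ?_
  have := h y
  linarith

theorem supConv_sub_le_of_lipschitz {t K : ℝ} (ht : 0 < t) {w : V → ℝ} {x : V}
    (h : ∀ y, w y - w x ≤ K * ‖x - y‖) : (supConv t w x - w x) / t ≤ K ^ 2 := by
  refine supConv_sub_le ht fun y => (h y).trans ?_
  have : ‖x - y‖ ^ 2 / (4 * t) + K ^ 2 * t - K * ‖x - y‖ = (‖x - y‖ - 2 * t * K) ^ 2 / (4 * t) := by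
    field_simp
    ring
  have h2 : 0 ≤ (‖x - y‖ - 2 * t * K) ^ 2 / (4 * t) := by positivity
  linarith

/-- Small-time upper bound for the sup-convolution in terms of the local slope. -/
theorem supConv_sub_le_of_slope {t K δ G : ℝ} (ht : 0 < t) (hδ : t * (4 * K) ≤ δ)
    {w : V → ℝ} {x : V} (h : ∀ y, w y - w x ≤ K * ‖x - y‖)
    (hG : ∀ y, ‖x - y‖ < δ → w y - w x ≤ G * ‖x - y‖) : (supConv t w x - w x) / t ≤ G ^ 2 := by
  refine supConv_sub_le ht fun y => ?_
  rcases lt_or_ge ‖x - y‖ δ with hy | hy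
  · have : ‖x - y‖ ^ 2 / (4 * t) + G ^ 2 * t - G * ‖x - y‖
        = (‖x - y‖ - 2 * t * G) ^ 2 / (4 * t) := by
      field_simp
      ring
    have h2 : 0 ≤ (‖x - y‖ - 2 * t * G) ^ 2 / (4 * t) := by positivity
    linarith [hG y hy]
  · have h1 : K * ‖x - y‖ ≤ ‖x - y‖ ^ 2 / (4 * t) := by
      rw [le_div_iff₀ (by positivity)]
      nlinarith [norm_nonneg (x - y), mul_le_mul_of_nonneg_right (hδ.trans hy) (norm_nonneg (x - y))]
    have h2 : 0 ≤ G ^ 2 * t := by positivity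
    linarith [h y]

end SupConvolution

section Rearrangement

/-- Radius of the disc with the same area as the superlevel set `{u > s}`. -/
noncomputable def levelRadius (u : EuclideanSpace ℝ (Fin 2) → ℝ) (s : ℝ) : ℝ :=
  √(volume.real {x | s < u x} / Real.pi)

/-- Profile of the symmetric decreasing rearrangement of `u`. -/
noncomputable def rearr (u : EuclideanSpace ℝ (Fin 2) → ℝ) (r : ℝ) : ℝ :=
  sSup {s | 0 ≤ s ∧ max 0 r < levelRadius u s}

theorem volume_ball_plane {r : ℝ} (hr : 0 ≤ r) (x : EuclideanSpace ℝ (Fin 2)) :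
    volume.real (Metric.ball x r) = r ^ 2 * Real.pi := by
  rw [measureReal_def, EuclideanSpace.volume_ball_fin_two, ENNReal.toReal_mul, ENNReal.toReal_pow,
    ENNReal.toReal_ofReal hr, ENNReal.toReal_ofReal Real.pi_pos.le]

variable {u : EuclideanSpace ℝ (Fin 2) → ℝ}

theorem isBounded_superlevel (hcs : HasCompactSupport u) {s : ℝ} (hs : 0 ≤ s) :
    Bornology.IsBounded {x | s < u x} :=
  hcs.isCompact.isBounded.subset fun x hx => subset_tsupport u (by
    rw [Function.mem_support]; exact (lt_of_le_of_lt hs hx).ne')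

theorem volume_superlevel_ne_top (hcs : HasCompactSupport u) {s : ℝ} (hs : 0 ≤ s) :
    volume {x | s < u x} ≠ ⊤ := (isBounded_superlevel hcs hs).measure_lt_top.ne

theorem levelRadius_nonneg (s : ℝ) : 0 ≤ levelRadius u s := Real.sqrt_nonneg _

theorem levelRadius_anti (hcs : HasCompactSupport u) {s s' : ℝ} (hs : 0 ≤ s) (h : s ≤ s') :
    levelRadius u s' ≤ levelRadius u s := by
  unfold levelRadius
  gcongr
  exact volume_superlevel_ne_top hcs hs

theorem exists_lt_of_levelRadius_pos {s : ℝ} (h : 0 < levelRadius u s) : ∃ x, s < u x := by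
  by_contra! hx
  have : {x | s < u x} = ∅ := by
    ext x; simpa using hx x
  simp [levelRadius, this] at h

open Pointwise in
theorem levelRadius_add_le {s' d : ℝ} (hu : Continuous u) (hcs : HasCompactSupport u)
    (hs' : 0 ≤ s') (hd : 0 < d) (hne : ∃ x, s' < u x) {S : Set (EuclideanSpace ℝ (Fin 2))}
    (hS : {x | s' < u x} + Metric.ball 0 d ⊆ S) (hSf : volume S ≠ ⊤) :
    (levelRadius u s' + d) ≤ √(volume.real S / Real.pi) := by
  have h1 := brunnMinkowski_euclidean (isOpen_lt continuous_const hu)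
    (Metric.isOpen_ball (x := (0 : EuclideanSpace ℝ (Fin 2))) (ε := d)) hne
    (Metric.nonempty_ball.2 hd) (isBounded_superlevel hcs hs') Metric.isBounded_ball
  have hpi := Real.sqrt_pos.2 Real.pi_pos
  rw [volume_ball_plane hd.le, Real.sqrt_mul (by positivity), Real.sqrt_sq hd.le] at h1
  have h2 : √(volume.real ({x | s' < u x} + Metric.ball 0 d)) ≤ √(volume.real S) :=
    Real.sqrt_le_sqrt (measureReal_mono hS hSf)
  rw [levelRadius, Real.sqrt_div measureReal_nonneg, Real.sqrt_div measureReal_nonneg,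
    div_add' _ _ _ hpi.ne']
  gcongr
  linarith

theorem bddAbove_range_of_bump (hu : Continuous u) (hcs : HasCompactSupport u) :
    BddAbove (Set.range u) := hu.bddAbove_range_of_hasCompactSupport hcs

theorem bddAbove_rearr (hu : Continuous u) (hcs : HasCompactSupport u) (r : ℝ) :
    BddAbove {s | 0 ≤ s ∧ max 0 r < levelRadius u s} := by
  obtain ⟨M, hM⟩ := bddAbove_range_of_bump hu hcs
  refine ⟨M, ?_⟩
  rintro s ⟨-, hs⟩
  obtain ⟨x, hx⟩ := exists_lt_of_levelRadius_pos ((le_max_left _ _).trans_lt hs)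
  exact hx.le.trans (hM ⟨x, rfl⟩)

theorem lt_rearr_iff (hu : Continuous u) (hcs : HasCompactSupport u) {r s : ℝ} (hs : 0 ≤ s)
    (hr : 0 ≤ r) : s < rearr u r ↔ r < levelRadius u s := by
  rw [rearr, max_eq_right hr]
  have hb := bddAbove_rearr hu hcs r
  rw [max_eq_right hr] at hb
  constructor
  · intro h
    have hne : {s | 0 ≤ s ∧ r < levelRadius u s}.Nonempty := by
      by_contra hne
      rw [Set.not_nonempty_iff_eq_empty.1 hne, Real.sSup_empty] at h
      linarith
    obtain ⟨s', ⟨-, h2⟩, h3⟩ := exists_lt_of_lt_csSup hne h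
    exact h2.trans_le (levelRadius_anti hcs hs h3.le)
  · intro h
    have hU : {x | s < u x} = ⋃ n : ℕ, {x | s + 1 / ((n : ℝ) + 1) < u x} := by
      ext x
      simp only [Set.mem_ofPred_eq, Set.mem_iUnion]
      constructor
      · intro hx
        obtain ⟨n, hn⟩ := exists_nat_one_div_lt (sub_pos.2 hx)
        exact ⟨n, by linarith⟩
      · rintro ⟨n, hn⟩
        have : 0 < 1 / ((n : ℝ) + 1) := by positivity
        linarith
    have hmono : Monotone fun n : ℕ => {x | s + 1 / ((n : ℝ) + 1) < u x} := by
      intro n m hnm x hx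
      have : 1 / ((m : ℝ) + 1) ≤ 1 / ((n : ℝ) + 1) := by gcongr
      simp only [Set.mem_ofPred_eq] at hx ⊢
      linarith
    have ht := tendsto_measure_iUnion_atTop (μ := volume) hmono
    rw [← hU] at ht
    have ht2 : Filter.Tendsto (fun n : ℕ => levelRadius u (s + 1 / ((n : ℝ) + 1))) Filter.atTop
        (nhds (levelRadius u s)) :=
      (((ENNReal.tendsto_toReal (volume_superlevel_ne_top hcs hs)).comp ht).div_const _).sqrt
    obtain ⟨n, hn⟩ := (ht2.eventually (lt_mem_nhds h)).exists
    have hp : 0 < 1 / ((n : ℝ) + 1) := by positivity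
    exact (lt_add_of_pos_right s hp).trans_le (le_csSup hb ⟨by linarith, hn⟩)

theorem rearr_nonneg (r : ℝ) : 0 ≤ rearr u r := Real.sSup_nonneg fun _ h => h.1

theorem rearr_max (r : ℝ) : rearr u (max 0 r) = rearr u r := by simp [rearr]

theorem rearr_sub_le (hu : Continuous u) (hcs : HasCompactSupport u) {K r r' : ℝ}
    (hK : 0 < K) (hL : ∀ x y, u x - u y ≤ K * ‖x - y‖) (hr : 0 ≤ r) (hrr' : r < r') :
    rearr u r - rearr u r' ≤ K * (r' - r) := by
  by_contra! h
  set s := rearr u r' with hs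
  have hs0 : 0 ≤ s := rearr_nonneg r'
  have hd : 0 < r' - r := sub_pos.2 hrr'
  have h1 : s + K * (r' - r) < rearr u r := by linarith
  have h0 : 0 ≤ s + K * (r' - r) := by positivity
  rw [lt_rearr_iff hu hcs h0 hr] at h1
  have h2 := levelRadius_add_le (S := {x | s < u x}) hu hcs h0 hd
    (exists_lt_of_levelRadius_pos (hr.trans_lt h1)) (by
      rintro _ ⟨x, hx, z, hz, rfl⟩
      simp only [Set.mem_ofPred_eq, mem_ball_zero_iff] at hx hz ⊢
      have := hL x (x + z)
      rw [sub_add_cancel_left, norm_neg] at this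
      nlinarith) (volume_superlevel_ne_top hcs hs0)
  have h3 : r' < levelRadius u s := by
    unfold levelRadius at *
    linarith
  rw [← lt_rearr_iff hu hcs hs0 (hr.trans hrr'.le)] at h3
  exact lt_irrefl _ h3

theorem antitone_rearr (hu : Continuous u) (hcs : HasCompactSupport u) : Antitone (rearr u) := by
  intro r r' h
  rcases Set.eq_empty_or_nonempty {s | 0 ≤ s ∧ max 0 r' < levelRadius u s} with h0 | h0
  · rw [rearr, h0, Real.sSup_empty]
    exact rearr_nonneg r
  · exact csSup_le_csSup (bddAbove_rearr hu hcs r) h0 fun s hs =>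
      ⟨hs.1, lt_of_le_of_lt (max_le_max le_rfl h) hs.2⟩

theorem isProfile_rearr {K : NNReal} (hL : LipschitzWith K u) (hcs : HasCompactSupport u) :
    IsProfile (rearr u) := by
  have hu := hL.continuous
  have hanti := antitone_rearr hu hcs
  refine ⟨hanti, rearr_nonneg, ⟨K + 1, ?_⟩, ⟨levelRadius u 0, fun r hr => ?_⟩⟩
  · have hKL : ∀ x y, u x - u y ≤ (K + 1 : ℝ) * ‖x - y‖ := fun x y => by
      have := hL.dist_le_mul x y
      rw [Real.dist_eq, dist_eq_norm] at this
      nlinarith [le_abs_self (u x - u y), norm_nonneg (x - y)]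
    have key : ∀ r r', r ≤ r' → |rearr u r - rearr u r'| ≤ (K + 1) * |r - r'| := by
      intro r r' h
      rw [abs_of_nonneg (sub_nonneg.2 (hanti h)), abs_of_nonpos (sub_nonpos.2 h),
        ← rearr_max r, ← rearr_max r']
      rcases (max_le_max (le_refl (0 : ℝ)) h).lt_or_eq with h1 | h1
      · refine (rearr_sub_le hu hcs (by positivity) hKL (le_max_left _ _) h1).trans ?_
        gcongr
        have := max_sub_max_le_max 0 r' 0 r
        rw [sub_self, max_eq_right (sub_nonneg.2 h)] at this
        linarith
      · rw [h1, sub_self]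
        have : 0 ≤ r' - r := by linarith
        rw [neg_sub]
        positivity
    refine LipschitzWith.of_dist_le_mul fun r r' => ?_
    rw [Real.dist_eq, Real.dist_eq]
    push_cast
    rcases le_total r r' with h | h
    · exact key r r' h
    · rw [abs_sub_comm, abs_sub_comm r]; exact key r' r h
  · refine le_antisymm (not_lt.1 fun h => ?_) (rearr_nonneg r)
    rw [lt_rearr_iff hu hcs le_rfl ((levelRadius_nonneg 0).trans hr)] at h
    exact absurd h (not_lt.2 hr)

theorem volume_superlevel_rearr (hu : Continuous u) (hcs : HasCompactSupport u) {s : ℝ}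
    (hs : 0 ≤ s) :
    volume {x : EuclideanSpace ℝ (Fin 2) | s < rearr u ‖x‖} = volume {x | s < u x} := by
  have : {x : EuclideanSpace ℝ (Fin 2) | s < rearr u ‖x‖} = Metric.ball 0 (levelRadius u s) := by
    ext x
    simp [lt_rearr_iff hu hcs hs (norm_nonneg x)]
  rw [this, ← ENNReal.toReal_eq_toReal_iff' measure_ball_lt_top.ne
    (volume_superlevel_ne_top hcs hs), ← measureReal_def, volume_ball_plane (levelRadius_nonneg s),
    levelRadius, Real.sq_sqrt (div_nonneg measureReal_nonneg Real.pi_pos.le),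
    div_mul_cancel₀ _ Real.pi_pos.ne', measureReal_def]

end Rearrangement

section PolyaSzego

variable {u : EuclideanSpace ℝ (Fin 2) → ℝ}

theorem supConv_eq_self_of_large {t M R : ℝ} (ht : 0 < t) (ht1 : t ≤ 1)
    (hu₀ : 0 ≤ u) (hM : ∀ x, u x ≤ M) (hR : ∀ x, R < ‖x‖ → u x = 0)
    {x : EuclideanSpace ℝ (Fin 2)} (hx : |R| + 4 * M + 1 < ‖x‖) : supConv t u x = u x := by
  have hM0 : 0 ≤ M := (hu₀ 0).trans (hM 0)
  have hbdd : BddAbove (Set.range u) := ⟨M, by rintro _ ⟨y, rfl⟩; exact hM y⟩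
  refine le_antisymm (ciSup_le fun y => ?_) (self_le_supConv ht hbdd x)
  rw [hR x (by linarith [le_abs_self R])]
  rcases lt_or_ge R ‖y‖ with hy | hy
  · rw [hR y hy]
    have : 0 ≤ ‖x - y‖ ^ 2 / (4 * t) := by positivity
    linarith
  · have h1 : 4 * M + 1 ≤ ‖x - y‖ := by
      have := norm_sub_norm_le x y
      linarith [le_abs_self R]
    have h2 : M ≤ ‖x - y‖ ^ 2 / (4 * t) := by
      rw [le_div_iff₀ (by positivity)]
      nlinarith
    linarith [hM y]

open Pointwise in
theorem volume_superlevel_supConv_rearr_le {t : ℝ} (ht : 0 < t) (hu : Continuous u)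
    (hcs : HasCompactSupport u) {s : ℝ} (hs : 0 ≤ s)
    (hfin : volume {x | s < supConv t u x} ≠ ⊤)
    (hv : BddAbove (Set.range fun x : EuclideanSpace ℝ (Fin 2) => rearr u ‖x‖)) :
    volume {x : EuclideanSpace ℝ (Fin 2) | s < supConv t (fun x => rearr u ‖x‖) x}
      ≤ volume {x | s < supConv t u x} := by
  have hub := bddAbove_range_of_bump hu hcs
  set c := √(volume.real {x | s < supConv t u x} / Real.pi) with hc
  have hc0 : 0 ≤ c := Real.sqrt_nonneg _
  have hvol : volume (Metric.ball (0 : EuclideanSpace ℝ (Fin 2)) c)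
      = volume {x | s < supConv t u x} := by
    rw [← ENNReal.toReal_eq_toReal_iff' measure_ball_lt_top.ne hfin, ← measureReal_def,
      volume_ball_plane hc0, hc, Real.sq_sqrt (div_nonneg measureReal_nonneg Real.pi_pos.le),
      div_mul_cancel₀ _ Real.pi_pos.ne', measureReal_def]
  rw [← hvol]
  refine measure_mono fun x hx => ?_
  obtain ⟨y, hy⟩ := (lt_supConv_iff ht hv).1 hx
  rw [mem_ball_zero_iff]
  rcases (norm_nonneg (x - y)).eq_or_lt with h0 | h0
  · rw [← h0] at hy
    have hxy : x = y := by rw [← sub_eq_zero, ← norm_eq_zero, h0]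
    rw [hxy]
    have hy' : s < rearr u ‖y‖ := by simpa using hy
    rw [lt_rearr_iff hu hcs hs (norm_nonneg y)] at hy'
    refine hy'.trans_le (Real.sqrt_le_sqrt ?_)
    gcongr
    exact self_le_supConv ht hub _
  · have hh : 0 < ‖x - y‖ ^ 2 / (4 * t) := by positivity
    have hs' : 0 ≤ s + ‖x - y‖ ^ 2 / (4 * t) := by positivity
    have hy' : s + ‖x - y‖ ^ 2 / (4 * t) < rearr u ‖y‖ := by linarith
    rw [lt_rearr_iff hu hcs hs' (norm_nonneg y)] at hy'
    have := levelRadius_add_le (S := {x | s < supConv t u x}) hu hcs hs' h0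
      (exists_lt_of_levelRadius_pos ((norm_nonneg y).trans_lt hy')) (by
        rintro _ ⟨z, hz, w, hw, rfl⟩
        simp only [Set.mem_ofPred_eq, mem_ball_zero_iff] at hz hw ⊢
        refine (lt_supConv_iff ht hub).2 ⟨z, ?_⟩
        rw [add_sub_cancel_left]
        have : ‖w‖ ^ 2 / (4 * t) < ‖x - y‖ ^ 2 / (4 * t) := by gcongr
        linarith) hfin
    have h3 : ‖x‖ ≤ ‖y‖ + ‖x - y‖ := by
      have := norm_add_le y (x - y)
      rwa [add_sub_cancel] at this
    linarith

/-- Small-time lower bound for the sup-convolution of a radial function. -/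
theorem sq_deriv_le_liminf_supConv {f : ℝ → ℝ}
    {x : EuclideanSpace ℝ (Fin 2)} (hx : x ≠ 0) (hd : DifferentiableAt ℝ f ‖x‖)
    {t : ℕ → ℝ} (ht : ∀ n, 0 < t n) (ht0 : Filter.Tendsto t Filter.atTop (nhds 0))
    (hv : BddAbove (Set.range fun x : EuclideanSpace ℝ (Fin 2) => f ‖x‖)) :
    ENNReal.ofReal ((deriv f ‖x‖) ^ 2) ≤ Filter.liminf (fun n =>
      ENNReal.ofReal ((supConv (t n) (fun x : EuclideanSpace ℝ (Fin 2) => f ‖x‖) x - f ‖x‖) / t n))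
      Filter.atTop := by
  have hr : 0 < ‖x‖ := norm_pos_iff.2 hx
  set r := ‖x‖ with hrdef
  set q := deriv f r with hq
  -- test point `y = (1 + 2 t q / r) x`
  have hlim : Filter.Tendsto (fun n => (f (r + 2 * t n * q) - f r) / t n - q ^ 2) Filter.atTop
      (nhds (q ^ 2)) := by
    have h1 : HasDerivAt (fun τ : ℝ => f (r + 2 * τ * q)) (q * (2 * q)) 0 := by
      have h2 : HasDerivAt (fun τ : ℝ => r + 2 * τ * q) (2 * q) 0 := by
        have := (((hasDerivAt_id (0 : ℝ)).const_mul 2).mul_const q).const_add r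
        simpa using this
      have h3 : HasDerivAt f q (r + 2 * 0 * q) := by
        rw [show r + 2 * 0 * q = r by ring]
        exact hd.hasDerivAt
      exact h3.comp (0 : ℝ) h2
    have h4 := h1.tendsto_slope_zero
    have h5 : Filter.Tendsto t Filter.atTop (nhdsWithin 0 {0}ᶜ) :=
      tendsto_nhdsWithin_iff.2 ⟨ht0, Filter.Eventually.of_forall fun n => (ht n).ne'⟩
    have h6 := (h4.comp h5).sub_const (q ^ 2)
    have h7 : q * (2 * q) - q ^ 2 = q ^ 2 := by ring
    rw [h7] at h6
    refine h6.congr fun n => ?_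
    simp [div_eq_inv_mul]
  have hev : ∀ᶠ n in Filter.atTop, ENNReal.ofReal ((f (r + 2 * t n * q) - f r) / t n - q ^ 2) ≤
      ENNReal.ofReal ((supConv (t n) (fun x : EuclideanSpace ℝ (Fin 2) => f ‖x‖) x - f r) / t n) := by
    have h1 : Filter.Tendsto (fun n => r + 2 * t n * q) Filter.atTop (nhds (r + 2 * 0 * q)) :=
      ((ht0.const_mul 2).mul_const q).const_add r
    have h2 : ∀ᶠ n in Filter.atTop, 0 < r + 2 * t n * q :=
      h1.eventually (lt_mem_nhds (by simpa using hr))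
    filter_upwards [h2] with n hn
    refine ENNReal.ofReal_le_ofReal ?_
    have h3 := le_supConv (ht n) hv x ((1 + 2 * t n * q / r) • x)
    have h4 : ‖(1 + 2 * t n * q / r) • x‖ = r + 2 * t n * q := by
      have : 1 + 2 * t n * q / r = (r + 2 * t n * q) / r := by field_simp
      rw [norm_smul, this, Real.norm_of_nonneg (by positivity), ← hrdef]
      field_simp
    have h5 : ‖x - (1 + 2 * t n * q / r) • x‖ ^ 2 / (4 * t n) = t n * q ^ 2 := by
      have h6 : x - (1 + 2 * t n * q / r) • x = (-(2 * t n * q / r)) • x := by module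
      have := ht n
      rw [h6, norm_smul, ← hrdef, mul_pow, Real.norm_eq_abs, sq_abs]
      field_simp
      ring
    rw [h4, h5] at h3
    rw [le_div_iff₀ (ht n), sub_mul, div_mul_cancel₀ _ (ht n).ne']
    linarith
  have h8 := (ENNReal.continuous_ofReal.tendsto (q ^ 2)).comp hlim
  rw [← h8.liminf_eq]
  exact Filter.liminf_le_liminf hev

/-- **Pólya–Szegő inequality** in the plane. -/
theorem lintegral_sq_deriv_rearr_le {K : NNReal} (hL : LipschitzWith K u) (hu₀ : 0 ≤ u)
    (hcs : HasCompactSupport u) {G : EuclideanSpace ℝ (Fin 2) → ℝ}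
    (hG : ∀ᵐ x, ∀ ε > 0, ∃ δ > 0, ∀ y, ‖x - y‖ < δ → u y - u x ≤ (G x + ε) * ‖x - y‖) :
    ∫⁻ x : EuclideanSpace ℝ (Fin 2), ENNReal.ofReal ((deriv (rearr u) ‖x‖) ^ 2)
      ≤ ∫⁻ x, ENNReal.ofReal (G x ^ 2) := by
  have hu := hL.continuous
  have hub := bddAbove_range_of_bump hu hcs
  obtain ⟨M, hM'⟩ := hub
  have hM : ∀ x, u x ≤ M := fun x => hM' ⟨x, rfl⟩
  obtain ⟨R, hR'⟩ := hcs.isCompact.isBounded.subset_closedBall 0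
  have hR : ∀ x, R < ‖x‖ → u x = 0 := fun x hx => by
    by_contra h
    have := hR' (subset_tsupport u (Function.mem_support.2 h))
    rw [mem_closedBall_zero_iff] at this
    linarith
  have hprof := isProfile_rearr hL hcs
  set v : EuclideanSpace ℝ (Fin 2) → ℝ := fun x => rearr u ‖x‖ with hvdef
  have hvc : Continuous v := by
    obtain ⟨K', hK'⟩ := hprof.lipschitz
    exact hK'.continuous.comp continuous_norm
  have hvb : BddAbove (Set.range v) :=
    ⟨rearr u 0, by rintro _ ⟨x, rfl⟩; exact hprof.antitone (norm_nonneg x)⟩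
  set t : ℕ → ℝ := fun n => 1 / ((n : ℝ) + 1) with htdef
  have ht : ∀ n, 0 < t n := fun n => by positivity
  have ht1 : ∀ n, t n ≤ 1 := fun n => by
    rw [htdef]
    exact (div_le_one (by positivity)).2 (by linarith [Nat.cast_nonneg (α := ℝ) n])
  have ht0 : Filter.Tendsto t Filter.atTop (nhds 0) := tendsto_one_div_add_atTop_nhds_zero_nat
  have hKL : ∀ x y, u y - u x ≤ (K : ℝ) * ‖x - y‖ := fun x y => by
    have := hL.dist_le_mul y x
    rw [Real.dist_eq, dist_eq_norm] at this
    rw [norm_sub_rev]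
    exact (le_abs_self _).trans this
  set B := Metric.closedBall (0 : EuclideanSpace ℝ (Fin 2)) (|R| + 4 * M + 1)
  have hBfin : volume B ≠ ⊤ := measure_closedBall_lt_top.ne
  have hout : ∀ n, ∀ x ∉ B, supConv (t n) u x = u x := fun n x hx =>
    supConv_eq_self_of_large (ht n) (ht1 n) hu₀ hM hR (by simpa [B] using hx)
  have hout0 : ∀ x ∉ B, u x = 0 := fun x hx => hR x (by
    have : |R| + 4 * M + 1 < ‖x‖ := by simpa [B] using hx
    have hM0 : (0 : ℝ) ≤ M := le_trans (hu₀ 0) (hM 0)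
    linarith [le_abs_self R])
  have hmu := fun n => measurable_supConv (ht n) ⟨M, hM'⟩ (w := u)
  have hmv := fun n => measurable_supConv (ht n) hvb
  have hle : ∀ n, ∫⁻ x, ENNReal.ofReal (supConv (t n) v x)
      ≤ ∫⁻ x, ENNReal.ofReal (supConv (t n) u x) := by
    intro n
    rw [lintegral_eq_lintegral_meas_lt volume (Filter.Eventually.of_forall fun x =>
        (rearr_nonneg _).trans (self_le_supConv (ht n) hvb x)) (hmv n).aemeasurable,
      lintegral_eq_lintegral_meas_lt volume (Filter.Eventually.of_forall fun x =>
        (hu₀ x).trans (self_le_supConv (ht n) ⟨M, hM'⟩ x)) (hmu n).aemeasurable]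
    refine setLIntegral_mono' measurableSet_Ioi fun s (hs : 0 < s) => ?_
    refine volume_superlevel_supConv_rearr_le (ht n) hu hcs hs.le ?_ hvb
    refine (measure_mono (t := B) fun x hx => ?_).trans_lt measure_closedBall_lt_top |>.ne
    by_contra h
    rw [Set.mem_ofPred_eq, hout n x h, hout0 x h] at hx
    linarith
  have heq : ∫⁻ x, ENNReal.ofReal (v x) = ∫⁻ x, ENNReal.ofReal (u x) := by
    rw [lintegral_eq_lintegral_meas_lt volume (Filter.Eventually.of_forall fun x =>
        rearr_nonneg _) hvc.measurable.aemeasurable,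
      lintegral_eq_lintegral_meas_lt volume (Filter.Eventually.of_forall hu₀)
        hu.measurable.aemeasurable]
    exact setLIntegral_congr_fun measurableSet_Ioi fun s (hs : 0 < s) =>
      volume_superlevel_rearr hu hcs hs.le
  have hufin : ∫⁻ x, ENNReal.ofReal (u x) ≠ ⊤ :=
    (hu.integrable_of_hasCompactSupport hcs).lintegral_lt_top.ne
  have hquot : ∀ n, ∫⁻ x, ENNReal.ofReal ((supConv (t n) v x - v x) / t n)
      ≤ ∫⁻ x, ENNReal.ofReal ((supConv (t n) u x - u x) / t n) := by
    intro n
    have hsplit : ∀ w : EuclideanSpace ℝ (Fin 2) → ℝ, 0 ≤ w → BddAbove (Set.range w) →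
        Measurable w → ∫⁻ x, ENNReal.ofReal (supConv (t n) w x)
          = (∫⁻ x, ENNReal.ofReal (w x)) + ∫⁻ x, ENNReal.ofReal (supConv (t n) w x - w x) := by
      intro w hw0 hwb hwm
      rw [← lintegral_add_left hwm.ennreal_ofReal]
      refine lintegral_congr fun x => ?_
      rw [← ENNReal.ofReal_add (hw0 x) (sub_nonneg.2 (self_le_supConv (ht n) hwb x)),
        add_sub_cancel]
    have h1 := hle n
    rw [hsplit v (fun x => rearr_nonneg _) hvb hvc.measurable,
      hsplit u hu₀ ⟨M, hM'⟩ hu.measurable, heq] at h1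
    have h2 := (ENNReal.add_le_add_iff_left hufin).1 h1
    simp only [div_eq_mul_inv, ENNReal.ofReal_mul' (inv_nonneg.2 (ht n).le)]
    rw [lintegral_mul_const _ (show Measurable fun x => ENNReal.ofReal (supConv (t n) v x - v x)
        from ((hmv n).sub hvc.measurable).ennreal_ofReal),
      lintegral_mul_const _ (show Measurable fun x => ENNReal.ofReal (supConv (t n) u x - u x)
        from ((hmu n).sub hu.measurable).ennreal_ofReal)]
    gcongr
  have hne : ∀ᵐ x : EuclideanSpace ℝ (Fin 2), x ≠ 0 := by
    simp [ae_iff]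
  have hdiff : ∀ᵐ x : EuclideanSpace ℝ (Fin 2), DifferentiableAt ℝ (rearr u) ‖x‖ := by
    obtain ⟨K', hK'⟩ := hprof.lipschitz
    exact ae_comp_norm hK'.ae_differentiableAt_of_real
  calc ∫⁻ x : EuclideanSpace ℝ (Fin 2), ENNReal.ofReal ((deriv (rearr u) ‖x‖) ^ 2)
      ≤ ∫⁻ x, Filter.liminf (fun n => ENNReal.ofReal ((supConv (t n) v x - v x) / t n))
          Filter.atTop := by
        refine lintegral_mono_ae ?_
        filter_upwards [hne, hdiff] with x hx hd
        exact sq_deriv_le_liminf_supConv hx hd ht ht0 hvb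
    _ ≤ Filter.liminf (fun n => ∫⁻ x, ENNReal.ofReal ((supConv (t n) v x - v x) / t n))
          Filter.atTop := lintegral_liminf_le fun n =>
            (((hmv n).sub hvc.measurable).div_const _).ennreal_ofReal
    _ ≤ Filter.limsup (fun n => ∫⁻ x, ENNReal.ofReal ((supConv (t n) u x - u x) / t n))
          Filter.atTop :=
        (Filter.liminf_le_liminf (Filter.Eventually.of_forall hquot)).trans
          Filter.liminf_le_limsup
    _ ≤ ∫⁻ x, Filter.limsup (fun n => ENNReal.ofReal ((supConv (t n) u x - u x) / t n))
          Filter.atTop := by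
        refine limsup_lintegral_le (B.indicator fun _ => ENNReal.ofReal ((K : ℝ) ^ 2))
          (fun n => (((hmu n).sub hu.measurable).div_const _).ennreal_ofReal)
          (fun n => Filter.Eventually.of_forall fun x => ?_) ?_
        · by_cases hx : x ∈ B
          · rw [Set.indicator_of_mem hx]
            exact ENNReal.ofReal_le_ofReal (supConv_sub_le_of_lipschitz (ht n) (hKL x))
          · show ENNReal.ofReal ((supConv (t n) u x - u x) / t n) ≤ _
            rw [hout n x hx]
            simp
        · rw [lintegral_indicator_const Metric.isClosed_closedBall.measurableSet]
          exact ENNReal.mul_ne_top ENNReal.ofReal_ne_top hBfin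
    _ ≤ ∫⁻ x, ENNReal.ofReal (G x ^ 2) := by
        refine lintegral_mono_ae ?_
        filter_upwards [hG] with x hx
        have h1 : ∀ ε > 0, Filter.limsup (fun n =>
            ENNReal.ofReal ((supConv (t n) u x - u x) / t n)) Filter.atTop
            ≤ ENNReal.ofReal ((G x + ε) ^ 2) := by
          intro ε hε
          obtain ⟨δ, hδ, h⟩ := hx ε hε
          refine Filter.limsup_le_of_le (by isBoundedDefault) ?_
          have h2 : Filter.Tendsto (fun n => t n * (4 * (K : ℝ))) Filter.atTop
              (nhds (0 * (4 * (K : ℝ)))) := ht0.mul_const _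
          rw [zero_mul] at h2
          filter_upwards [h2.eventually (gt_mem_nhds hδ)] with n hn
          exact ENNReal.ofReal_le_ofReal (supConv_sub_le_of_slope (ht n) hn.le (hKL x) h)
        have h2 : Filter.Tendsto (fun ε : ℝ => ENNReal.ofReal ((G x + ε) ^ 2))
            (nhdsWithin 0 (Set.Ioi 0)) (nhds (ENNReal.ofReal ((G x + 0) ^ 2))) := by
          refine Filter.Tendsto.mono_left ?_ nhdsWithin_le_nhds
          exact (ENNReal.continuous_ofReal.comp (by fun_prop : Continuous fun ε : ℝ =>
            (G x + ε) ^ 2)).tendsto 0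
        rw [add_zero] at h2
        exact ge_of_tendsto h2 (Filter.eventually_of_mem self_mem_nhdsWithin h1)

end PolyaSzego

theorem integral_radial (g : ℝ → ℝ) :
    ∫ x : EuclideanSpace ℝ (Fin 2), g ‖x‖ = 2 * Real.pi * ∫ r in Set.Ioi (0 : ℝ), r * g r := by
  rw [integral_fun_norm_addHaar volume g, volume_ball_plane zero_le_one]
  simp [mul_assoc]

theorem integrable_radial_iff (g : ℝ → ℝ) :
    Integrable (fun x : EuclideanSpace ℝ (Fin 2) => g ‖x‖) ↔
      IntegrableOn (fun r => r * g r) (Set.Ioi 0) := by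
  rw [integrable_fun_norm_addHaar volume (f := g)]
  simp

theorem integrableOn_of_vanishing {g : ℝ → ℝ} {R : ℝ} (hR : ∀ r, R ≤ r → g r = 0)
    {C : ℝ} (hC : ∀ r, 0 < r → |g r| ≤ C) (hm : Measurable g) :
    IntegrableOn (fun r => r * g r) (Set.Ioi 0) := by
  have hC0 : 0 ≤ C := (abs_nonneg _).trans (hC 1 one_pos)
  have hmaj : IntegrableOn ((Set.Ioo 0 R).indicator fun _ => R * C) (Set.Ioi 0) := by
    refine Integrable.integrableOn ?_
    rw [integrable_indicator_iff measurableSet_Ioo]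
    exact integrableOn_const measure_Ioo_lt_top.ne
  refine hmaj.mono' (measurable_id.mul hm).aestronglyMeasurable ?_
  filter_upwards [ae_restrict_mem measurableSet_Ioi] with r (hr : 0 < r)
  rcases lt_or_ge r R with h | h
  · rw [Set.indicator_of_mem (show r ∈ Set.Ioo 0 R from ⟨hr, h⟩), norm_mul, Real.norm_of_nonneg hr.le]
    rw [Real.norm_eq_abs]
    exact mul_le_mul h.le (hC r hr) (abs_nonneg _) (hr.trans h).le
  · rw [hR r h, Set.indicator_of_notMem (fun h' => h.not_gt h'.2)]
    simp

theorem deriv_eq_zero_of_vanishing {g : ℝ → ℝ} {R : ℝ} (hR : ∀ r, R ≤ r → g r = 0) {r : ℝ}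
    (hr : R + 1 ≤ r) : deriv g r = 0 := by
  have : g =ᶠ[nhds r] fun _ => 0 := by
    filter_upwards [lt_mem_nhds (show R < r by linarith)] with s hs using hR s hs.le
  rw [this.deriv_eq, deriv_const]

theorem abs_deriv_le_of_lipschitz {g : ℝ → ℝ} {K : NNReal} (hK : LipschitzWith K g) (r : ℝ) :
    |deriv g r| ≤ K := by
  simpa using norm_deriv_le_of_lipschitz hK (x₀ := r)

theorem integrableOn_mul_sq_deriv {g : ℝ → ℝ} {R : ℝ} (hR : ∀ r, R ≤ r → g r = 0)
    {K : NNReal} (hK : LipschitzWith K g) :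
    IntegrableOn (fun r => r * deriv g r ^ 2) (Set.Ioi 0) := by
  refine integrableOn_of_vanishing (R := R + 1) (C := (K : ℝ) ^ 2) (fun r hr => ?_) (fun r _ => ?_)
    ((measurable_deriv g).pow_const 2)
  · rw [deriv_eq_zero_of_vanishing hR hr]; simp
  · rw [abs_of_nonneg (sq_nonneg _), ← sq_abs]
    gcongr
    exact abs_deriv_le_of_lipschitz hK r

theorem exists_profile_of_slope {u : EuclideanSpace ℝ (Fin 2) → ℝ} {K : NNReal}
    (hL : LipschitzWith K u) (hu₀ : 0 ≤ u) (hcs : HasCompactSupport u)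
    {G : EuclideanSpace ℝ (Fin 2) → ℝ} (hGi : Integrable fun x => G x ^ 2)
    (hG : ∀ᵐ x, ∀ ε > 0, ∃ δ > 0, ∀ y, ‖x - y‖ < δ → u y - u x ≤ (G x + ε) * ‖x - y‖) :
    ∃ f, IsProfile f ∧
      ∫ x, u x ^ 2 = 2 * Real.pi * ∫ r in Set.Ioi (0 : ℝ), r * f r ^ 2 ∧
      ∫ x, u x ^ 4 = 2 * Real.pi * ∫ r in Set.Ioi (0 : ℝ), r * f r ^ 4 ∧
      2 * Real.pi * ∫ r in Set.Ioi (0 : ℝ), r * deriv f r ^ 2 ≤ ∫ x, G x ^ 2 := by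
  have hprof := isProfile_rearr hL hcs
  obtain ⟨K', hK'⟩ := hprof.lipschitz
  obtain ⟨R, hR⟩ := hprof.vanishing
  have hm : Measurable fun x : EuclideanSpace ℝ (Fin 2) => rearr u ‖x‖ :=
    (hK'.continuous.comp continuous_norm).measurable
  refine ⟨rearr u, hprof, ?_, ?_, ?_⟩
  · rw [← integral_radial fun r => rearr u r ^ 2]
    exact integral_pow_eq_of_equimeasurable hL.continuous.measurable hm hu₀
      (fun x => rearr_nonneg _) (fun s hs => (volume_superlevel_rearr hL.continuous hcs hs).symm)
      two_ne_zero
  · rw [← integral_radial fun r => rearr u r ^ 4]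
    exact integral_pow_eq_of_equimeasurable hL.continuous.measurable hm hu₀
      (fun x => rearr_nonneg _) (fun s hs => (volume_superlevel_rearr hL.continuous hcs hs).symm)
      four_ne_zero
  · rw [← integral_radial fun r => deriv (rearr u) r ^ 2]
    have hi : Integrable fun x : EuclideanSpace ℝ (Fin 2) => deriv (rearr u) ‖x‖ ^ 2 :=
      (integrable_radial_iff fun r => deriv (rearr u) r ^ 2).2 (integrableOn_mul_sq_deriv hR hK')
    have h := lintegral_sq_deriv_rearr_le hL hu₀ hcs hG
    rw [← ofReal_integral_eq_lintegral_ofReal hi (Filter.Eventually.of_forall fun x => sq_nonneg _),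
      ← ofReal_integral_eq_lintegral_ofReal hGi (Filter.Eventually.of_forall fun x => sq_nonneg _)]
      at h
    exact (ENNReal.ofReal_le_ofReal_iff (integral_nonneg fun x => sq_nonneg _)).1 h

/-- The radial Gagliardo–Nirenberg inequality with constant `C`, for nonincreasing profiles. -/
def ProfileGN (C : ℝ) : Prop := ∀ f, IsProfile f →
  ∫ r in Set.Ioi (0 : ℝ), r * f r ^ 4 ≤
    C * (∫ r in Set.Ioi (0 : ℝ), r * deriv f r ^ 2) * ∫ r in Set.Ioi (0 : ℝ), r * f r ^ 2

theorem ProfileGN.integral_le {C : ℝ} (hC : ProfileGN C) (hC0 : 0 ≤ C)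
    {u : EuclideanSpace ℝ (Fin 2) → ℝ} {K : NNReal}
    (hL : LipschitzWith K u) (hu₀ : 0 ≤ u) (hcs : HasCompactSupport u)
    {G : EuclideanSpace ℝ (Fin 2) → ℝ} (hGi : Integrable fun x => G x ^ 2)
    (hG : ∀ᵐ x, ∀ ε > 0, ∃ δ > 0, ∀ y, ‖x - y‖ < δ → u y - u x ≤ (G x + ε) * ‖x - y‖) :
    ∫ x, u x ^ 4 ≤ C / (2 * Real.pi) * (∫ x, G x ^ 2) * ∫ x, u x ^ 2 := by
  obtain ⟨f, hf, h2, h4, hd⟩ := exists_profile_of_slope hL hu₀ hcs hGi hG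
  have h := hC f hf
  have hpi := Real.pi_pos
  have hM : 0 ≤ ∫ r in Set.Ioi (0 : ℝ), r * f r ^ 2 :=
    setIntegral_nonneg measurableSet_Ioi fun r (hr : 0 < r) => by positivity
  rw [h2, h4]
  calc _ ≤ 2 * Real.pi * (C * (∫ r in Set.Ioi (0 : ℝ), r * deriv f r ^ 2) *
        ∫ r in Set.Ioi (0 : ℝ), r * f r ^ 2) := by gcongr
    _ = C / (2 * Real.pi) * (2 * Real.pi * ∫ r in Set.Ioi (0 : ℝ), r * deriv f r ^ 2) *
        (2 * Real.pi * ∫ r in Set.Ioi (0 : ℝ), r * f r ^ 2) := by field_simp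
    _ ≤ _ := by gcongr

/-- Monotonicity of the profile is not needed. -/
theorem ProfileGN.of_lipschitz {C : ℝ} (hC : ProfileGN C) (hC0 : 0 ≤ C) {g : ℝ → ℝ} {K : NNReal}
    (hK : LipschitzWith K g) {R : ℝ} (hR : ∀ r, R ≤ r → g r = 0) :
    ∫ r in Set.Ioi (0 : ℝ), r * g r ^ 4 ≤
      C * (∫ r in Set.Ioi (0 : ℝ), r * deriv g r ^ 2) * ∫ r in Set.Ioi (0 : ℝ), r * g r ^ 2 := by
  have hpi := Real.pi_pos
  have hL : LipschitzWith K fun x : EuclideanSpace ℝ (Fin 2) => |g ‖x‖| := by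
    refine LipschitzWith.of_dist_le_mul fun x y => ?_
    have h1 := hK.dist_le_mul ‖x‖ ‖y‖
    rw [Real.dist_eq] at *
    rw [Real.dist_eq] at h1
    rw [dist_eq_norm]
    refine (abs_abs_sub_abs_le_abs_sub _ _).trans (h1.trans ?_)
    gcongr
    exact abs_norm_sub_norm_le x y
  have hcs : HasCompactSupport fun x : EuclideanSpace ℝ (Fin 2) => |g ‖x‖| := by
    refine HasCompactSupport.intro (isCompact_closedBall (0 : EuclideanSpace ℝ (Fin 2)) R) ?_
    intro x hx
    rw [mem_closedBall_zero_iff, not_le] at hx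
    rw [hR _ hx.le, abs_zero]
  have h := hC.integral_le hC0 hL (fun x => abs_nonneg _) hcs
    (G := fun x => |deriv g ‖x‖|) (by
      simp only [sq_abs]
      exact (integrable_radial_iff fun r => deriv g r ^ 2).2 (integrableOn_mul_sq_deriv hR hK)) (by
      filter_upwards [ae_comp_norm hK.ae_differentiableAt_of_real] with x hx ε hε
      have h1 := (hasDerivAt_iff_isLittleO.1 hx.hasDerivAt).def hε
      obtain ⟨δ, hδ, h2⟩ := Metric.eventually_nhds_iff.1 h1
      refine ⟨δ, hδ, fun y hy => ?_⟩
      have h3 : |‖y‖ - ‖x‖| ≤ ‖x - y‖ := by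
        rw [norm_sub_rev]; exact abs_norm_sub_norm_le y x
      have h4 := h2 (show dist ‖y‖ ‖x‖ < δ from by rw [Real.dist_eq]; exact h3.trans_lt hy)
      simp only [Real.norm_eq_abs, smul_eq_mul] at h4
      have h5 : |g ‖y‖| - |g ‖x‖| ≤ |g ‖y‖ - g ‖x‖| := abs_sub_abs_le_abs_sub _ _
      have h6 : |g ‖y‖ - g ‖x‖| ≤ |g ‖y‖ - g ‖x‖ - (‖y‖ - ‖x‖) * deriv g ‖x‖|
          + |(‖y‖ - ‖x‖) * deriv g ‖x‖| := by
        have := abs_add_le (g ‖y‖ - g ‖x‖ - (‖y‖ - ‖x‖) * deriv g ‖x‖) ((‖y‖ - ‖x‖) * deriv g ‖x‖)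
        rwa [sub_add_cancel] at this
      rw [abs_mul] at h6
      calc _ ≤ (|deriv g ‖x‖| + ε) * |‖y‖ - ‖x‖| := by linarith
        _ ≤ _ := by gcongr)
  simp only [sq_abs, Even.pow_abs (show Even 4 by decide)] at h
  rw [integral_radial fun r => g r ^ 4, integral_radial fun r => g r ^ 2,
    integral_radial fun r => deriv g r ^ 2] at h
  refine le_of_mul_le_mul_left (h.trans_eq ?_) (by positivity : 0 < 2 * Real.pi)
  field_simp

section Profiles

variable {f : ℝ → ℝ}

theorem LipschitzWith.integral_deriv {K : NNReal} (hK : LipschitzWith K f) (a b : ℝ) :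
    ∫ x in a..b, deriv f x = f b - f a :=
  hK.lipschitzOnWith.absolutelyContinuousOnInterval.integral_deriv_eq_sub

namespace IsProfile

theorem abs_le (hf : IsProfile f) {r : ℝ} (hr : 0 ≤ r) : |f r| ≤ f 0 := by
  rw [abs_of_nonneg (hf.nonneg r)]
  exact hf.antitone hr

theorem continuous (hf : IsProfile f) : Continuous f :=
  let ⟨_, hK⟩ := hf.lipschitz
  hK.continuous

theorem integrableOn_pow (hf : IsProfile f) {p : ℕ} (hp : p ≠ 0) :
    IntegrableOn (fun r => r * f r ^ p) (Set.Ioi 0) := by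
  obtain ⟨R, hR⟩ := hf.vanishing
  refine integrableOn_of_vanishing (C := f 0 ^ p) (fun r hr => by rw [hR _ hr, zero_pow hp])
    (fun r hr => ?_) (hf.continuous.measurable.pow_const p)
  rw [abs_pow]
  exact pow_le_pow_left₀ (abs_nonneg _) (hf.abs_le hr.le) p

theorem integrableOn_sq_deriv (hf : IsProfile f) :
    IntegrableOn (fun r => r * deriv f r ^ 2) (Set.Ioi 0) :=
  let ⟨_, hR⟩ := hf.vanishing
  let ⟨_, hK⟩ := hf.lipschitz
  integrableOn_mul_sq_deriv hR hK

/-- Quantitative equicontinuity away from the origin. -/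
theorem sub_le (hf : IsProfile f) {a b ε : ℝ} (ha : 0 < a) (hab : a ≤ b) (hε : 0 < ε) :
    f a - f b ≤
      ε / 2 * (∫ r in Set.Ioi (0 : ℝ), r * deriv f r ^ 2) + Real.log (b / a) / (2 * ε) := by
  obtain ⟨K, hK⟩ := hf.lipschitz
  have h1 := hK.integral_deriv a b
  have hi : IntegrableOn (fun r => r * deriv f r ^ 2) (Set.Ioc a b) :=
    hf.integrableOn_sq_deriv.mono_set fun r hr => ha.trans hr.1
  have hinv : IntervalIntegrable (fun r : ℝ => r⁻¹) volume a b := by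
    refine intervalIntegral.intervalIntegrable_inv (fun x hx => ?_) continuousOn_id
    rw [Set.uIcc_of_le hab] at hx
    exact (ha.trans_le hx.1).ne'
  have hi' : IntervalIntegrable (fun r => ε / 2 * (r * deriv f r ^ 2)) volume a b :=
    ((intervalIntegrable_iff_integrableOn_Ioc_of_le hab).2 hi).const_mul _
  have hd : IntervalIntegrable (deriv f) volume a b :=
    (hK.lipschitzOnWith.absolutelyContinuousOnInterval).intervalIntegrable_deriv
  calc f a - f b = ∫ r in a..b, -deriv f r := by
        rw [intervalIntegral.integral_neg, h1]; ring
    _ ≤ ∫ r in a..b, (ε / 2 * (r * deriv f r ^ 2) + (1 / (2 * ε)) * r⁻¹) := by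
        refine intervalIntegral.integral_mono_on hab hd.neg (hi'.add (hinv.const_mul _)) ?_
        intro r hr
        have hr0 : 0 < r := ha.trans_le hr.1
        have h2 : ε / 2 * (r * deriv f r ^ 2) + (1 / (2 * ε)) * r⁻¹ + deriv f r
            = (ε * r * deriv f r + 1) ^ 2 / (2 * ε * r) := by
          field_simp
          ring
        have h3 : 0 ≤ (ε * r * deriv f r + 1) ^ 2 / (2 * ε * r) := by positivity
        linarith
    _ = ε / 2 * (∫ r in Set.Ioc a b, r * deriv f r ^ 2) + Real.log (b / a) / (2 * ε) := by
        rw [intervalIntegral.integral_add hi' (hinv.const_mul _),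
          intervalIntegral.integral_const_mul, intervalIntegral.integral_const_mul,
          integral_inv_of_pos ha (ha.trans_le hab), intervalIntegral.integral_of_le hab]
        ring
    _ ≤ _ := by
        gcongr
        · filter_upwards [ae_restrict_mem measurableSet_Ioi] with r (hr : 0 < r)
          positivity
        · exact hf.integrableOn_sq_deriv
        · exact fun r hr => ha.trans hr.1

theorem sq_mul_sq_le (hf : IsProfile f) {r : ℝ} (hr : 0 < r) :
    f r ^ 2 * r ^ 2 ≤ 2 * ∫ r in Set.Ioi (0 : ℝ), r * f r ^ 2 := by
  have h1 : ∫ s in (0 : ℝ)..r, s * f r ^ 2 = r ^ 2 / 2 * f r ^ 2 := by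
    rw [intervalIntegral.integral_mul_const, integral_id]
    ring
  have h2 : ∫ s in (0 : ℝ)..r, s * f r ^ 2 ≤ ∫ s in (0 : ℝ)..r, s * f s ^ 2 := by
    refine intervalIntegral.integral_mono_on hr.le ((by fun_prop : Continuous fun s =>
      s * f r ^ 2).intervalIntegrable _ _) ?_ fun s hs => ?_
    · have := hf.continuous
      exact (by fun_prop : Continuous fun s => s * f s ^ 2).intervalIntegrable _ _
    · have := hf.antitone hs.2
      have := hf.nonneg r
      have := hs.1
      gcongr
  have h3 : ∫ s in (0 : ℝ)..r, s * f s ^ 2 ≤ ∫ s in Set.Ioi (0 : ℝ), s * f s ^ 2 := by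
    rw [intervalIntegral.integral_of_le hr.le]
    refine setIntegral_mono_set (hf.integrableOn_pow two_ne_zero) ?_
      (Filter.Eventually.of_forall fun s hs => hs.1)
    filter_upwards [ae_restrict_mem measurableSet_Ioi] with r (hr : 0 < r)
    positivity
  linarith

theorem comp_mul (hf : IsProfile f) {a b : ℝ} (ha : 0 ≤ a) (hb : 0 < b) :
    IsProfile fun r => a * f (b * r) := by
  obtain ⟨K, hK⟩ := hf.lipschitz
  obtain ⟨R, hR⟩ := hf.vanishing
  refine ⟨fun r s h => ?_, fun r => mul_nonneg ha (hf.nonneg _), ?_, R / b, fun r hr => ?_⟩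
  · have := hf.antitone (mul_le_mul_of_nonneg_left h hb.le)
    gcongr
  · refine ⟨a.toNNReal * (K * b.toNNReal), LipschitzWith.of_dist_le_mul fun x y => ?_⟩
    have h := hK.dist_le_mul (b * x) (b * y)
    simp only [Real.dist_eq, NNReal.coe_mul, Real.coe_toNNReal _ ha, Real.coe_toNNReal _ hb.le]
      at h ⊢
    rw [← mul_sub, abs_mul, abs_of_pos hb] at h
    rw [← mul_sub, abs_mul, abs_of_nonneg ha]
    calc _ ≤ a * (K * (b * |x - y|)) := by gcongr
      _ = _ := by ring
  · rw [hR _ (by rwa [div_le_iff₀' hb] at hr), mul_zero]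

end IsProfile

theorem integral_mul_comp_mul {F : ℝ → ℝ} {b : ℝ} (hb : 0 < b) :
    ∫ r in Set.Ioi (0 : ℝ), r * F (b * r) = (b ^ 2)⁻¹ * ∫ r in Set.Ioi (0 : ℝ), r * F r := by
  have h := integral_comp_mul_left_Ioi (fun r => r * F r) 0 hb
  simp only [mul_zero, smul_eq_mul, mul_assoc] at h
  rw [integral_const_mul] at h
  rw [sq, mul_inv, mul_assoc, ← h, inv_mul_cancel_left₀ hb.ne']

/-- Profiles with both the `L²` norm and the gradient norm equal to one. -/
structure IsNormalized (f : ℝ → ℝ) : Prop extends IsProfile f where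
  mass : ∫ r in Set.Ioi (0 : ℝ), r * f r ^ 2 = 1
  energy : ∫ r in Set.Ioi (0 : ℝ), r * deriv f r ^ 2 = 1

theorem IsProfile.exists_normalized (hf : IsProfile f)
    (h : ∫ r in Set.Ioi (0 : ℝ), r * f r ^ 4 ≠ 0) :
    ∃ g, IsNormalized g ∧ ∫ r in Set.Ioi (0 : ℝ), r * f r ^ 4 =
      (∫ r in Set.Ioi (0 : ℝ), r * g r ^ 4) * (∫ r in Set.Ioi (0 : ℝ), r * deriv f r ^ 2) *
        ∫ r in Set.Ioi (0 : ℝ), r * f r ^ 2 := by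
  set M := ∫ r in Set.Ioi (0 : ℝ), r * f r ^ 2 with hM
  set D := ∫ r in Set.Ioi (0 : ℝ), r * deriv f r ^ 2 with hD
  have hM0 : 0 ≤ M := setIntegral_nonneg measurableSet_Ioi fun r (hr : 0 < r) => by positivity
  have hD0 : 0 ≤ D := setIntegral_nonneg measurableSet_Ioi fun r (hr : 0 < r) => by positivity
  have hvan : (∀ r, 0 < r → f r = 0) → False := fun h0 => h <| by
    rw [setIntegral_congr_fun (g := fun _ => 0) measurableSet_Ioi fun r (hr : 0 < r) => by
      simp [h0 r hr]]
    simp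
  have hMpos : 0 < M := by
    refine hM0.lt_of_ne fun h0 => hvan fun r hr => ?_
    have := hf.sq_mul_sq_le hr
    rw [← hM, ← h0, mul_zero] at this
    have h1 : (f r * r) ^ 2 ≤ 0 := by rwa [mul_pow]
    have h2 : f r * r = 0 := by
      have := le_antisymm h1 (sq_nonneg _)
      exact pow_eq_zero_iff two_ne_zero |>.1 this
    exact (mul_eq_zero.1 h2).resolve_right hr.ne'
  have hDpos : 0 < D := by
    refine hD0.lt_of_ne fun h0 => hvan fun r hr => ?_
    obtain ⟨R, hR⟩ := hf.vanishing
    refine le_antisymm (le_of_forall_pos_le_add fun η hη => ?_) (hf.nonneg r)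
    have hb := hf.sub_le hr (le_max_left r R)
      (ε := (|Real.log (max r R / r)| + 1) / (2 * η)) (by positivity)
    rw [← hD, ← h0, hR _ (le_max_right r R)] at hb
    have h2 : Real.log (max r R / r) / (2 * ((|Real.log (max r R / r)| + 1) / (2 * η))) ≤ η := by
      rw [div_le_iff₀ (by positivity)]
      field_simp
      linarith [le_abs_self (Real.log (max r R / r))]
    linarith
  have ha : (√D)⁻¹ ^ 2 = D⁻¹ := by rw [inv_pow, Real.sq_sqrt hD0]
  have hb : (√(M / D)) ^ 2 = M / D := Real.sq_sqrt (by positivity)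
  have hb0 : 0 < √(M / D) := Real.sqrt_pos.2 (by positivity)
  refine ⟨fun r => (√D)⁻¹ * f (√(M / D) * r), ⟨hf.comp_mul (by positivity) hb0, ?_, ?_⟩, ?_⟩
  · simp only [mul_pow, ha, mul_left_comm _ D⁻¹]
    rw [integral_const_mul, integral_mul_comp_mul (F := fun r => f r ^ 2) hb0, ← hM, hb]
    field_simp
  · have hd : ∀ r, deriv (fun r => (√D)⁻¹ * f (√(M / D) * r)) r
        = (√D)⁻¹ * (√(M / D) * deriv f (√(M / D) * r)) := fun r => by
      rw [deriv_const_mul_field, deriv_comp_mul_left, smul_eq_mul]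
    have hd2 : ∀ r, r * deriv (fun r => (√D)⁻¹ * f (√(M / D) * r)) r ^ 2
        = D⁻¹ * (M / D) * (r * deriv f (√(M / D) * r) ^ 2) := fun r => by
      rw [hd, mul_pow, mul_pow, ha, hb]; ring
    simp only [hd2]
    rw [integral_const_mul,
      integral_mul_comp_mul (F := fun r => deriv f r ^ 2) hb0, ← hD, hb]
    field_simp
  · have ha4 : (√D)⁻¹ ^ 4 = D⁻¹ ^ 2 := by rw [← ha]; ring
    simp only [mul_pow, ha4, mul_left_comm _ (D⁻¹ ^ 2)]
    rw [integral_const_mul, integral_mul_comp_mul (F := fun r => f r ^ 4) hb0, hb]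
    field_simp

end Profiles

/-- Integrable majorant for `r * f r ^ 4`, `f` a normalized profile. -/
noncomputable def quarticMajorant (r : ℝ) : ℝ := if r ≤ 1 then 16 else 4 * r ^ (-3 : ℝ)

theorem integrableOn_quarticMajorant : IntegrableOn quarticMajorant (Set.Ioi 0) := by
  rw [← Set.Ioc_union_Ioi_eq_Ioi zero_le_one]
  refine IntegrableOn.union ?_ ?_
  · refine (integrableOn_const (C := (16 : ℝ)) measure_Ioc_lt_top.ne).congr_fun (fun r hr => ?_)
      measurableSet_Ioc
    rw [quarticMajorant, if_pos hr.2]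
  · have h : IntegrableOn (fun r : ℝ => 4 * r ^ (-3 : ℝ)) (Set.Ioi 1) :=
      (integrableOn_Ioi_rpow_of_lt (by norm_num : (-3 : ℝ) < -1) one_pos).const_mul 4
    refine h.congr_fun (fun r (hr : 1 < r) => ?_) measurableSet_Ioi
    rw [quarticMajorant, if_neg hr.not_ge]

/-- The pointwise bounds satisfied by normalized profiles and their limits. -/
structure HasProfileBounds (f : ℝ → ℝ) : Prop where
  nonneg : ∀ r, 0 < r → 0 ≤ f r
  le : ∀ r, 0 < r → r * f r ≤ 2
  quartic : ∀ r, 0 < r → r * f r ^ 4 ≤ quarticMajorant r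
  anti : ∀ r s, 0 < r → r ≤ s → f s ≤ f r
  osc : ∀ a b ε, 0 < a → a ≤ b → 0 < ε → f a - f b ≤ ε / 2 + Real.log (b / a) / (2 * ε)

section Maximizers

variable {f : ℝ → ℝ}

theorem IsNormalized.sq_mul_sq_le' (hf : IsNormalized f) {r : ℝ} (hr : 0 < r) :
    f r ^ 2 * r ^ 2 ≤ 2 := by
  have := hf.sq_mul_sq_le hr
  rwa [hf.mass, mul_one] at this

theorem IsNormalized.hasProfileBounds (hf : IsNormalized f) : HasProfileBounds f := by
  have hosc : ∀ a b ε, 0 < a → a ≤ b → 0 < ε →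
      f a - f b ≤ ε / 2 + Real.log (b / a) / (2 * ε) := fun a b ε ha hab hε => by
    have := hf.sub_le ha hab hε
    rwa [hf.energy, mul_one] at this
  have hle : ∀ r, 0 < r → r * f r ≤ 3 / 2 := fun r hr => by
    have := hf.sq_mul_sq_le' hr
    have := hf.nonneg r
    nlinarith
  refine ⟨fun r _ => hf.nonneg r, fun r hr => (hle r hr).trans (by norm_num), fun r hr => ?_,
    fun r s _ h => hf.antitone h, hosc⟩
  rcases le_or_gt r 1 with h1 | h1
  · rw [quarticMajorant, if_pos h1]
    set s := √(√r) with hs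
    have hs0 : 0 < s := Real.sqrt_pos.2 (Real.sqrt_pos.2 hr)
    have hs4 : r = s ^ 4 := by
      rw [show s ^ 4 = (s ^ 2) ^ 2 by ring, hs, Real.sq_sqrt (Real.sqrt_nonneg _),
        Real.sq_sqrt hr.le]
    have h2 := hosc r 1 1 hr h1 one_pos
    have h3 : Real.log (1 / r) = 4 * Real.log (1 / s) := by
      rw [hs4, one_div, one_div, Real.log_inv, Real.log_inv, Real.log_pow]; push_cast; ring
    have h4 := Real.log_le_sub_one_of_pos (show 0 < 1 / s by positivity)
    have h5 := hle 1 one_pos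
    have h6 : f r ≤ 2 / s := by
      have : 2 / s = 2 * (1 / s) := by ring
      rw [h3] at h2
      linarith
    have h7 := hf.nonneg r
    have h8 : f r * s ≤ 2 := by rwa [le_div_iff₀ hs0] at h6
    calc r * f r ^ 4 = (f r * s) ^ 4 := by rw [hs4]; ring
      _ ≤ 2 ^ 4 := by gcongr
      _ = 16 := by norm_num
  · rw [quarticMajorant, if_neg h1.not_ge, Real.rpow_neg hr.le]
    have h2 := hf.sq_mul_sq_le' hr
    norm_num
    rw [← div_eq_mul_inv, le_div_iff₀ (by positivity)]
    calc r * f r ^ 4 * r ^ 3 = (f r ^ 2 * r ^ 2) ^ 2 := by ring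
      _ ≤ 2 ^ 2 := by gcongr
      _ = 4 := by norm_num

theorem HasProfileBounds.of_tendsto {F : ℕ → ℝ → ℝ} (hF : ∀ n, HasProfileBounds (F n))
    (h : ∀ r, 0 < r → Tendsto (fun n => F n r) atTop (𝓝 (f r))) : HasProfileBounds f where
  nonneg r hr := ge_of_tendsto' (h r hr) fun n => (hF n).nonneg r hr
  le r hr := le_of_tendsto' ((h r hr).const_mul r) fun n => (hF n).le r hr
  quartic r hr := le_of_tendsto' (((h r hr).pow 4).const_mul r) fun n => (hF n).quartic r hr
  anti r s hr hrs := le_of_tendsto_of_tendsto' (h s (hr.trans_le hrs)) (h r hr) fun n =>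
    (hF n).anti r s hr hrs
  osc a b ε ha hab hε := le_of_tendsto' ((h a ha).sub (h b (ha.trans_le hab))) fun n =>
    (hF n).osc a b ε ha hab hε

/-- Selection theorem for profiles. -/
theorem exists_subseq_tendsto {F : ℕ → ℝ → ℝ} (hF : ∀ n, HasProfileBounds (F n)) :
    ∃ φ : ℕ → ℕ, StrictMono φ ∧ ∃ f : ℝ → ℝ, ∀ r, 0 < r →
      Tendsto (fun n => F (φ n) r) atTop (𝓝 (f r)) := by
  have hK : IsCompact (Set.pi Set.univ fun q : {q : ℚ // 0 < q} =>
      Set.Icc (0 : ℝ) (2 / ((q : ℚ) : ℝ))) :=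
    isCompact_univ_pi fun _ => isCompact_Icc
  have hmem : ∀ n, (fun q : {q : ℚ // 0 < q} => F n ((q : ℚ) : ℝ)) ∈
      Set.pi Set.univ fun q : {q : ℚ // 0 < q} => Set.Icc (0 : ℝ) (2 / ((q : ℚ) : ℝ)) := by
    intro n q _
    have hq : (0 : ℝ) < ((q : ℚ) : ℝ) := by exact_mod_cast q.2
    exact ⟨(hF n).nonneg _ hq, by
      rw [le_div_iff₀' hq]; exact (hF n).le _ hq⟩
  obtain ⟨g, -, φ, hφ, hg⟩ := hK.tendsto_subseq hmem
  rw [tendsto_pi_nhds] at hg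
  have hcau : ∀ r, 0 < r → CauchySeq fun n => F (φ n) r := by
    intro r hr
    rw [Metric.cauchySeq_iff']
    intro η hη
    have hlim : Tendsto (fun b => Real.log (b / r)) (𝓝 r) (𝓝 (Real.log (r / r))) :=
      (Real.continuousAt_log (by rw [div_self hr.ne']; exact one_ne_zero)).tendsto.comp
        (tendsto_id.div_const r)
    rw [div_self hr.ne', Real.log_one] at hlim
    have hη' : 0 < 2 * (η / 4) * (η / 16) := by positivity
    obtain ⟨δ, hδ, hball⟩ := Metric.eventually_nhds_iff.1 (hlim.eventually (gt_mem_nhds hη'))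
    obtain ⟨q, hq1, hq2⟩ := exists_rat_btwn (show r < r + δ by linarith)
    have hq0 : 0 < q := by exact_mod_cast hr.trans hq1
    have hosc : ∀ n, F n r - F n q ≤ η / 8 + η / 16 := fun n => by
      have h1 := (hF n).osc r q (η / 4) hr hq1.le (by positivity)
      have h2 := hball (show dist (q : ℝ) r < δ by
        rw [Real.dist_eq, abs_of_pos (sub_pos.2 hq1)]; linarith)
      have h3 : Real.log (q / r) / (2 * (η / 4)) ≤ η / 16 := by
        rw [div_le_iff₀ (by positivity)]
        linarith
      linarith
    have hmono : ∀ n, 0 ≤ F n r - F n q := fun n => sub_nonneg.2 ((hF n).anti r q hr hq1.le)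
    obtain ⟨N, hN⟩ := Metric.cauchySeq_iff'.1 (hg ⟨q, hq0⟩).cauchySeq (η / 4) (by positivity)
    refine ⟨N, fun n hn => ?_⟩
    have h1 := hN n hn
    simp only [Function.comp_apply, Real.dist_eq] at h1 ⊢
    rw [abs_lt] at h1 ⊢
    constructor <;> linarith [hosc (φ n), hosc (φ N), hmono (φ n), hmono (φ N)]
  choose! f hf using fun r hr => cauchySeq_tendsto_of_complete (hcau r hr)
  exact ⟨φ, hφ, f, hf⟩

theorem HasProfileBounds.norm_quartic_le (hf : HasProfileBounds f) {r : ℝ} (hr : 0 < r) :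
    ‖r * f r ^ 4‖ ≤ quarticMajorant r := by
  rw [Real.norm_of_nonneg (by positivity)]
  exact hf.quartic r hr

/-- If `ProfileGN C₁` fails there is a maximizing sequence for the best constant. -/
theorem exists_maximizing_sequence {C₁ : ℝ} (hC₁ : 0 < C₁) (h : ¬ ProfileGN C₁) :
    ∃ L, C₁ < L ∧ ProfileGN L ∧ ∃ F : ℕ → ℝ → ℝ, (∀ n, IsNormalized (F n)) ∧
      Tendsto (fun n => ∫ r in Set.Ioi (0 : ℝ), r * F n r ^ 4) atTop (𝓝 L) := by
  set S : Set ℝ := {y | ∃ f, IsNormalized f ∧ y = ∫ r in Set.Ioi (0 : ℝ), r * f r ^ 4} with hS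
  have hbdd : BddAbove S := by
    refine ⟨∫ r in Set.Ioi (0 : ℝ), quarticMajorant r, ?_⟩
    rintro _ ⟨f, hf, rfl⟩
    exact setIntegral_mono_on (hf.integrableOn_pow four_ne_zero) integrableOn_quarticMajorant
      measurableSet_Ioi fun r hr => hf.hasProfileBounds.quartic r hr
  have hscale : ∀ f, IsProfile f → ∀ C, 0 ≤ C → (∀ y ∈ S, y ≤ C) →
      ∫ r in Set.Ioi (0 : ℝ), r * f r ^ 4 ≤
        C * (∫ r in Set.Ioi (0 : ℝ), r * deriv f r ^ 2) * ∫ r in Set.Ioi (0 : ℝ), r * f r ^ 2 := by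
    intro f hf C hC0 hC
    have hM0 : 0 ≤ ∫ r in Set.Ioi (0 : ℝ), r * f r ^ 2 :=
      setIntegral_nonneg measurableSet_Ioi fun r (hr : 0 < r) => by positivity
    have hD0 : 0 ≤ ∫ r in Set.Ioi (0 : ℝ), r * deriv f r ^ 2 :=
      setIntegral_nonneg measurableSet_Ioi fun r (hr : 0 < r) => by positivity
    by_cases h0 : ∫ r in Set.Ioi (0 : ℝ), r * f r ^ 4 = 0
    · rw [h0]; positivity
    · obtain ⟨g, hg, hgf⟩ := hf.exists_normalized h0
      rw [hgf]
      gcongr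
      exact hC _ ⟨g, hg, rfl⟩
  have hex : ∃ y ∈ S, C₁ < y := by
    by_contra! hcon
    exact h fun f hf => hscale f hf C₁ hC₁.le hcon
  obtain ⟨y, hyS, hy⟩ := hex
  have hlt : C₁ < sSup S := hy.trans_le (le_csSup hbdd hyS)
  obtain ⟨w, -, hw, hwS⟩ := exists_seq_tendsto_sSup ⟨y, hyS⟩ hbdd
  choose F hF hFw using hwS
  refine ⟨sSup S, hlt, fun f hf => hscale f hf _ (hC₁.trans hlt).le fun y hy => le_csSup hbdd hy,
    F, hF, ?_⟩
  exact hw.congr hFw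

end Maximizers

theorem integral_le_of_tendsto_of_nonneg {α : Type*} [MeasurableSpace α] {μ : Measure α}
    {g : ℕ → α → ℝ} {g₀ : α → ℝ} (hg : ∀ n, Integrable (g n) μ) (hg0 : ∀ n, 0 ≤ᵐ[μ] g n)
    (hlim : ∀ᵐ x ∂μ, Tendsto (fun n => g n x) atTop (𝓝 (g₀ x))) {c : ℕ → ℝ} {c₀ : ℝ}
    (hc : ∀ n, ∫ x, g n x ∂μ ≤ c n) (hc₀ : Tendsto c atTop (𝓝 c₀)) :
    Integrable g₀ μ ∧ ∫ x, g₀ x ∂μ ≤ c₀ := by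
  have hm : AEStronglyMeasurable g₀ μ :=
    aestronglyMeasurable_of_tendsto_ae atTop (fun n => (hg n).aestronglyMeasurable) hlim
  have hnn : 0 ≤ᵐ[μ] g₀ := by
    filter_upwards [hlim, ae_all_iff.2 hg0] with x hx h0
    exact ge_of_tendsto' hx h0
  have hc0 : 0 ≤ c₀ := ge_of_tendsto' hc₀ fun n => (integral_nonneg_of_ae (hg0 n)).trans (hc n)
  have key : ∫⁻ x, ENNReal.ofReal (g₀ x) ∂μ ≤ ENNReal.ofReal c₀ := by
    calc ∫⁻ x, ENNReal.ofReal (g₀ x) ∂μ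
        = ∫⁻ x, liminf (fun n => ENNReal.ofReal (g n x)) atTop ∂μ := by
          refine lintegral_congr_ae ?_
          filter_upwards [hlim] with x hx
          exact (((ENNReal.continuous_ofReal.tendsto _).comp hx).liminf_eq).symm
      _ ≤ liminf (fun n => ∫⁻ x, ENNReal.ofReal (g n x) ∂μ) atTop :=
          lintegral_liminf_le' fun n => (hg n).aemeasurable.ennreal_ofReal
      _ ≤ liminf (fun n => ENNReal.ofReal (c n)) atTop := by
          refine liminf_le_liminf (Eventually.of_forall fun n => ?_)
          rw [← ofReal_integral_eq_lintegral_ofReal (hg n) (hg0 n)]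
          exact ENNReal.ofReal_le_ofReal (hc n)
      _ = ENNReal.ofReal c₀ := ((ENNReal.continuous_ofReal.tendsto _).comp hc₀).liminf_eq
  have hi : Integrable g₀ μ := by
    refine ⟨hm, ?_⟩
    rw [hasFiniteIntegral_iff_ofReal hnn]
    exact key.trans_lt ENNReal.ofReal_lt_top
  refine ⟨hi, ?_⟩
  rw [← ofReal_integral_eq_lintegral_ofReal hi hnn] at key
  exact (ENNReal.ofReal_le_ofReal_iff hc0).1 key

/-- The truncated fundamental solution used as a test function. -/
noncomputable def logTest (a b r : ℝ) : ℝ := Real.log b - Real.log (min b (max a r))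

section LogTest

variable {a b : ℝ}

theorem logTest_of_le (hab : a < b) {r : ℝ} (hr : r ≤ a) :
    logTest a b r = Real.log b - Real.log a := by
  rw [logTest, max_eq_left hr, min_eq_right hab.le]

theorem logTest_of_mem (hr : r ∈ Set.Icc a b) : logTest a b r = Real.log b - Real.log r := by
  rw [logTest, max_eq_right hr.1, min_eq_right hr.2]

theorem logTest_of_ge {r : ℝ} (hr : b ≤ r) : logTest a b r = 0 := by
  rw [logTest, min_eq_left (hr.trans (le_max_right _ _)), sub_self]

theorem logTest_nonneg (ha : 0 < a) (hab : a < b) (r : ℝ) : 0 ≤ logTest a b r :=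
  sub_nonneg.2 (Real.log_le_log (lt_min (ha.trans hab) (ha.trans_le (le_max_left _ _)))
    (min_le_left _ _))

theorem logTest_le (ha : 0 < a) (hab : a < b) (r : ℝ) :
    logTest a b r ≤ Real.log b - Real.log a :=
  sub_le_sub_left (Real.log_le_log ha (le_min hab.le (le_max_left _ _))) _

theorem lipschitzWith_logTest (ha : 0 < a) (hab : a < b) :
    LipschitzWith (Real.toNNReal a⁻¹) (logTest a b) := by
  have hlog : ∀ x y, a ≤ x → x ≤ y → |Real.log x - Real.log y| ≤ a⁻¹ * |x - y| := by
    intro x y hx hxy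
    have hx0 : 0 < x := ha.trans_le hx
    rw [abs_sub_comm, abs_of_nonneg (sub_nonneg.2 (Real.log_le_log hx0 hxy)), abs_sub_comm,
      abs_of_nonneg (sub_nonneg.2 hxy), ← Real.log_div (hx0.trans_le hxy).ne' hx0.ne']
    calc _ ≤ y / x - 1 := Real.log_le_sub_one_of_pos (div_pos (hx0.trans_le hxy) hx0)
      _ = x⁻¹ * (y - x) := by field_simp
      _ ≤ _ := by gcongr
  have hclamp : LipschitzWith 1 fun r => min b (max a r) :=
    (LipschitzWith.id.const_max a).const_min b
  refine LipschitzWith.of_dist_le_mul fun x y => ?_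
  have h1 := hclamp.dist_le_mul x y
  rw [NNReal.coe_one, one_mul, Real.dist_eq, Real.dist_eq] at h1
  rw [Real.dist_eq, Real.dist_eq, Real.coe_toNNReal _ (by positivity)]
  have h2 : ∀ x, a ≤ min b (max a x) := fun x => le_min hab.le (le_max_left _ _)
  have h3 : |Real.log (min b (max a x)) - Real.log (min b (max a y))|
      ≤ a⁻¹ * |min b (max a x) - min b (max a y)| := by
    rcases le_total (min b (max a x)) (min b (max a y)) with h | h
    · exact hlog _ _ (h2 x) h
    · rw [abs_sub_comm, abs_sub_comm (min b (max a x))]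
      exact hlog _ _ (h2 y) h
  calc |logTest a b x - logTest a b y|
      = |Real.log (min b (max a x)) - Real.log (min b (max a y))| := by
        rw [abs_sub_comm, logTest, logTest]; congr 1; ring
    _ ≤ _ := h3
    _ ≤ _ := by gcongr

theorem deriv_logTest (ha : 0 < a) (hab : a < b) {r : ℝ} (hra : r ≠ a) (hrb : r ≠ b) :
    deriv (logTest a b) r = (Set.Ioo a b).indicator (fun r => -r⁻¹) r := by
  rcases hra.lt_or_gt with h | h
  · rw [Set.indicator_of_notMem (fun h' => h.not_gt h'.1)]
    have : logTest a b =ᶠ[𝓝 r] fun _ => Real.log b - Real.log a := by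
      filter_upwards [gt_mem_nhds h] with s hs using logTest_of_le hab hs.le
    rw [this.deriv_eq, deriv_const]
  rcases hrb.lt_or_gt with h' | h'
  · rw [Set.indicator_of_mem (show r ∈ Set.Ioo a b from ⟨h, h'⟩)]
    have : logTest a b =ᶠ[𝓝 r] fun s => Real.log b - Real.log s := by
      filter_upwards [lt_mem_nhds h, gt_mem_nhds h'] with s hs hs'
        using logTest_of_mem ⟨hs.le, hs'.le⟩
    rw [this.deriv_eq]
    exact ((Real.hasDerivAt_log (ha.trans h).ne').const_sub _).deriv
  · rw [Set.indicator_of_notMem (fun h'' => h'.not_gt h''.2)]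
    have : logTest a b =ᶠ[𝓝 r] fun _ => 0 := by
      filter_upwards [lt_mem_nhds h'] with s hs using logTest_of_ge hs.le
    rw [this.deriv_eq, deriv_const]

theorem integral_deriv_mul_deriv_logTest (ha : 0 < a) (hab : a < b) {f : ℝ → ℝ} {K : NNReal}
    (hK : LipschitzWith K f) :
    ∫ r in Set.Ioi (0 : ℝ), r * (deriv f r * deriv (logTest a b) r) = f a - f b := by
  have hne : ∀ c : ℝ, ∀ᵐ r : ℝ ∂volume.restrict (Set.Ioi 0), r ≠ c := fun c =>
    ae_restrict_of_ae (by simp [ae_iff])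
  calc ∫ r in Set.Ioi (0 : ℝ), r * (deriv f r * deriv (logTest a b) r)
      = ∫ r in Set.Ioi (0 : ℝ), (Set.Ioo a b).indicator (fun r => -deriv f r) r := by
        refine integral_congr_ae ?_
        filter_upwards [hne a, hne b, ae_restrict_mem measurableSet_Ioi] with r h1 h2 h3
        have h3' : r ≠ 0 := (show 0 < r from h3).ne'
        rw [deriv_logTest ha hab h1 h2]
        by_cases h : r ∈ Set.Ioo a b
        · rw [Set.indicator_of_mem h, Set.indicator_of_mem h]
          field_simp
        · rw [Set.indicator_of_notMem h, Set.indicator_of_notMem h]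
          ring
    _ = ∫ r in a..b, -deriv f r := by
        rw [setIntegral_indicator measurableSet_Ioo, intervalIntegral.integral_of_le hab.le,
          integral_Ioc_eq_integral_Ioo, Set.inter_eq_self_of_subset_right]
        exact fun r hr => ha.trans hr.1
    _ = f a - f b := by
        rw [intervalIntegral.integral_neg, hK.integral_deriv]; ring

end LogTest

theorem integral_add_mul_add_mul {α : Type*} [MeasurableSpace α] {μ : Measure α} {f g h : α → ℝ}
    (hf : Integrable f μ) (hg : Integrable g μ) (hh : Integrable h μ) (c d : ℝ) :
    ∫ x, (f x + c * g x + d * h x) ∂μ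
      = ∫ x, f x ∂μ + c * ∫ x, g x ∂μ + d * ∫ x, h x ∂μ := by
  have h1 : Integrable (fun x => f x + c * g x) μ := hf.add (hg.const_mul c)
  rw [integral_add h1 (hh.const_mul d), integral_add hf (hg.const_mul c), integral_const_mul,
    integral_const_mul]

theorem IsNormalized.variation_le {L : ℝ} (hL : ProfileGN L) (hL0 : 0 ≤ L) {f φ : ℝ → ℝ}
    (hf : IsNormalized f) {K : NNReal} (hK : LipschitzWith K φ) {R C : ℝ}
    (hR : ∀ r, R ≤ r → φ r = 0) (hC : ∀ r, |φ r| ≤ C) (ε : ℝ) :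
    (∫ r in Set.Ioi (0 : ℝ), r * f r ^ 4) + 4 * ε * (∫ r in Set.Ioi (0 : ℝ), r * (f r ^ 3 * φ r)) ≤
      L * (1 + 2 * ε * (∫ r in Set.Ioi (0 : ℝ), r * (deriv f r * deriv φ r))
          + ε ^ 2 * ∫ r in Set.Ioi (0 : ℝ), r * deriv φ r ^ 2)
        * (1 + 2 * ε * (∫ r in Set.Ioi (0 : ℝ), r * (f r * φ r))
          + ε ^ 2 * ∫ r in Set.Ioi (0 : ℝ), r * φ r ^ 2) := by
  obtain ⟨K', hK'⟩ := hf.lipschitz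
  obtain ⟨R', hR'⟩ := hf.vanishing
  have hC0 : 0 ≤ C := (abs_nonneg _).trans (hC 0)
  have hfc := hf.continuous
  have hφc := hK.continuous
  have hg : LipschitzWith (K' + (Real.toNNReal |ε|) * K) fun r => f r + ε * φ r := by
    refine hK'.add (LipschitzWith.of_dist_le_mul fun x y => ?_)
    have := hK.dist_le_mul x y
    rw [Real.dist_eq] at this
    rw [Real.dist_eq, ← mul_sub, abs_mul, NNReal.coe_mul, Real.coe_toNNReal _ (abs_nonneg _),
      mul_assoc]
    gcongr
  have hgR : ∀ r, max R R' ≤ r → f r + ε * φ r = 0 := fun r hr => by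
    rw [hR' r ((le_max_right _ _).trans hr), hR r ((le_max_left _ _).trans hr)]; ring
  have hgC : ∀ r, 0 < r → |f r + ε * φ r| ≤ f 0 + |ε| * C := fun r hr => by
    refine (abs_add_le _ _).trans ?_
    rw [abs_mul]
    have := hf.abs_le hr.le
    have := hC r
    gcongr
  have hmain := hL.of_lipschitz hL0 hg hgR
  have i1 : IntegrableOn (fun r => r * (f r ^ 3 * φ r)) (Set.Ioi 0) := by
    refine integrableOn_of_vanishing (R := R) (C := f 0 ^ 3 * C) (fun r hr => by simp [hR r hr])
      (fun r hr => ?_) (by fun_prop : Continuous fun r => f r ^ 3 * φ r).measurable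
    rw [abs_mul, abs_pow]
    exact mul_le_mul (pow_le_pow_left₀ (abs_nonneg _) (hf.abs_le hr.le) 3) (hC r) (abs_nonneg _)
      (pow_nonneg (hf.nonneg 0) 3)
  have i2 : IntegrableOn (fun r => r * (f r * φ r)) (Set.Ioi 0) := by
    refine integrableOn_of_vanishing (R := R) (C := f 0 * C) (fun r hr => by simp [hR r hr])
      (fun r hr => ?_) (by fun_prop : Continuous fun r => f r * φ r).measurable
    rw [abs_mul]
    exact mul_le_mul (hf.abs_le hr.le) (hC r) (abs_nonneg _) (hf.nonneg 0)
  have i3 : IntegrableOn (fun r => r * φ r ^ 2) (Set.Ioi 0) := by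
    refine integrableOn_of_vanishing (R := R) (C := C ^ 2) (fun r hr => by simp [hR r hr])
      (fun r hr => ?_) (by fun_prop : Continuous fun r => φ r ^ 2).measurable
    rw [abs_pow]
    exact pow_le_pow_left₀ (abs_nonneg _) (hC r) 2
  have i4 : IntegrableOn (fun r => r * (deriv f r * deriv φ r)) (Set.Ioi 0) := by
    refine integrableOn_of_vanishing (R := R + 1) (C := K' * K) (fun r hr => by
      simp [deriv_eq_zero_of_vanishing hR hr])
      (fun r hr => ?_) ((measurable_deriv f).mul (measurable_deriv φ))
    rw [abs_mul]
    exact mul_le_mul (abs_deriv_le_of_lipschitz hK' r) (abs_deriv_le_of_lipschitz hK r)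
      (abs_nonneg _) K'.2
  have i5 := integrableOn_mul_sq_deriv hR hK
  have i6 : IntegrableOn (fun r => r * (f r + ε * φ r) ^ 4) (Set.Ioi 0) := by
    refine integrableOn_of_vanishing (R := max R R') (C := (f 0 + |ε| * C) ^ 4) (fun r hr => by simp [hgR r hr])
      (fun r hr => ?_) (by fun_prop : Continuous fun r => (f r + ε * φ r) ^ 4).measurable
    rw [abs_pow]
    exact pow_le_pow_left₀ (abs_nonneg _) (hgC r hr) 4
  have e1 : ∫ r in Set.Ioi (0 : ℝ), r * deriv (fun r => f r + ε * φ r) r ^ 2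
      = 1 + 2 * ε * (∫ r in Set.Ioi (0 : ℝ), r * (deriv f r * deriv φ r))
          + ε ^ 2 * ∫ r in Set.Ioi (0 : ℝ), r * deriv φ r ^ 2 := by
    rw [← hf.energy, ← integral_add_mul_add_mul hf.integrableOn_sq_deriv i4 i5]
    refine integral_congr_ae ?_
    filter_upwards [ae_restrict_of_ae hK'.ae_differentiableAt_of_real,
      ae_restrict_of_ae hK.ae_differentiableAt_of_real] with r h1 h2
    have h3 : deriv (fun r => f r + ε * φ r) r = deriv f r + ε * deriv φ r :=
      (h1.hasDerivAt.add (h2.hasDerivAt.const_mul ε)).deriv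
    rw [h3]
    ring
  have e2 : ∫ r in Set.Ioi (0 : ℝ), r * (f r + ε * φ r) ^ 2
      = 1 + 2 * ε * (∫ r in Set.Ioi (0 : ℝ), r * (f r * φ r))
          + ε ^ 2 * ∫ r in Set.Ioi (0 : ℝ), r * φ r ^ 2 := by
    rw [← hf.mass, ← integral_add_mul_add_mul (hf.integrableOn_pow two_ne_zero) i2 i3]
    congr 1 with r
    ring
  rw [e1, e2] at hmain
  refine le_trans ?_ hmain
  rw [← integral_const_mul, ← integral_add (hf.integrableOn_pow four_ne_zero) (i1.const_mul _)]
  refine setIntegral_mono_on ((hf.integrableOn_pow four_ne_zero).add (i1.const_mul _)) i6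
    measurableSet_Ioi fun r (hr : 0 < r) => ?_
  have : (f r + ε * φ r) ^ 4 - f r ^ 4 - 4 * ε * (f r ^ 3 * φ r)
      = (ε * φ r) ^ 2 * ((ε * φ r + 2 * f r) ^ 2 + 2 * f r ^ 2) := by ring
  have h0 : 0 ≤ (ε * φ r) ^ 2 * ((ε * φ r + 2 * f r) ^ 2 + 2 * f r ^ 2) := by positivity
  nlinarith

theorem eq_of_forall_le_mul {L A B C D M : ℝ}
    (h : ∀ ε : ℝ, L + 4 * ε * A ≤ L * (1 + 2 * ε * B + ε ^ 2 * D) * (1 + 2 * ε * C + ε ^ 2 * M)) :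
    2 * A = L * (B + C) := by
  have hd : HasDerivAt (fun ε : ℝ => L * (1 + 2 * ε * B + ε ^ 2 * D) * (1 + 2 * ε * C + ε ^ 2 * M)
      - (L + 4 * ε * A)) (2 * L * (B + C) - 4 * A) 0 := by
    have hl : ∀ c : ℝ, HasDerivAt (fun ε : ℝ => 2 * ε * c) (2 * c) 0 := fun c => by
      simpa using ((hasDerivAt_id (0 : ℝ)).const_mul 2).mul_const c
    have hq : ∀ c : ℝ, HasDerivAt (fun ε : ℝ => ε ^ 2 * c) 0 0 := fun c => by
      simpa using ((hasDerivAt_id (0 : ℝ)).pow 2).mul_const c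
    have h1 : HasDerivAt (fun ε : ℝ => 4 * ε * A) (4 * A) 0 := by
      simpa using ((hasDerivAt_id (0 : ℝ)).const_mul 4).mul_const A
    have h2 := (((((hl B).const_add 1).add (hq D)).const_mul L).mul
      (((hl C).const_add 1).add (hq M))).sub (h1.const_add L)
    refine h2.congr_deriv ?_
    simp
    ring
  have hmin : IsLocalMin (fun ε : ℝ => L * (1 + 2 * ε * B + ε ^ 2 * D) *
      (1 + 2 * ε * C + ε ^ 2 * M) - (L + 4 * ε * A)) 0 := by
    refine Eventually.of_forall fun ε => ?_
    have := h ε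
    simp only [mul_zero, zero_mul, add_zero, mul_one, ne_eq, OfNat.ofNat_ne_zero,
      not_false_eq_true, zero_pow, sub_self]
    linarith
  have := hmin.hasDerivAt_eq_zero hd
  linarith

theorem HasProfileBounds.tendsto_integral {F : ℕ → ℝ → ℝ} {f : ℝ → ℝ}
    (hF : ∀ n, HasProfileBounds (F n)) (hFc : ∀ n, Continuous (F n))
    (h : ∀ r, 0 < r → Tendsto (fun n => F n r) atTop (𝓝 (f r))) {a b : ℝ} (ha : 0 < a)
    (hab : a < b) :
    Tendsto (fun n => ∫ r in Set.Ioi (0 : ℝ), r * (F n r * logTest a b r)) atTop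
        (𝓝 (∫ r in Set.Ioi (0 : ℝ), r * (f r * logTest a b r))) ∧
      IntegrableOn (fun r => r * (f r * logTest a b r)) (Set.Ioi 0) ∧
      Tendsto (fun n => ∫ r in Set.Ioi (0 : ℝ), r * (F n r ^ 3 * logTest a b r)) atTop
        (𝓝 (∫ r in Set.Ioi (0 : ℝ), r * (f r ^ 3 * logTest a b r))) ∧
      IntegrableOn (fun r => r * (f r ^ 3 * logTest a b r)) (Set.Ioi 0) := by
  set C := Real.log b - Real.log a with hC
  have hφ := lipschitzWith_logTest ha hab
  have hC0 : 0 ≤ C := (logTest_nonneg ha hab 0).trans (logTest_le ha hab 0)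
  have hb0 : 0 < b := ha.trans hab
  have hi : ∀ c : ℝ, Integrable ((Set.Ioo 0 b).indicator fun _ => c)
      (volume.restrict (Set.Ioi 0)) := fun c => by
    refine Integrable.integrableOn ?_
    rw [integrable_indicator_iff measurableSet_Ioo]
    exact integrableOn_const measure_Ioo_lt_top.ne
  have hm := integrableOn_quarticMajorant
  have key1 : ∀ g, HasProfileBounds g → ∀ r, 0 < r →
      ‖r * (g r * logTest a b r)‖ ≤ (Set.Ioo 0 b).indicator (fun _ => 2 * C) r := by
    intro g hg r hr
    have h0 := logTest_nonneg ha hab r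
    have h1 := logTest_le ha hab r
    have h2 := hg.nonneg r hr
    rcases lt_or_ge r b with h | h
    · rw [Set.indicator_of_mem (show r ∈ Set.Ioo 0 b from ⟨hr, h⟩),
        Real.norm_of_nonneg (by positivity), ← mul_assoc]
      exact mul_le_mul (hg.le r hr) h1 h0 zero_le_two
    · rw [logTest_of_ge h]
      simp only [mul_zero, norm_zero]
      exact Set.indicator_nonneg (fun _ _ => by positivity) r
  have key2 : ∀ g, HasProfileBounds g → ∀ r, 0 < r →
      ‖r * (g r ^ 3 * logTest a b r)‖
        ≤ (Set.Ioo 0 b).indicator (fun _ => b * C) r + C * quarticMajorant r := by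
    intro g hg r hr
    have h0 := logTest_nonneg ha hab r
    have h1 := logTest_le ha hab r
    have h2 := hg.nonneg r hr
    have h3 := hg.quartic r hr
    have h4 : 0 ≤ r * g r ^ 4 := by positivity
    rcases lt_or_ge r b with h | h
    · rw [Set.indicator_of_mem (show r ∈ Set.Ioo 0 b from ⟨hr, h⟩),
        Real.norm_of_nonneg (by positivity)]
      have h5 : g r ^ 3 ≤ 1 + g r ^ 4 := by
        nlinarith [sq_nonneg (g r ^ 2 - g r), sq_nonneg (g r - 1), sq_nonneg (g r ^ 2 - 1)]
      calc r * (g r ^ 3 * logTest a b r) ≤ r * ((1 + g r ^ 4) * C) := by gcongr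
        _ = r * C + C * (r * g r ^ 4) := by ring
        _ ≤ _ := by gcongr
    · rw [logTest_of_ge h]
      simp only [mul_zero, norm_zero]
      refine add_nonneg (Set.indicator_nonneg (fun _ _ => by positivity) r) ?_
      exact mul_nonneg hC0 (h4.trans h3)
  have hfb := HasProfileBounds.of_tendsto hF h
  have hφc := hφ.continuous
  have hfm : AEStronglyMeasurable f (volume.restrict (Set.Ioi 0)) :=
    aestronglyMeasurable_of_tendsto_ae atTop (fun n => (hFc n).aestronglyMeasurable)
      ((ae_restrict_mem measurableSet_Ioi).mono fun r hr => h r hr)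
  have hr0 : ∀ᵐ r : ℝ ∂volume.restrict (Set.Ioi 0), 0 < r := ae_restrict_mem measurableSet_Ioi
  refine ⟨?_, ?_, ?_, ?_⟩
  · refine tendsto_integral_of_dominated_convergence _ (fun n => ?_) (hi (2 * C))
      (fun n => hr0.mono fun r hr => key1 _ (hF n) r hr)
      (hr0.mono fun r hr => ((h r hr).mul_const _).const_mul _)
    have := hFc n
    exact (by fun_prop : Continuous fun r => r * (F n r * logTest a b r)).aestronglyMeasurable
  · exact (hi (2 * C)).mono' (continuous_id.aestronglyMeasurable.mul
      (hfm.mul hφc.aestronglyMeasurable)) (hr0.mono fun r hr => key1 _ hfb r hr)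
  · refine tendsto_integral_of_dominated_convergence _ (fun n => ?_)
      ((hi (b * C)).add (hm.const_mul C))
      (fun n => hr0.mono fun r hr => key2 _ (hF n) r hr)
      (hr0.mono fun r hr => (((h r hr).pow 3).mul_const _).const_mul _)
    have := hFc n
    exact (by fun_prop : Continuous fun r => r * (F n r ^ 3 * logTest a b r)).aestronglyMeasurable
  · exact ((hi (b * C)).add (hm.const_mul C)).mono' (continuous_id.aestronglyMeasurable.mul
      ((hfm.pow 3).mul hφc.aestronglyMeasurable)) (hr0.mono fun r hr => key2 _ hfb r hr)

/-- A maximizer of the Weinstein functional among radial profiles, with its Euler–Lagrange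
equation in integrated form. -/
theorem exists_maximizer {C₁ : ℝ} (hC₁ : 0 < C₁) (hnot : ¬ ProfileGN C₁) :
    ∃ L, C₁ < L ∧ ∃ f, HasProfileBounds f ∧
      IntegrableOn (fun r => r * f r ^ 2) (Set.Ioi 0) ∧
      ∫ r in Set.Ioi (0 : ℝ), r * f r ^ 2 ≤ 1 ∧
      IntegrableOn (fun r => r * f r ^ 4) (Set.Ioi 0) ∧
      ∫ r in Set.Ioi (0 : ℝ), r * f r ^ 4 = L ∧
      ∀ a b, 0 < a → a < b →
        f a - f b = ∫ r in Set.Ioi (0 : ℝ), (r * (2 / L * f r ^ 3 - f r)) * logTest a b r := by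
  obtain ⟨L, hL, hGN, F', hF', hN'⟩ := exists_maximizing_sequence hC₁ hnot
  have hL0 : 0 < L := hC₁.trans hL
  obtain ⟨ψ, hψ, f, hf⟩ := exists_subseq_tendsto fun n => (hF' n).hasProfileBounds
  set F : ℕ → ℝ → ℝ := fun n => F' (ψ n) with hFdef
  have hF : ∀ n, IsNormalized (F n) := fun n => hF' _
  have hFb : ∀ n, HasProfileBounds (F n) := fun n => (hF n).hasProfileBounds
  have hN : Tendsto (fun n => ∫ r in Set.Ioi (0 : ℝ), r * F n r ^ 4) atTop (𝓝 L) :=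
    hN'.comp hψ.tendsto_atTop
  have hfb := HasProfileBounds.of_tendsto hFb hf
  have hr0 : ∀ᵐ r : ℝ ∂volume.restrict (Set.Ioi 0), 0 < r := ae_restrict_mem measurableSet_Ioi
  have hfm : AEStronglyMeasurable f (volume.restrict (Set.Ioi 0)) :=
    aestronglyMeasurable_of_tendsto_ae atTop (fun n => (hF n).continuous.aestronglyMeasurable)
      (hr0.mono fun r hr => hf r hr)
  have hN4 : ∫ r in Set.Ioi (0 : ℝ), r * f r ^ 4 = L := by
    refine tendsto_nhds_unique (tendsto_integral_of_dominated_convergence quarticMajorant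
      (fun n => ?_) integrableOn_quarticMajorant
      (fun n => hr0.mono fun r hr => (hFb n).norm_quartic_le hr)
      (hr0.mono fun r hr => ((hf r hr).pow 4).const_mul _)) hN
    have := (hF n).continuous
    exact (by fun_prop : Continuous fun r => r * F n r ^ 4).aestronglyMeasurable
  have hM := integral_le_of_tendsto_of_nonneg (μ := volume.restrict (Set.Ioi (0 : ℝ)))
    (g := fun n r => r * F n r ^ 2) (g₀ := fun r => r * f r ^ 2)
    (fun n => (hF n).integrableOn_pow two_ne_zero)
    (fun n => hr0.mono fun r hr => by simp only [Pi.zero_apply]; positivity)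
    (hr0.mono fun r hr => ((hf r hr).pow 2).const_mul _) (fun n => (hF n).mass.le)
    tendsto_const_nhds
  refine ⟨L, hL, f, hfb, hM.1, hM.2, integrableOn_quarticMajorant.mono'
    (continuous_id.aestronglyMeasurable.mul (hfm.pow 4))
    (hr0.mono fun r hr => hfb.norm_quartic_le hr), hN4, fun a b ha hab => ?_⟩
  obtain ⟨h1, i1, h3, i3⟩ := HasProfileBounds.tendsto_integral hFb (fun n => (hF n).continuous)
    hf ha hab
  have hb0 : 0 < b := ha.trans hab
  have hφ := lipschitzWith_logTest ha hab
  have h5 : Tendsto (fun n => ∫ r in Set.Ioi (0 : ℝ),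
      r * (deriv (F n) r * deriv (logTest a b) r)) atTop (𝓝 (f a - f b)) := by
    refine ((hf a ha).sub (hf b hb0)).congr fun n => ?_
    obtain ⟨K, hK⟩ := (hF n).lipschitz
    exact (integral_deriv_mul_deriv_logTest ha hab hK).symm
  have h6 := eq_of_forall_le_mul (L := L) fun ε =>
    le_of_tendsto_of_tendsto' (hN.add (h3.const_mul (4 * ε)))
      (((((h5.const_mul (2 * ε)).const_add 1).add_const (ε ^ 2 *
        ∫ r in Set.Ioi (0 : ℝ), r * deriv (logTest a b) r ^ 2)).const_mul L).mul
        (((h1.const_mul (2 * ε)).const_add 1).add_const (ε ^ 2 *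
        ∫ r in Set.Ioi (0 : ℝ), r * logTest a b r ^ 2)))
      fun n => (hF n).variation_le hGN hL0.le hφ (fun r hr => logTest_of_ge hr)
        (fun r => by
          rw [abs_of_nonneg (logTest_nonneg ha hab r)]
          exact logTest_le ha hab r) ε
  have h7 : ∫ r in Set.Ioi (0 : ℝ), (r * (2 / L * f r ^ 3 - f r)) * logTest a b r
      = 2 / L * (∫ r in Set.Ioi (0 : ℝ), r * (f r ^ 3 * logTest a b r))
        - ∫ r in Set.Ioi (0 : ℝ), r * (f r * logTest a b r) := by
    rw [← integral_const_mul, ← integral_sub (i3.const_mul _) i1]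
    congr 1 with r
    ring
  have h8 : 2 / L * (∫ r in Set.Ioi (0 : ℝ), r * (f r ^ 3 * logTest a b r))
      = (f a - f b) + ∫ r in Set.Ioi (0 : ℝ), r * (f r * logTest a b r) := by
    rw [div_mul_eq_mul_div, h6, mul_div_cancel_left₀ _ hL0.ne']
  linarith

theorem quarticMajorant_le (r : ℝ) : quarticMajorant r ≤ 16 := by
  rw [quarticMajorant]
  split_ifs with h
  · exact le_rfl
  · have : r ^ (-3 : ℝ) ≤ 1 := Real.rpow_le_one_of_one_le_of_nonpos (not_le.1 h).le (by norm_num)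
    linarith

theorem HasProfileBounds.continuousOn {f : ℝ → ℝ} (hf : HasProfileBounds f) :
    ContinuousOn f (Set.Ioi 0) := by
  intro x hx
  have hx : 0 < x := hx
  refine ContinuousAt.continuousWithinAt ?_
  rw [Metric.continuousAt_iff]
  intro ε hε
  have hl : Tendsto (fun y => |Real.log y - Real.log x|) (𝓝 x) (𝓝 0) := by
    simpa using ((Real.continuousAt_log hx.ne').tendsto.sub_const (Real.log x)).abs
  have h1 : ∀ᶠ y in 𝓝 x, |Real.log y - Real.log x| < ε ^ 2 := hl.eventually_lt_const (by positivity)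
  obtain ⟨δ, hδ, h2⟩ := Metric.eventually_nhds_iff.1 (h1.and (lt_mem_nhds hx))
  refine ⟨δ, hδ, fun {y} hy => ?_⟩
  obtain ⟨h3, hy0⟩ := h2 hy
  have key : ∀ a b, 0 < a → a ≤ b → Real.log b - Real.log a < ε ^ 2 → |f a - f b| < ε := by
    intro a b ha hab h
    rw [abs_of_nonneg (sub_nonneg.2 (hf.anti a b ha hab))]
    have h4 := hf.osc a b ε ha hab hε
    rw [Real.log_div (ha.trans_le hab).ne' ha.ne'] at h4
    have : (Real.log b - Real.log a) / (2 * ε) < ε / 2 := by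
      rw [div_lt_iff₀ (by positivity)]
      nlinarith
    linarith
  rw [Real.dist_eq]
  rcases le_total y x with h | h
  · exact key y x hy0 h (by linarith [neg_le_abs (Real.log y - Real.log x)])
  · rw [abs_sub_comm]
    exact key x y hx h ((le_abs_self _).trans_lt h3)

/-- The Euler–Lagrange equation of the radial problem in differential form. -/
theorem HasProfileBounds.exists_hasDerivAt {f : ℝ → ℝ} (hf : HasProfileBounds f) {κ : ℝ}
    (hκ : 0 ≤ κ)
    (hEL : ∀ a b, 0 < a → a < b →
      f a - f b = ∫ r in Set.Ioi (0 : ℝ), (r * (κ * f r ^ 3 - f r)) * logTest a b r) :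
    ∃ p : ℝ → ℝ, (∀ r, 0 < r → HasDerivAt f (p r) r) ∧
      (∀ r, 0 < r → HasDerivAt p (-p r / r + f r - κ * f r ^ 3) r) ∧
      Tendsto p (𝓝[>] 0) (𝓝 0) ∧ ∃ B, ∀ r, 0 < r → f r ≤ B := by
  set h : ℝ → ℝ := fun s => s * (κ * f s ^ 3 - f s) with hh
  have hfc := hf.continuousOn
  have hhc : ContinuousOn h (Set.Ioi 0) := by fun_prop
  have hbound : ∀ s, 0 < s → |h s| ≤ κ * (s + 16) + 2 := by
    intro s hs
    have h1 := hf.nonneg s hs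
    have h2 := hf.le s hs
    have h3 := (hf.quartic s hs).trans (quarticMajorant_le s)
    have h5 : f s ^ 3 ≤ 1 + f s ^ 4 := by
      nlinarith [sq_nonneg (f s ^ 2 - f s), sq_nonneg (f s - 1), sq_nonneg (f s ^ 2 - 1)]
    have h6 : s * f s ^ 3 ≤ s + 16 := by nlinarith
    have h7 : κ * (s * f s ^ 3) ≤ κ * (s + 16) := by gcongr
    have h8 : 0 ≤ κ * (s * f s ^ 3) := by positivity
    have h9 : 0 ≤ s * f s := by positivity
    rw [hh, abs_le]
    constructor <;> nlinarith
  have hhi : ∀ b, 0 ≤ b → IntervalIntegrable h volume 0 b := by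
    intro b hb
    rw [intervalIntegrable_iff_integrableOn_Ioc_of_le hb]
    refine IntegrableOn.of_bound measure_Ioc_lt_top
      ((hhc.mono Set.Ioc_subset_Ioi_self).aestronglyMeasurable measurableSet_Ioc)
      (κ * (b + 16) + 2) ?_
    filter_upwards [ae_restrict_mem measurableSet_Ioc] with s hs
    refine (hbound s hs.1).trans ?_
    have := hs.2
    gcongr
  have hhi' : ∀ a b, 0 ≤ a → 0 ≤ b → IntervalIntegrable h volume a b := fun a b ha hb =>
    (hhi a ha).symm.trans (hhi b hb)
  set G : ℝ → ℝ := fun r => ∫ s in (0 : ℝ)..r, h s with hG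
  have hGd : ∀ r, 0 < r → HasDerivAt G (h r) r := fun r hr =>
    intervalIntegral.integral_hasDerivAt_right (hhi r hr.le)
      (hhc.stronglyMeasurableAtFilter isOpen_Ioi r hr) (hhc.continuousAt (Ioi_mem_nhds hr))
  have hGc : ContinuousOn G (Set.Ioi 0) := fun r hr =>
    (hGd r hr).continuousAt.continuousWithinAt
  have hEL' : ∀ a b, 0 < a → a < b → f a - f b = ∫ s in a..b, G s / s := by
    intro a b ha hab
    have hb := ha.trans hab
    have hpos : ∀ x ∈ Set.uIcc a b, 0 < x := fun x hx => by
      rw [Set.uIcc_of_le hab.le] at hx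
      exact ha.trans_le hx.1
    have hsub : Set.uIcc a b ⊆ Set.Ioi 0 := hpos
    have hib := intervalIntegral.integral_mul_deriv_eq_deriv_mul
      (u := fun s => Real.log b - Real.log s) (u' := fun s => -s⁻¹) (v := G) (v' := h)
      (fun x hx => by simpa using (Real.hasDerivAt_log (hpos x hx).ne').const_sub (Real.log b))
      (fun x hx => hGd x (hpos x hx))
      (ContinuousOn.intervalIntegrable
        ((continuousOn_id.inv₀ fun x hx => (hpos x hx).ne').neg))
      (hhi' a b ha.le hb.le)
    have hint : ∫ r in Set.Ioi (0 : ℝ), h r * logTest a b r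
        = ∫ r in (0 : ℝ)..b, h r * logTest a b r := by
      rw [intervalIntegral.integral_of_le hb.le]
      refine setIntegral_eq_of_subset_of_forall_sdiff_eq_zero measurableSet_Ioi
        Set.Ioc_subset_Ioi_self fun x hx => ?_
      have : b ≤ x := by
        by_contra hlt
        exact hx.2 ⟨hx.1, (not_le.1 hlt).le⟩
      simp [logTest_of_ge this]
    have hφc := (lipschitzWith_logTest ha hab).continuous
    have e1 : ∫ r in (0 : ℝ)..a, h r * logTest a b r = G a * (Real.log b - Real.log a) := by
      rw [hG, ← intervalIntegral.integral_mul_const]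
      refine intervalIntegral.integral_congr fun x hx => ?_
      rw [Set.uIcc_of_le ha.le] at hx
      simp only [logTest_of_le hab hx.2]
    have e2 : ∫ r in a..b, h r * logTest a b r
        = ∫ r in a..b, (Real.log b - Real.log r) * h r := by
      refine intervalIntegral.integral_congr fun x hx => ?_
      rw [Set.uIcc_of_le hab.le] at hx
      simp only [logTest_of_mem hx]
      ring
    rw [hEL a b ha hab, hint, ← intervalIntegral.integral_add_adjacent_intervals
      ((hhi' 0 a le_rfl ha.le).mul_continuousOn hφc.continuousOn)
      ((hhi' a b ha.le hb.le).mul_continuousOn hφc.continuousOn), e1, e2, hib]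
    have e3 : ∫ x in a..b, -x⁻¹ * G x = -∫ x in a..b, G x / x := by
      rw [← intervalIntegral.integral_neg]
      refine intervalIntegral.integral_congr fun x _ => ?_
      ring
    rw [e3]
    ring
  have hGsc : ContinuousOn (fun s => G s / s) (Set.Ioi 0) :=
    hGc.div continuousOn_id fun x hx => (show (0 : ℝ) < x from hx).ne'
  have hGle : ∀ r M, 0 < r → (∀ s, 0 < s → s ≤ r → |h s| ≤ M) → |G r / r| ≤ M := by
    intro r M hr hM
    have := intervalIntegral.norm_integral_le_of_norm_le_const (f := h) (a := 0) (b := r) (C := M)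
      fun x hx => by
        rw [Set.uIoc_of_le hr.le] at hx
        exact hM x hx.1 hx.2
    rw [sub_zero, abs_of_pos hr, Real.norm_eq_abs] at this
    rw [abs_div, abs_of_pos hr, div_le_iff₀ hr]
    exact this
  have hB : ∀ r, 0 < r → f r ≤ f 1 + (κ * 17 + 2) := by
    intro r hr
    rcases lt_or_ge r 1 with h1 | h1
    · have h2 := hEL' r 1 hr h1
      have h3 := intervalIntegral.norm_integral_le_of_norm_le_const (f := fun s => G s / s)
        (a := r) (b := 1) (C := κ * 17 + 2) fun x hx => by
          rw [Set.uIoc_of_le h1.le] at hx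
          refine hGle x _ (hr.trans hx.1) fun s hs hsx => (hbound s hs).trans ?_
          have : s + 16 ≤ 17 := by linarith [hx.2]
          gcongr
      rw [← h2, abs_of_pos (sub_pos.2 h1), Real.norm_eq_abs] at h3
      have h4 : (κ * 17 + 2) * (1 - r) ≤ κ * 17 + 2 :=
        mul_le_of_le_one_right (by positivity) (by linarith)
      linarith [(abs_le.1 h3).2]
    · have := hf.anti 1 r one_pos h1
      have : 0 ≤ κ * 17 := by positivity
      linarith
  set B := f 1 + (κ * 17 + 2) with hBdef
  refine ⟨fun r => -(G r / r), fun r hr => ?_, fun r hr => ?_, ?_, B, hB⟩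
  · have hr2 : 0 < r / 2 := by positivity
    have hd : HasDerivAt (fun y => f (r / 2) - ∫ s in (r / 2)..y, G s / s) (-(G r / r)) r := by
      refine HasDerivAt.const_sub _ (intervalIntegral.integral_hasDerivAt_right ?_
        (hGsc.stronglyMeasurableAtFilter isOpen_Ioi r hr) (hGsc.continuousAt (Ioi_mem_nhds hr)))
      refine (hGsc.mono fun x hx => ?_).intervalIntegrable
      rw [Set.uIcc_of_le (by linarith)] at hx
      exact hr2.trans_le hx.1
    refine hd.congr_of_eventuallyEq ?_
    filter_upwards [lt_mem_nhds (show r / 2 < r by linarith)] with y hy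
    rw [← hEL' _ _ hr2 hy]
    ring
  · refine ((hGd r hr).div (hasDerivAt_id r) hr.ne').neg.congr_deriv ?_
    simp only [hh, id]
    field_simp
    ring
  · refine squeeze_zero_norm' (a := fun r => r * (κ * B ^ 3 + B)) ?_ ?_
    · filter_upwards [self_mem_nhdsWithin] with r hr
      rw [norm_neg]
      refine hGle r _ hr fun s hs hsr => ?_
      have h0 := hf.nonneg s hs
      have h1 := hB s hs
      rw [hh, abs_mul, abs_of_pos hs]
      have h2 : |κ * f s ^ 3 - f s| ≤ κ * B ^ 3 + B := by
        have : κ * f s ^ 3 ≤ κ * B ^ 3 := by gcongr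
        have : 0 ≤ κ * f s ^ 3 := by positivity
        rw [abs_le]
        constructor <;> linarith
      exact mul_le_mul hsr h2 (abs_nonneg _) (le_of_lt hr)
    · have : Tendsto (fun r : ℝ => r * (κ * B ^ 3 + B)) (𝓝 0) (𝓝 (0 * (κ * B ^ 3 + B))) :=
        tendsto_id.mul_const _
      rw [zero_mul] at this
      exact this.mono_left nhdsWithin_le_nhds

/-- A positive radial solution of `-Δu + u - u³ = 0` in the plane with finite energy, in polar
form; `p` is the radial derivative. -/
structure IsGroundProfile (u p : ℝ → ℝ) : Prop where
  pos : ∀ r, 0 < r → 0 < u r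
  hasDerivAt : ∀ r, 0 < r → HasDerivAt u (p r) r
  hasDerivAt' : ∀ r, 0 < r → HasDerivAt p (-p r / r + u r - u r ^ 3) r
  exists_tendsto : ∃ c, 0 < c ∧ Tendsto u (𝓝[>] 0) (𝓝 c)
  tendsto_deriv : Tendsto p (𝓝[>] 0) (𝓝 0)
  bounded : ∀ R, ∃ B, ∀ r, 0 < r → r ≤ R → u r ≤ B
  integrableOn_sq : IntegrableOn (fun r => r * u r ^ 2) (Set.Ioi 0)
  integrableOn_deriv_sq : IntegrableOn (fun r => r * p r ^ 2) (Set.Ioi 0)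
  integrableOn_quartic : IntegrableOn (fun r => r * u r ^ 4) (Set.Ioi 0)

theorem integrableOn_Ioi_of_hasDerivAt_of_le {g g' : ℝ → ℝ} {a M : ℝ}
    (hg : ∀ x, a ≤ x → HasDerivAt g (g' x) x) (hg' : ∀ x, a ≤ x → 0 ≤ g' x)
    (hM : ∀ x, a ≤ x → g x ≤ M) : IntegrableOn g' (Set.Ioi a) := by
  have hmono : MonotoneOn g (Set.Ici a) := by
    refine monotoneOn_of_deriv_nonneg (convex_Ici a)
      (fun x hx => (hg x hx).continuousAt.continuousWithinAt)
      (fun x hx => (hg x (interior_subset hx)).differentiableAt.differentiableWithinAt)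
      fun x hx => ?_
    rw [(hg x (interior_subset hx)).deriv]
    exact hg' x (interior_subset hx)
  have hmono' : Monotone fun x => g (max a x) := fun x y hxy =>
    hmono (show a ≤ _ from le_max_left _ _) (show a ≤ _ from le_max_left _ _)
      (max_le_max le_rfl hxy)
  have hlim := tendsto_atTop_ciSup hmono' ⟨M, by
    rintro _ ⟨x, rfl⟩
    exact hM _ (le_max_left _ _)⟩
  refine integrableOn_Ioi_deriv_of_nonneg' hg (fun x hx => hg' x (le_of_lt hx))
    (hlim.congr' ?_)
  filter_upwards [eventually_ge_atTop a] with x hx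
  rw [max_eq_right hx]

theorem eq_zero_of_neg_deriv_le {E E' : ℝ → ℝ} {a b K : ℝ} (hab : a ≤ b)
    (hd : ∀ r ∈ Set.Icc a b, HasDerivAt E (E' r) r) (h0 : 0 ≤ E a)
    (hE : ∀ r ∈ Set.Icc a b, -E' r ≤ K * E r) (hb : E b = 0) : E a = 0 := by
  have hd' : ∀ r ∈ Set.Icc a b, HasDerivAt (fun r => E r * Real.exp (K * r))
      (E' r * Real.exp (K * r) + E r * (Real.exp (K * r) * K)) r := fun r hr =>
    (hd r hr).mul (by simpa using ((hasDerivAt_id r).const_mul K).exp)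
  have hmono : MonotoneOn (fun r => E r * Real.exp (K * r)) (Set.Icc a b) := by
    refine monotoneOn_of_deriv_nonneg (convex_Icc a b)
      (fun x hx => (hd' x hx).continuousAt.continuousWithinAt)
      (fun x hx => (hd' x (interior_subset hx)).differentiableAt.differentiableWithinAt)
      fun x hx => ?_
    rw [(hd' x (interior_subset hx)).deriv]
    have := hE x (interior_subset hx)
    have h2 : 0 ≤ (E' x + K * E x) * Real.exp (K * x) :=
      mul_nonneg (by linarith) (Real.exp_pos _).le
    linarith
  have h := hmono (Set.left_mem_Icc.2 hab) (Set.right_mem_Icc.2 hab) hab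
  simp only [hb, zero_mul] at h
  exact le_antisymm (nonpos_of_mul_nonpos_left h (Real.exp_pos _)) h0

theorem HasProfileBounds.pos_of_hasDerivAt {f p : ℝ → ℝ} (hf : HasProfileBounds f) {κ B L : ℝ}
    (hκ : 0 ≤ κ) (hp : ∀ r, 0 < r → HasDerivAt f (p r) r)
    (hp' : ∀ r, 0 < r → HasDerivAt p (-p r / r + f r - κ * f r ^ 3) r)
    (hB : ∀ r, 0 < r → f r ≤ B) (hL : 0 < L)
    (h4 : ∫ r in Set.Ioi (0 : ℝ), r * f r ^ 4 = L) : ∀ r, 0 < r → 0 < f r := by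
  intro b hb
  by_contra hneg
  have hfb : f b = 0 := le_antisymm (not_lt.1 hneg) (hf.nonneg b hb)
  have hpb : p b = 0 := by
    refine IsLocalMin.hasDerivAt_eq_zero ?_ (hp b hb)
    filter_upwards [lt_mem_nhds hb] with r hr
    rw [hfb]
    exact hf.nonneg r hr
  have hzero : ∀ a, 0 < a → f a = 0 := by
    intro a ha
    rcases le_total b a with h | h
    · exact le_antisymm (hfb ▸ hf.anti b a hb h) (hf.nonneg a ha)
    · have hE := eq_zero_of_neg_deriv_le (E := fun r => f r ^ 2 + p r ^ 2) (a := a) (b := b)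
        (K := 2 / a + 2 + κ * B ^ 2) h
        (fun r hr => ((hp r (ha.trans_le hr.1)).pow 2).add ((hp' r (ha.trans_le hr.1)).pow 2))
        (by positivity) (fun r hr => ?_) (by simp [hfb, hpb])
      · have : f a ^ 2 + p a ^ 2 = 0 := hE
        nlinarith [sq_nonneg (f a), sq_nonneg (p a)]
      · have hr0 : 0 < r := ha.trans_le hr.1
        have h1 := hf.nonneg r hr0
        have h2 := hB r hr0
        have h3 : p r * p r / r ≤ 1 / a * p r ^ 2 := by
          rw [div_eq_inv_mul, one_div, sq]
          have : r⁻¹ ≤ a⁻¹ := inv_anti₀ ha hr.1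
          exact mul_le_mul_of_nonneg_right this (mul_self_nonneg _)
        have h5 : f r ^ 2 ≤ B ^ 2 := by gcongr
        have h6 : -2 * (f r * p r) ≤ f r ^ 2 + p r ^ 2 := by nlinarith [sq_nonneg (f r + p r)]
        have h7 : 2 * (f r * p r) ≤ f r ^ 2 + p r ^ 2 := by nlinarith [sq_nonneg (f r - p r)]
        have h8 : κ * f r ^ 2 * (2 * (f r * p r)) ≤ κ * B ^ 2 * (f r ^ 2 + p r ^ 2) :=
          (mul_le_mul_of_nonneg_left h7 (by positivity)).trans (by gcongr)
        have h9 : 0 ≤ 1 / a * f r ^ 2 := by positivity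
        have e1 : p r * (-p r / r) = -(p r * p r / r) := by ring
        have e2 : 2 / a * (f r ^ 2 + p r ^ 2) = 2 * (1 / a * f r ^ 2) + 2 * (1 / a * p r ^ 2) := by
          ring
        norm_num
        have e3 : -(2 * f r * p r) - 2 * p r * (-p r / r + f r - κ * f r ^ 3) =
          2 * (p r * p r / r) + 2 * (-2 * (f r * p r)) + κ * f r ^ 2 * (2 * (f r * p r)) := by
          ring
        have e4 : (2 / a + 2 + κ * B ^ 2) * (f r ^ 2 + p r ^ 2) = 2 / a * (f r ^ 2 + p r ^ 2)
          + 2 * (f r ^ 2 + p r ^ 2) + κ * B ^ 2 * (f r ^ 2 + p r ^ 2) := by ring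
        linarith
  rw [setIntegral_congr_fun (g := fun _ => 0) measurableSet_Ioi fun r hr => by
    simp [hzero r hr]] at h4
  simp at h4
  linarith

theorem HasProfileBounds.integrableOn_deriv_sq {f p : ℝ → ℝ} (hf : HasProfileBounds f) {κ : ℝ}
    (hκ : 0 ≤ κ) (hp : ∀ r, 0 < r → HasDerivAt f (p r) r)
    (hp' : ∀ r, 0 < r → HasDerivAt p (-p r / r + f r - κ * f r ^ 3) r)
    (hp0 : Tendsto p (𝓝[>] 0) (𝓝 0))
    (h4 : IntegrableOn (fun r => r * f r ^ 4) (Set.Ioi 0)) :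
    IntegrableOn (fun r => r * p r ^ 2) (Set.Ioi 0) := by
  have hfc : ContinuousOn f (Set.Ioi 0) := fun r hr => (hp r hr).continuousAt.continuousWithinAt
  have hpc : ContinuousOn p (Set.Ioi 0) := fun r hr => (hp' r hr).continuousAt.continuousWithinAt
  obtain ⟨δ, hδ, hδp⟩ : ∃ δ > 0, ∀ r, 0 < r → r ≤ δ → |p r| ≤ 1 := by
    have h1 : ∀ᶠ r in 𝓝[>] (0 : ℝ), |p r| < 1 := by
      have := hp0.abs
      rw [abs_zero] at this
      exact this.eventually_lt_const one_pos
    obtain ⟨δ, hδ, h⟩ := (mem_nhdsGT_iff_exists_Ioc_subset).1 h1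
    exact ⟨δ, hδ, fun r hr hrδ => le_of_lt (h ⟨hr, hrδ⟩)⟩
  rw [← Set.Ioc_union_Ioi_eq_Ioi (le_of_lt hδ)]
  refine IntegrableOn.union ?_ ?_
  · refine IntegrableOn.of_bound measure_Ioc_lt_top
      (((continuousOn_id.mul (hpc.pow 2)).mono
        Set.Ioc_subset_Ioi_self).aestronglyMeasurable measurableSet_Ioc) δ ?_
    filter_upwards [ae_restrict_mem measurableSet_Ioc] with r hr
    have h1 : p r ^ 2 ≤ 1 := by
      rw [← sq_abs]
      exact pow_le_one₀ (abs_nonneg _) (hδp r hr.1 hr.2)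
    have h2 := hr.1
    have h3 : ‖r * p r ^ 2‖ ≤ δ := by
      rw [Real.norm_of_nonneg (by positivity)]
      nlinarith [hr.2]
    exact h3
  · have hc : ContinuousOn (fun s => s * (κ * f s ^ 4 - f s ^ 2)) (Set.Ioi 0) := by fun_prop
    have hc4 : ContinuousOn (fun s => κ * (s * f s ^ 4)) (Set.Ioi 0) := by fun_prop
    have hii : ∀ {φ : ℝ → ℝ}, ContinuousOn φ (Set.Ioi 0) → ∀ x, δ ≤ x →
        IntervalIntegrable φ volume δ x := fun hφ x hx =>
      (hφ.mono fun y hy => by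
        rw [Set.uIcc_of_le hx] at hy
        exact lt_of_lt_of_le hδ hy.1).intervalIntegrable
    have hpneg : ∀ r, 0 < r → p r ≤ 0 := fun r hr => by
      have := AntitoneOn.derivWithin_nonpos (g := f) (s := Set.Ioi 0)
        (fun a ha b _ hab => hf.anti a b ha hab) (x := r)
      rwa [(hp r hr).hasDerivWithinAt.derivWithin (isOpen_Ioi.uniqueDiffWithinAt hr)] at this
    refine integrableOn_Ioi_of_hasDerivAt_of_le (a := δ)
      (g := fun r => r * (f r * p r) + ∫ s in δ..r, s * (κ * f s ^ 4 - f s ^ 2))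
      (M := κ * ∫ s in Set.Ioi (0 : ℝ), s * f s ^ 4) (fun x hx => ?_) (fun x hx => ?_)
      fun x hx => ?_
    · have hx0 : 0 < x := lt_of_lt_of_le hδ hx
      refine (((hasDerivAt_id x).mul ((hp x hx0).mul (hp' x hx0))).add
        (intervalIntegral.integral_hasDerivAt_right (hii hc x hx)
          (hc.stronglyMeasurableAtFilter isOpen_Ioi x hx0)
          (hc.continuousAt (Ioi_mem_nhds hx0)))).congr_deriv ?_
      simp only [id, Pi.mul_apply]
      field_simp
      ring
    · have hx0 : 0 < x := lt_of_lt_of_le hδ hx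
      positivity
    · have hx0 : 0 < x := lt_of_lt_of_le hδ hx
      have h1 : x * (f x * p x) ≤ 0 := mul_nonpos_of_nonneg_of_nonpos hx0.le
        (mul_nonpos_of_nonneg_of_nonpos (hf.nonneg x hx0) (hpneg x hx0))
      have h2 : ∫ s in δ..x, s * (κ * f s ^ 4 - f s ^ 2) ≤ ∫ s in δ..x, κ * (s * f s ^ 4) := by
        refine intervalIntegral.integral_mono_on hx (hii hc x hx) (hii hc4 x hx) fun s hs => ?_
        have hs0 : 0 < s := lt_of_lt_of_le hδ hs.1
        have : 0 ≤ s * f s ^ 2 := by positivity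
        linarith
      have h3 : ∫ s in δ..x, κ * (s * f s ^ 4) ≤ κ * ∫ s in Set.Ioi (0 : ℝ), s * f s ^ 4 := by
        rw [intervalIntegral.integral_const_mul, intervalIntegral.integral_of_le hx]
        refine mul_le_mul_of_nonneg_left (setIntegral_mono_set h4 ?_
          (Eventually.of_forall fun y (hy : y ∈ Set.Ioc δ x) => (lt_trans hδ hy.1 : (0 : ℝ) < y))) hκ
        filter_upwards [ae_restrict_mem measurableSet_Ioi] with s hs
        have : (0 : ℝ) < s := hs
        simp only [Pi.zero_apply]
        positivity
      linarith

theorem exists_groundProfile {C₁ : ℝ} (hC₁ : 0 < C₁) (hnot : ¬ ProfileGN C₁) :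
    ∃ L, C₁ < L ∧ ∃ u p, IsGroundProfile u p ∧ ∫ r in Set.Ioi (0 : ℝ), r * u r ^ 2 ≤ 2 / L := by
  obtain ⟨L, hL, f, hf, i2, m2, i4, m4, hEL⟩ := exists_maximizer hC₁ hnot
  have hL0 : 0 < L := hC₁.trans hL
  set κ := 2 / L with hκdef
  have hκ : 0 < κ := by positivity
  obtain ⟨p, hp, hp', hp0, B, hB⟩ := hf.exists_hasDerivAt hκ.le hEL
  have hpos := hf.pos_of_hasDerivAt hκ.le hp hp' hB hL0 m4
  have hs : 0 < √κ := Real.sqrt_pos.2 hκ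
  have hs2 : √κ ^ 2 = κ := Real.sq_sqrt hκ.le
  have hs4 : √κ ^ 4 = κ ^ 2 := by rw [show √κ ^ 4 = (√κ ^ 2) ^ 2 by ring, hs2]
  have hlim : Tendsto f (𝓝[>] 0) (𝓝 (sSup (f '' Set.Ioi 0))) := by
    refine AntitoneOn.tendsto_nhdsGT (fun a ha b _ hab => hf.anti a b ha hab) ⟨B, ?_⟩
    rintro _ ⟨r, hr, rfl⟩
    exact hB r hr
  have hlim0 : 0 < sSup (f '' Set.Ioi 0) := by
    refine (hpos 1 one_pos).trans_le (ge_of_tendsto hlim ?_)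
    filter_upwards [Ioc_mem_nhdsGT one_pos] with r hr using hf.anti r 1 hr.1 hr.2
  refine ⟨L, hL, fun r => √κ * f r, fun r => √κ * p r, ?_, ?_⟩
  · refine ⟨fun r hr => mul_pos hs (hpos r hr), fun r hr => (hp r hr).const_mul _,
      fun r hr => ((hp' r hr).const_mul _).congr_deriv ?_, ⟨_, mul_pos hs hlim0, hlim.const_mul _⟩,
      by simpa using hp0.const_mul √κ, fun _ => ⟨√κ * B, fun r hr _ => ?_⟩, ?_, ?_, ?_⟩
    · have : (√κ * f r) ^ 3 = √κ * (κ * f r ^ 3) := by rw [mul_pow, pow_succ, hs2]; ring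
      rw [this]
      ring
    · exact mul_le_mul_of_nonneg_left (hB r hr) hs.le
    · refine (i2.const_mul κ).congr (Eventually.of_forall fun r => ?_)
      simp only [mul_pow, hs2]
      ring
    · refine ((hf.integrableOn_deriv_sq hκ.le hp hp' hp0 i4).const_mul κ).congr
        (Eventually.of_forall fun r => ?_)
      simp only [mul_pow, hs2]
      ring
    · refine (i4.const_mul (κ ^ 2)).congr (Eventually.of_forall fun r => ?_)
      simp only [mul_pow, hs4]
      ring
  · have : ∫ r in Set.Ioi (0 : ℝ), r * (√κ * f r) ^ 2
        = κ * ∫ r in Set.Ioi (0 : ℝ), r * f r ^ 2 := by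
      rw [← integral_const_mul]
      congr 1 with r
      rw [mul_pow, hs2]
      ring
    rw [this]
    exact mul_le_of_le_one_right hκ.le m2

theorem exists_sq_mul_lt {F : ℝ → ℝ} (hF : IntegrableOn (fun r => r * F r) (Set.Ioi 0)) {ε : ℝ}
    (hε : 0 < ε) (R : ℝ) : ∃ r, R < r ∧ 1 < r ∧ r ^ 2 * F r < ε := by
  by_contra! h
  set a := max R 1 with ha
  have ha0 : 0 < a := lt_max_of_lt_right one_pos
  refine not_integrableOn_Ioi_inv (a := a) ?_
  have hF' := (hF.mono_set (Set.Ioi_subset_Ioi ha0.le)).const_mul ε⁻¹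
  refine hF'.mono' (measurable_inv.aestronglyMeasurable) ?_
  filter_upwards [ae_restrict_mem measurableSet_Ioi] with r hr
  have hr' : a < r := hr
  have hr0 : 0 < r := ha0.trans hr'
  have h1 := h r ((le_max_left _ _).trans_lt hr') ((le_max_right _ _).trans_lt hr')
  rw [Real.norm_of_nonneg (by positivity), inv_eq_one_div, inv_mul_eq_div, div_le_div_iff₀ hr0 hε]
  nlinarith

theorem strictAntiOn_Ioc_of_hasDerivAt {f f' : ℝ → ℝ} {R : ℝ}
    (hf : ∀ r, 0 < r → r ≤ R → HasDerivAt f (f' r) r) (hf' : ∀ r, 0 < r → r < R → f' r < 0) :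
    StrictAntiOn f (Set.Ioc 0 R) := by
  refine strictAntiOn_of_deriv_neg (convex_Ioc 0 R)
    (fun x hx => (hf x hx.1 hx.2).continuousAt.continuousWithinAt) fun x hx => ?_
  rw [interior_Ioc] at hx
  rw [(hf x hx.1 hx.2.le).deriv]
  exact hf' x hx.1 hx.2

theorem AntitoneOn.le_of_tendsto_nhdsGT {f : ℝ → ℝ} {R c : ℝ} (hf : AntitoneOn f (Set.Ioc 0 R))
    (hc : Tendsto f (𝓝[>] 0) (𝓝 c)) {r : ℝ} (hr : 0 < r) (hrR : r ≤ R) : f r ≤ c := by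
  refine ge_of_tendsto hc ?_
  filter_upwards [Ioc_mem_nhdsGT hr] with s hs
  exact hf ⟨hs.1, hs.2.trans hrR⟩ ⟨hr, hrR⟩ hs.2

theorem StrictAntiOn.lt_of_tendsto_nhdsGT {f : ℝ → ℝ} {R c : ℝ}
    (hf : StrictAntiOn f (Set.Ioc 0 R)) (hc : Tendsto f (𝓝[>] 0) (𝓝 c)) {r : ℝ} (hr : 0 < r)
    (hrR : r ≤ R) : f r < c :=
  (hf ⟨half_pos hr, (half_le_self hr.le).trans hrR⟩ ⟨hr, hrR⟩ (half_lt_self hr)).trans_le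
    (hf.antitoneOn.le_of_tendsto_nhdsGT hc (half_pos hr) ((half_le_self hr.le).trans hrR))

noncomputable def cubeRoot (r : ℝ) : ℝ := r ^ (1 / 3 : ℝ)

theorem cubeRoot_pow_three {r : ℝ} (hr : 0 ≤ r) : cubeRoot r ^ 3 = r := by
  rw [cubeRoot, ← Real.rpow_natCast, ← Real.rpow_mul hr]
  norm_num

theorem cubeRoot_pos {r : ℝ} (hr : 0 < r) : 0 < cubeRoot r := Real.rpow_pos_of_pos hr _

theorem one_le_cubeRoot {r : ℝ} (hr : 1 ≤ r) : 1 ≤ cubeRoot r :=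
  Real.one_le_rpow hr (by norm_num)

theorem hasDerivAt_cubeRoot {r : ℝ} (hr : 0 < r) :
    HasDerivAt cubeRoot (1 / (3 * cubeRoot r ^ 2)) r := by
  refine (Real.hasDerivAt_rpow_const (p := 1 / 3) (Or.inl hr.ne')).congr_deriv ?_
  have h1 : cubeRoot r ^ 2 = r ^ (2 / 3 : ℝ) := by
    rw [cubeRoot, ← Real.rpow_natCast, ← Real.rpow_mul hr.le]
    norm_num
  rw [h1, show (1 / 3 - 1 : ℝ) = -(2 / 3) by norm_num, Real.rpow_neg hr.le]
  field_simp

theorem tendsto_cubeRoot : Tendsto cubeRoot (𝓝[>] 0) (𝓝 0) := by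
  have : Continuous cubeRoot := Real.continuous_rpow_const (by norm_num)
  have h := this.tendsto 0
  rw [cubeRoot, Real.zero_rpow (by norm_num)] at h
  exact h.mono_left nhdsWithin_le_nhds

/-- Yanagida's Pohozaev-type functional for `u'' + u' / r - u + u³ = 0`, in terms of
`s = r ^ (1 / 3)`. -/
noncomputable def yanagida (s u p : ℝ) : ℝ :=
  1 / 2 * s ^ 4 * p ^ 2 + s / 3 * (p * u) + 1 / (9 * s ^ 2) * u ^ 2 - 1 / 2 * s ^ 4 * u ^ 2
    + 1 / 4 * s ^ 4 * u ^ 4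

theorem abs_yanagida_le {s : ℝ} (hs : 1 ≤ s) (u p : ℝ) :
    |yanagida s u p| ≤ (s ^ 3) ^ 2 * (u ^ 2 + p ^ 2 + u ^ 4) := by
  have h0 : 0 < s := by linarith
  have h4 : s ^ 4 ≤ s ^ 6 := pow_le_pow_right₀ hs (by norm_num)
  have h1 : s ≤ s ^ 6 := le_self_pow₀ hs (by norm_num)
  have h2 : 1 / (9 * s ^ 2) ≤ 1 / 9 * s ^ 6 := by
    have h2 : 1 ≤ s ^ 2 := one_le_pow₀ hs
    have h6 : 1 ≤ s ^ 6 := one_le_pow₀ hs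
    rw [div_le_iff₀ (by positivity)]
    nlinarith
  have h3 : |p * u| ≤ (u ^ 2 + p ^ 2) / 2 := by
    rw [abs_le]
    constructor <;> nlinarith [sq_nonneg (u + p), sq_nonneg (u - p)]
  have e1 : 1 / 2 * s ^ 4 * p ^ 2 ≤ 1 / 2 * s ^ 6 * p ^ 2 := by gcongr
  have e2 : |s / 3 * (p * u)| ≤ s ^ 6 / 3 * ((u ^ 2 + p ^ 2) / 2) := by
    rw [abs_mul, abs_of_pos (by positivity : 0 < s / 3)]
    gcongr
  have e3 : 1 / (9 * s ^ 2) * u ^ 2 ≤ 1 / 9 * s ^ 6 * u ^ 2 := by gcongr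
  have e4 : 1 / 2 * s ^ 4 * u ^ 2 ≤ 1 / 2 * s ^ 6 * u ^ 2 := by gcongr
  have e5 : 1 / 4 * s ^ 4 * u ^ 4 ≤ 1 / 4 * s ^ 6 * u ^ 4 := by gcongr
  have p1 : 0 ≤ 1 / 2 * s ^ 4 * p ^ 2 := by positivity
  have p3 : 0 ≤ 1 / (9 * s ^ 2) * u ^ 2 := by positivity
  have p4 : 0 ≤ 1 / 2 * s ^ 4 * u ^ 2 := by positivity
  have p5 : 0 ≤ 1 / 4 * s ^ 4 * u ^ 4 := by positivity
  have q1 : 0 ≤ s ^ 6 * u ^ 2 := by positivity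
  have q2 : 0 ≤ s ^ 6 * p ^ 2 := by positivity
  have q3 : 0 ≤ s ^ 6 * u ^ 4 := by positivity
  obtain ⟨e2l, e2r⟩ := abs_le.1 e2
  rw [yanagida, abs_le, ← pow_mul]
  constructor <;> nlinarith

theorem hasDerivAt_yanagida {u p : ℝ → ℝ} {r : ℝ} (hr : 0 < r) (hu : HasDerivAt u (p r) r)
    (hp : HasDerivAt p (-p r / r + u r - u r ^ 3) r) :
    HasDerivAt (fun r => yanagida (cubeRoot r) (u r) (p r))
      (-(cubeRoot r / 3 + 2 / (27 * cubeRoot r ^ 5)) * u r ^ 2) r := by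
  have hs := hasDerivAt_cubeRoot hr
  have hs0 := cubeRoot_pos hr
  have hs3 := cubeRoot_pow_three hr.le
  refine ((((((hs.pow 4).const_mul (1 / 2)).mul (hp.pow 2)).add
    ((hs.div_const 3).mul (hp.mul hu))).add
    (((hasDerivAt_const r 1).div ((hs.pow 2).const_mul 9) (mul_pos (by norm_num) (pow_pos hs0 2)).ne').mul
    (hu.pow 2))).sub (((hs.pow 4).const_mul (1 / 2)).mul (hu.pow 2))).add
    (((hs.pow 4).const_mul (1 / 4)).mul (hu.pow 4)) |>.congr_deriv ?_
  simp only [Pi.mul_apply, Pi.pow_apply, Pi.div_apply]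
  rw [show -p r / r = -p r / cubeRoot r ^ 3 by rw [hs3]]
  field_simp
  ring

namespace IsGroundProfile

variable {u p v q : ℝ → ℝ}

theorem hasDerivAt_yanagida (h : IsGroundProfile u p) {r : ℝ} (hr : 0 < r) :
    HasDerivAt (fun r => yanagida (cubeRoot r) (u r) (p r))
      (-(cubeRoot r / 3 + 2 / (27 * cubeRoot r ^ 5)) * u r ^ 2) r :=
  _root_.hasDerivAt_yanagida hr (h.hasDerivAt r hr) (h.hasDerivAt' r hr)

theorem integrableOn_energy (h : IsGroundProfile u p) :
    IntegrableOn (fun r => r * (u r ^ 2 + p r ^ 2 + u r ^ 4)) (Set.Ioi 0) := by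
  refine ((h.integrableOn_sq.add h.integrableOn_deriv_sq).add h.integrableOn_quartic).congr
    (Eventually.of_forall fun r => ?_)
  simp only [Pi.add_apply]
  ring

theorem abs_yanagida_le (u p : ℝ → ℝ) {r : ℝ} (hr : 1 ≤ r) :
    |yanagida (cubeRoot r) (u r) (p r)| ≤ r ^ 2 * (u r ^ 2 + p r ^ 2 + u r ^ 4) := by
  have := _root_.abs_yanagida_le (one_le_cubeRoot hr) (u r) (p r)
  rwa [cubeRoot_pow_three (by linarith)] at this

theorem yanagida_pos (h : IsGroundProfile u p) {r : ℝ} (hr : 0 < r) :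
    0 < yanagida (cubeRoot r) (u r) (p r) := by
  have hanti : ∀ R, StrictAntiOn (fun r => yanagida (cubeRoot r) (u r) (p r)) (Set.Ioc 0 R) :=
    fun R => strictAntiOn_Ioc_of_hasDerivAt (fun r hr _ => h.hasDerivAt_yanagida hr)
      fun r hr _ => by
        have h1 := cubeRoot_pos hr
        have h2 := h.pos r hr
        rw [neg_mul, neg_lt_zero]
        positivity
  have hlt : yanagida (cubeRoot (r + 1)) (u (r + 1)) (p (r + 1))
      < yanagida (cubeRoot r) (u r) (p r) :=
    hanti (r + 1) ⟨hr, by linarith⟩ ⟨by linarith, le_rfl⟩ (by linarith)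
  refine lt_of_le_of_lt ?_ hlt
  refine le_of_forall_pos_lt_add fun ε hε => ?_
  obtain ⟨t, ht, ht1, htε⟩ := exists_sq_mul_lt h.integrableOn_energy hε (r + 1)
  have h1 := (neg_abs_le _).trans (hanti t ⟨by linarith, ht.le⟩ ⟨by linarith, le_rfl⟩ ht).le
  have h2 := abs_yanagida_le u p ht1.le
  linarith

theorem hasDerivAt_wronskian (hu : IsGroundProfile u p) (hv : IsGroundProfile v q) {r : ℝ}
    (hr : 0 < r) : HasDerivAt (fun r => r * (q r * u r - p r * v r))
      (r * (u r * v r) * (u r ^ 2 - v r ^ 2)) r := by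
  refine ((hasDerivAt_id r).mul (((hv.hasDerivAt' r hr).mul (hu.hasDerivAt r hr)).sub
    ((hu.hasDerivAt' r hr).mul (hv.hasDerivAt r hr)))).congr_deriv ?_
  simp only [Pi.mul_apply, Pi.sub_apply, id]
  field_simp
  ring

theorem hasDerivAt_quotient (hu : IsGroundProfile u p) (hv : IsGroundProfile v q) {r : ℝ}
    (hr : 0 < r) : HasDerivAt (fun r => v r / u r)
      (r * (q r * u r - p r * v r) / (r * u r ^ 2)) r := by
  refine ((hv.hasDerivAt r hr).div (hu.hasDerivAt r hr) (hu.pos r hr).ne').congr_deriv ?_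
  have := hu.pos r hr
  field_simp

theorem hasDerivAt_comparison (hu : IsGroundProfile u p) (hv : IsGroundProfile v q) {r : ℝ}
    (hr : 0 < r) : HasDerivAt (fun r => (v r / u r) ^ 2 * yanagida (cubeRoot r) (u r) (p r)
        - yanagida (cubeRoot r) (v r) (q r))
      (2 * (v r / u r) * (r * (q r * u r - p r * v r) / (r * u r ^ 2))
        * yanagida (cubeRoot r) (u r) (p r)) r := by
  refine ((((hu.hasDerivAt_quotient hv hr).pow 2).mul (hu.hasDerivAt_yanagida hr)).sub
    (hv.hasDerivAt_yanagida hr)).congr_deriv ?_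
  have := hu.pos r hr
  simp only [Pi.pow_apply, Nat.add_one_sub_one, pow_one, Nat.cast_ofNat]
  field_simp
  ring

theorem comparison_eq (hu : IsGroundProfile u p) {r : ℝ} (hr : 0 < r) :
    (v r / u r) ^ 2 * yanagida (cubeRoot r) (u r) (p r) - yanagida (cubeRoot r) (v r) (q r)
      = 1 / 2 * cubeRoot r ^ 4 * ((v r / u r) ^ 2 * p r ^ 2 - q r ^ 2)
        + cubeRoot r / 3 * v r * (v r / u r * p r - q r)
        + 1 / 4 * cubeRoot r ^ 4 * v r ^ 2 * (u r ^ 2 - v r ^ 2) := by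
  have := hu.pos r hr
  have := cubeRoot_pos hr
  rw [yanagida, yanagida]
  field_simp
  ring

theorem tendsto_comparison (hu : IsGroundProfile u p) (hv : IsGroundProfile v q) :
    Tendsto (fun r => (v r / u r) ^ 2 * yanagida (cubeRoot r) (u r) (p r)
        - yanagida (cubeRoot r) (v r) (q r)) (𝓝[>] 0) (𝓝 0) := by
  obtain ⟨c, hc, hu0⟩ := hu.exists_tendsto
  obtain ⟨d, hd, hv0⟩ := hv.exists_tendsto
  have hp := hu.tendsto_deriv
  have hq := hv.tendsto_deriv
  have hw := hv0.div hu0 hc.ne'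
  have hs := tendsto_cubeRoot
  have h := ((((hs.pow 4).const_mul (1 / 2)).mul (((hw.pow 2).mul (hp.pow 2)).sub (hq.pow 2))).add
    (((hs.div_const 3).mul hv0).mul ((hw.mul hp).sub hq))).add
    ((((hs.pow 4).const_mul (1 / 4)).mul (hv0.pow 2)).mul ((hu0.pow 2).sub (hv0.pow 2)))
  simp only [ne_eq, OfNat.ofNat_ne_zero, not_false_eq_true, zero_pow, mul_zero, zero_mul,
    zero_div, add_zero] at h
  refine h.congr' ?_
  filter_upwards [self_mem_nhdsWithin] with r hr
  rw [hu.comparison_eq (v := v) (q := q) hr]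
  simp

theorem tendsto_wronskian (hu : IsGroundProfile u p) (hv : IsGroundProfile v q) :
    Tendsto (fun r => r * (q r * u r - p r * v r)) (𝓝[>] 0) (𝓝 0) := by
  obtain ⟨c, hc, hu0⟩ := hu.exists_tendsto
  obtain ⟨d, hd, hv0⟩ := hv.exists_tendsto
  have hid : Tendsto (fun r : ℝ => r) (𝓝[>] 0) (𝓝 0) := tendsto_id.mono_left nhdsWithin_le_nhds
  simpa using hid.mul ((hv.tendsto_deriv.mul hu0).sub (hu.tendsto_deriv.mul hv0))

end IsGroundProfile

namespace IsGroundProfile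

variable {u p v q : ℝ → ℝ}

theorem wronskian_neg (hu : IsGroundProfile u p) (hv : IsGroundProfile v q) {c d : ℝ}
    (hu0 : Tendsto u (𝓝[>] 0) (𝓝 c)) (hv0 : Tendsto v (𝓝[>] 0) (𝓝 d)) (hcd : c < d) {b : ℝ}
    (hb : 0 < b) : b * (q b * u b - p b * v b) < 0 := by
  set W : ℝ → ℝ := fun r => r * (q r * u r - p r * v r) with hW
  have hWd : ∀ r, 0 < r → HasDerivAt W (r * (u r * v r) * (u r ^ 2 - v r ^ 2)) r := fun r hr =>
    hu.hasDerivAt_wronskian hv hr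
  have hW0 : Tendsto W (𝓝[>] 0) (𝓝 0) := hu.tendsto_wronskian hv
  have hneg : ∀ R, 0 < R → (∀ r, 0 < r → r < R → u r < v r) → W R < 0 := by
    intro R hR h
    refine (strictAntiOn_Ioc_of_hasDerivAt (fun r hr _ => hWd r hr)
      fun r hr hrR => ?_).lt_of_tendsto_nhdsGT hW0 hR le_rfl
    have h1 := hu.pos r hr
    have h2 := hv.pos r hr
    have h3 := h r hr hrR
    exact mul_neg_of_pos_of_neg (by positivity) (by nlinarith)
  obtain ⟨δ, hδ, hδuv⟩ := mem_nhdsGT_iff_exists_Ioc_subset.1 (hu0.eventually_lt hv0 hcd)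
  have hδ0 : 0 < δ := hδ
  have hsmall : ∀ r, 0 < r → r ≤ δ → W r < 0 := fun r hr hrδ =>
    hneg r hr fun s hs hsr => hδuv ⟨hs, hsr.le.trans hrδ⟩
  by_contra! hWb
  set S := {r ∈ Set.Icc δ b | 0 ≤ W r} with hS
  have hδb : δ ≤ b := by
    by_contra! h
    exact absurd hWb (not_le.2 (hsmall b hb h.le))
  have hbS : b ∈ S := ⟨⟨hδb, le_rfl⟩, hWb⟩
  have hWc : ContinuousOn W (Set.Icc δ b) := fun r hr =>
    (hWd r (hδ0.trans_le hr.1)).continuousAt.continuousWithinAt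
  have hScl : IsClosed S := hWc.preimage_isClosed_of_isClosed isClosed_Icc isClosed_Ici
  have hSbd : BddBelow S := ⟨δ, fun r hr => hr.1.1⟩
  set R := sInf S with hR
  have hRS : R ∈ S := hScl.csInf_mem ⟨b, hbS⟩ hSbd
  have hR0 : 0 < R := hδ0.trans_le hRS.1.1
  have hlt : ∀ r, 0 < r → r < R → W r < 0 := by
    intro r hr hrR
    rcases le_total r δ with h | h
    · exact hsmall r hr h
    · by_contra! hWr
      exact absurd (csInf_le hSbd ⟨⟨h, hrR.le.trans hRS.1.2⟩, hWr⟩) (not_le.2 hrR)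
  have hWR : W R = 0 := by
    refine le_antisymm ?_ hRS.2
    have ht : Tendsto W (𝓝[<] R) (𝓝 (W R)) :=
      (hWd R hR0).continuousAt.tendsto.mono_left nhdsWithin_le_nhds
    refine le_of_tendsto ht ?_
    filter_upwards [Ioo_mem_nhdsLT hR0] with r hr using (hlt r hr.1 hr.2).le
  have hX := (strictAntiOn_Ioc_of_hasDerivAt (R := R)
    (fun r hr _ => hu.hasDerivAt_comparison hv hr) fun r hr hrR => by
      have h1 := hu.pos r hr
      have h2 := hv.pos r hr
      have h3 := hu.yanagida_pos hr
      have h4 := hlt r hr hrR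
      refine mul_neg_of_neg_of_pos (mul_neg_of_pos_of_neg (by positivity) ?_) h3
      exact div_neg_of_neg_of_pos h4 (by positivity)).lt_of_tendsto_nhdsGT
    (hu.tendsto_comparison hv) hR0 le_rfl
  have huR := hu.pos R hR0
  have hvR := hv.pos R hR0
  have hsR := cubeRoot_pos hR0
  have hq : q R = v R / u R * p R := by
    have : q R * u R - p R * v R = 0 := (mul_eq_zero.1 hWR).resolve_left hR0.ne'
    field_simp
    linarith
  have huvR : u R < v R := by
    rw [hu.comparison_eq hR0, ← hq, ← mul_pow, ← hq, sub_self, sub_self] at hX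
    by_contra! h
    have : 0 ≤ 1 / 4 * cubeRoot R ^ 4 * v R ^ 2 * (u R ^ 2 - v R ^ 2) :=
      mul_nonneg (by positivity) (by nlinarith)
    linarith
  have hw := strictAntiOn_Ioc_of_hasDerivAt (R := R)
    (fun r hr _ => hu.hasDerivAt_quotient hv hr) fun r hr hrR => by
      have h1 := hu.pos r hr
      exact div_neg_of_neg_of_pos (hlt r hr hrR) (by positivity)
  refine absurd (hneg R hR0 fun r hr hrR => ?_) (not_lt.2 hWR.ge)
  have h1 := hw ⟨hr, hrR.le⟩ ⟨hR0, le_rfl⟩ hrR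
  have h2 : 1 < v R / u R := (one_lt_div huR).2 huvR
  exact (one_lt_div (hu.pos r hr)).1 (h2.trans h1)

theorem not_lt_of_tendsto (hu : IsGroundProfile u p) (hv : IsGroundProfile v q) {c d : ℝ}
    (hc : 0 < c) (hu0 : Tendsto u (𝓝[>] 0) (𝓝 c)) (hv0 : Tendsto v (𝓝[>] 0) (𝓝 d)) : ¬ c < d := by
  intro hcd
  have hW : ∀ r, 0 < r → r * (q r * u r - p r * v r) < 0 := fun r hr =>
    hu.wronskian_neg hv hu0 hv0 hcd hr
  have hX : ∀ R, StrictAntiOn (fun r => (v r / u r) ^ 2 * yanagida (cubeRoot r) (u r) (p r)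
      - yanagida (cubeRoot r) (v r) (q r)) (Set.Ioc 0 R) := fun R =>
    strictAntiOn_Ioc_of_hasDerivAt (fun r hr _ => hu.hasDerivAt_comparison hv hr)
      fun r hr _ => by
        have h1 := hu.pos r hr
        have h2 := hv.pos r hr
        have h3 := hu.yanagida_pos hr
        refine mul_neg_of_neg_of_pos (mul_neg_of_pos_of_neg (by positivity) ?_) h3
        exact div_neg_of_neg_of_pos (hW r hr) (by positivity)
  have hw : ∀ r, 0 < r → v r / u r ≤ d / c := fun r hr =>
    (strictAntiOn_Ioc_of_hasDerivAt (R := r) (fun r hr _ => hu.hasDerivAt_quotient hv hr)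
      fun r hr _ => by
        have h1 := hu.pos r hr
        exact div_neg_of_neg_of_pos (hW r hr) (by positivity)).antitoneOn.le_of_tendsto_nhdsGT
      (hv0.div hu0 hc.ne') hr le_rfl
  have hX1 := (hX 1).lt_of_tendsto_nhdsGT (hu.tendsto_comparison hv) one_pos le_rfl
  have hint : IntegrableOn (fun r => r * ((d / c) ^ 2 * (u r ^ 2 + p r ^ 2 + u r ^ 4)
      + (v r ^ 2 + q r ^ 2 + v r ^ 4))) (Set.Ioi 0) := by
    refine ((hu.integrableOn_energy.const_mul ((d / c) ^ 2)).add hv.integrableOn_energy).congr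
      (Eventually.of_forall fun r => ?_)
    simp only [Pi.add_apply]
    ring
  obtain ⟨t, -, ht1, htε⟩ := exists_sq_mul_lt hint (neg_pos.2 hX1) 0
  have ht0 : 0 < t := one_pos.trans ht1
  have h1 := hX t ⟨one_pos, ht1.le⟩ ⟨ht0, le_rfl⟩ ht1
  have h2 := abs_yanagida_le u p ht1.le
  have h3 := abs_yanagida_le v q ht1.le
  have hut := hu.pos t ht0
  have hvt := hv.pos t ht0
  have h4 : (v t / u t) ^ 2 ≤ (d / c) ^ 2 :=
    pow_le_pow_left₀ (by positivity) (hw t ht0) 2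
  have h5 : (v t / u t) ^ 2 * |yanagida (cubeRoot t) (u t) (p t)|
      ≤ (d / c) ^ 2 * (t ^ 2 * (u t ^ 2 + p t ^ 2 + u t ^ 4)) := by gcongr
  have h6 : -((v t / u t) ^ 2 * |yanagida (cubeRoot t) (u t) (p t)|)
      ≤ (v t / u t) ^ 2 * yanagida (cubeRoot t) (u t) (p t) := by
    rw [← mul_neg]
    exact mul_le_mul_of_nonneg_left (neg_abs_le _) (by positivity)
  have h7 := le_abs_self (yanagida (cubeRoot t) (v t) (q t))
  simp only at h1 htε
  linarith

theorem eq_of_tendsto (hu : IsGroundProfile u p) (hv : IsGroundProfile v q) {c : ℝ}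
    (hu0 : Tendsto u (𝓝[>] 0) (𝓝 c)) (hv0 : Tendsto v (𝓝[>] 0) (𝓝 c)) {R : ℝ} (hR : 0 < R) :
    u R = v R := by
  obtain ⟨A, hA⟩ := hu.bounded R
  obtain ⟨B, hB⟩ := hv.bounded R
  set K := 2 + A ^ 2 + A * B + B ^ 2 with hK
  have hd : ∀ r, 0 < r → HasDerivAt (fun r => ((u r - v r) ^ 2 + (p r - q r) ^ 2)
      * Real.exp (-K * r)) ((-2 * (p r - q r) ^ 2 / r + 2 * ((u r - v r) * (p r - q r))
        * (2 - (u r ^ 2 + u r * v r + v r ^ 2))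
        - K * ((u r - v r) ^ 2 + (p r - q r) ^ 2)) * Real.exp (-K * r)) r := by
    intro r hr
    refine (((((hu.hasDerivAt r hr).sub (hv.hasDerivAt r hr)).pow 2).add
      (((hu.hasDerivAt' r hr).sub (hv.hasDerivAt' r hr)).pow 2)).mul
      ((hasDerivAt_id r).const_mul (-K)).exp).congr_deriv ?_
    simp only [Pi.sub_apply, Pi.add_apply, Pi.pow_apply, id, Nat.add_one_sub_one, pow_one,
      Nat.cast_ofNat]
    field_simp
    ring
  have hanti : AntitoneOn (fun r => ((u r - v r) ^ 2 + (p r - q r) ^ 2) * Real.exp (-K * r))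
      (Set.Ioc 0 R) := by
    refine antitoneOn_of_deriv_nonpos (convex_Ioc 0 R)
      (fun r hr => (hd r hr.1).continuousAt.continuousWithinAt)
      (fun r hr => (hd r (interior_subset hr).1).differentiableAt.differentiableWithinAt)
      fun r hr => ?_
    have hr' := interior_subset hr
    rw [(hd r hr'.1).deriv]
    refine mul_nonpos_of_nonpos_of_nonneg ?_ (Real.exp_pos _).le
    have h1 := hu.pos r hr'.1
    have h2 := hv.pos r hr'.1
    have h3 := hA r hr'.1 hr'.2
    have h4 := hB r hr'.1 hr'.2
    have h5 : u r ^ 2 + u r * v r + v r ^ 2 ≤ A ^ 2 + A * B + B ^ 2 := by gcongr; linarith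
    have h6 : 0 ≤ u r ^ 2 + u r * v r + v r ^ 2 := by positivity
    have h7 : |2 - (u r ^ 2 + u r * v r + v r ^ 2)| ≤ K := by
      rw [abs_le]
      constructor <;> linarith
    have h8 : |2 * ((u r - v r) * (p r - q r))| ≤ (u r - v r) ^ 2 + (p r - q r) ^ 2 := by
      rw [abs_le]
      constructor <;> nlinarith [sq_nonneg ((u r - v r) + (p r - q r)),
        sq_nonneg ((u r - v r) - (p r - q r))]
    have h9 : 2 * ((u r - v r) * (p r - q r)) * (2 - (u r ^ 2 + u r * v r + v r ^ 2))
        ≤ ((u r - v r) ^ 2 + (p r - q r) ^ 2) * K := by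
      refine (le_abs_self _).trans ?_
      rw [abs_mul]
      gcongr
    have h10 : -2 * (p r - q r) ^ 2 / r ≤ 0 :=
      div_nonpos_of_nonpos_of_nonneg (by nlinarith [sq_nonneg (p r - q r)]) hr'.1.le
    linarith
  have hexp : Tendsto (fun r => Real.exp (-K * r)) (𝓝[>] 0) (𝓝 (Real.exp (-K * 0))) :=
    (Continuous.tendsto (by fun_prop) 0).mono_left nhdsWithin_le_nhds
  have hlim := (((hu0.sub hv0).pow 2).add ((hu.tendsto_deriv.sub hv.tendsto_deriv).pow 2)).mul hexp
  simp only [sub_self, ne_eq, OfNat.ofNat_ne_zero, not_false_eq_true, zero_pow, add_zero,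
    zero_mul] at hlim
  have h := hanti.le_of_tendsto_nhdsGT hlim hR le_rfl
  have h1 : (u R - v R) ^ 2 + (p R - q R) ^ 2 ≤ 0 :=
    nonpos_of_mul_nonpos_left h (Real.exp_pos _)
  have h2 : (u R - v R) ^ 2 = 0 := by nlinarith [sq_nonneg (u R - v R), sq_nonneg (p R - q R)]
  exact sub_eq_zero.1 (pow_eq_zero_iff two_ne_zero |>.1 h2)

/-- Uniqueness of the positive radial ground state. -/
theorem unique (hu : IsGroundProfile u p) (hv : IsGroundProfile v q) {r : ℝ} (hr : 0 < r) :
    u r = v r := by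
  obtain ⟨c, hc, hu0⟩ := hu.exists_tendsto
  obtain ⟨d, hd, hv0⟩ := hv.exists_tendsto
  obtain rfl : c = d := le_antisymm (not_lt.1 (hv.not_lt_of_tendsto hu hd hv0 hu0))
    (not_lt.1 (hu.not_lt_of_tendsto hv hc hu0 hv0))
  exact hu.eq_of_tendsto hv hu0 hv0 hr

/-- The sharp inequality for radial profiles, with the mass of the ground state. -/
theorem profileGN (hv : IsGroundProfile v q) :
    ProfileGN (2 / ∫ r in Set.Ioi (0 : ℝ), r * v r ^ 2) := by
  set m := ∫ r in Set.Ioi (0 : ℝ), r * v r ^ 2 with hm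
  have hm0 : 0 < m := by
    rw [hm, setIntegral_pos_iff_support_of_nonneg_ae ?_ hv.integrableOn_sq]
    · have : Function.support (fun r => r * v r ^ 2) ∩ Set.Ioi 0 = Set.Ioi 0 := by
        refine Set.inter_eq_right.2 fun r hr => ?_
        have h1 : 0 < r := hr
        have h2 := hv.pos r h1
        exact (by positivity : r * v r ^ 2 ≠ 0)
      rw [this]
      simp
    · filter_upwards [ae_restrict_mem measurableSet_Ioi] with r hr
      have h1 : 0 < r := hr
      simp only [Pi.zero_apply]
      positivity
  by_contra hnot
  obtain ⟨L, hL, u, p, hu, hmass⟩ := exists_groundProfile (by positivity) hnot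
  have heq : ∫ r in Set.Ioi (0 : ℝ), r * u r ^ 2 = m := by
    refine setIntegral_congr_fun measurableSet_Ioi fun r hr => ?_
    simp only [hu.unique hv hr]
  have hL0 : 0 < L := lt_trans (by positivity) hL
  rw [heq, le_div_iff₀ hL0] at hmass
  rw [div_lt_iff₀ hm0] at hL
  linarith

end IsGroundProfile

theorem integral_Ioi_eq_zero_of_hasDerivAt {g g' F : ℝ → ℝ} (hg : Continuous g) (hg0 : g 0 = 0)
    (hd : ∀ r, 0 < r → HasDerivAt g (g' r) r) (hi : IntegrableOn g' (Set.Ioi 0))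
    (hF : IntegrableOn (fun r => r * F r) (Set.Ioi 0)) (hle : ∀ r, 1 < r → |g r| ≤ r ^ 2 * F r) :
    ∫ r in Set.Ioi (0 : ℝ), g' r = 0 := by
  have hlim := tendsto_limUnder_of_hasDerivAt_of_integrableOn_Ioi (fun r hr => hd r hr) hi
  have h0 : limUnder atTop g = 0 := by
    by_contra hne
    have h1 := hlim.abs.eventually_const_lt (half_lt_self (abs_pos.2 hne))
    obtain ⟨R, hR⟩ := eventually_atTop.1 h1
    obtain ⟨t, htR, ht1, hlt⟩ := exists_sq_mul_lt hF (half_pos (abs_pos.2 hne)) R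
    linarith [hR t htR.le, hle t ht1]
  rw [h0] at hlim
  rw [integral_Ioi_of_hasDerivAt_of_tendsto hg.continuousWithinAt (fun r hr => hd r hr) hi hlim,
    hg0, sub_zero]

namespace IsGroundProfile

variable {u p : ℝ → ℝ}

theorem integral_pohozaev (h : IsGroundProfile u p) (hu : Continuous u) (hp : Continuous p) :
    ∫ r in Set.Ioi (0 : ℝ), r * u r ^ 4 = 2 * ∫ r in Set.Ioi (0 : ℝ), r * u r ^ 2 := by
  have i1 := h.integrableOn_quartic.const_mul (1 / 2)
  have i2 := h.integrableOn_sq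
  have h0 := integral_Ioi_eq_zero_of_hasDerivAt
    (g := fun r => r ^ 2 * (1 / 2 * p r ^ 2 - 1 / 2 * u r ^ 2 + 1 / 4 * u r ^ 4))
    (g' := fun r => 1 / 2 * (r * u r ^ 4) - r * u r ^ 2) (by fun_prop) (by simp)
    (fun r hr => ?_) (show IntegrableOn (fun r => 1 / 2 * (r * u r ^ 4) - r * u r ^ 2) _ _ from i1.sub i2)
    h.integrableOn_energy fun r hr => ?_
  · rw [integral_sub i1 i2, integral_const_mul] at h0
    linarith
  · refine (((hasDerivAt_id r).pow 2).mul (((((h.hasDerivAt' r hr).pow 2).const_mul (1 / 2)).sub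
      (((h.hasDerivAt r hr).pow 2).const_mul (1 / 2))).add
      (((h.hasDerivAt r hr).pow 4).const_mul (1 / 4)))).congr_deriv ?_
    simp only [Pi.sub_apply, Pi.add_apply, Pi.pow_apply, id, Nat.add_one_sub_one, pow_one,
      Nat.cast_ofNat]
    field_simp
    ring
  · rw [abs_mul, abs_of_nonneg (sq_nonneg r)]
    refine mul_le_mul_of_nonneg_left ?_ (sq_nonneg r)
    rw [abs_le]
    have : 0 ≤ u r ^ 4 := by positivity
    constructor <;> nlinarith [sq_nonneg (u r), sq_nonneg (p r)]

theorem integral_deriv_sq (h : IsGroundProfile u p) (hu : Continuous u) (hp : Continuous p) :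
    ∫ r in Set.Ioi (0 : ℝ), r * p r ^ 2 = ∫ r in Set.Ioi (0 : ℝ), r * u r ^ 2 := by
  have i1 := h.integrableOn_quartic
  have i2 := h.integrableOn_sq
  have i3 := h.integrableOn_deriv_sq
  have i4 : IntegrableOn (fun r => r * p r ^ 2 + r * u r ^ 2) (Set.Ioi 0) := i3.add i2
  have i5 : IntegrableOn (fun r => (r * p r ^ 2 + r * u r ^ 2) - r * u r ^ 4) (Set.Ioi 0) :=
    i4.sub i1
  have h0 := integral_Ioi_eq_zero_of_hasDerivAt (g := fun r => r * (u r * p r))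
    (g' := fun r => (r * p r ^ 2 + r * u r ^ 2) - r * u r ^ 4) (by fun_prop) (by simp)
    (fun r hr => ?_) i5 h.integrableOn_energy fun r hr => ?_
  · rw [integral_sub i4 i1, integral_add i3 i2, h.integral_pohozaev hu hp] at h0
    linarith
  · refine ((hasDerivAt_id r).mul ((h.hasDerivAt r hr).mul (h.hasDerivAt' r hr))).congr_deriv ?_
    simp only [Pi.mul_apply, id]
    field_simp
    ring
  · have hr0 : 0 < r := one_pos.trans hr
    rw [abs_mul, abs_of_pos hr0]
    refine mul_le_mul (by nlinarith) ?_ (abs_nonneg _) (sq_nonneg r)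
    rw [abs_le]
    have : 0 ≤ u r ^ 4 := by positivity
    constructor <;> nlinarith [sq_nonneg (u r + p r), sq_nonneg (u r - p r), sq_nonneg (u r),
      sq_nonneg (p r)]

end IsGroundProfile

/-- The restriction of a radial function to the first coordinate axis. -/
noncomputable def radialPart (Q : EuclideanSpace ℝ (Fin 2) → ℝ) (r : ℝ) : ℝ :=
  Q (EuclideanSpace.single 0 r)

section radialPart

variable {Q : EuclideanSpace ℝ (Fin 2) → ℝ}

theorem single_eq_smul (i : Fin 2) (r : ℝ) :
    EuclideanSpace.single i r = r • (EuclideanSpace.single i (1 : ℝ)) := by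
  ext j
  fin_cases i <;> fin_cases j <;> simp

theorem hasDerivAt_euclideanSpace_single (i : Fin 2) (r : ℝ) :
    HasDerivAt (fun r : ℝ => (EuclideanSpace.single i r : EuclideanSpace ℝ (Fin 2)))
      (EuclideanSpace.single i 1) r := by
  have := (hasDerivAt_id r).smul_const (EuclideanSpace.single i (1 : ℝ))
  rw [one_smul] at this
  exact this.congr_of_eventuallyEq (Eventually.of_forall fun s => single_eq_smul i s)

theorem contDiff_euclideanSpace_single (i : Fin 2) :
    ContDiff ℝ 2 fun r : ℝ => (EuclideanSpace.single i r : EuclideanSpace ℝ (Fin 2)) := by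
  rw [funext (single_eq_smul i)]
  fun_prop

theorem contDiff_radialPart (hQ : ContDiff ℝ 2 Q) : ContDiff ℝ 2 (radialPart Q) :=
  hQ.comp (contDiff_euclideanSpace_single 0)

theorem hasDerivAt_radialPart (hQ : ContDiff ℝ 2 Q) (r : ℝ) :
    HasDerivAt (radialPart Q) (deriv (radialPart Q) r) r :=
  ((contDiff_radialPart hQ).differentiable (by norm_num) r).hasDerivAt

theorem contDiff_deriv_radialPart (hQ : ContDiff ℝ 2 Q) : ContDiff ℝ 1 (deriv (radialPart Q)) :=
  (contDiff_succ_iff_deriv (n := 1).1 (contDiff_radialPart hQ)).2.2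

theorem eq_radialPart_norm (hr : ∀ x y : EuclideanSpace ℝ (Fin 2), ‖x‖ = ‖y‖ → Q x = Q y)
    (x : EuclideanSpace ℝ (Fin 2)) : Q x = radialPart Q ‖x‖ :=
  hr _ _ (by simp)

theorem deriv_radialPart_zero (hr : ∀ x y : EuclideanSpace ℝ (Fin 2), ‖x‖ = ‖y‖ → Q x = Q y)
    (hQ : ContDiff ℝ 2 Q) : deriv (radialPart Q) 0 = 0 := by
  have h1 : HasDerivAt (radialPart Q) (deriv (radialPart Q) 0) (-0) := by
    rw [neg_zero]
    exact hasDerivAt_radialPart hQ 0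
  have h2 := h1.comp (0 : ℝ) (hasDerivAt_neg 0)
  have h3 : radialPart Q ∘ Neg.neg = radialPart Q := by
    ext r
    exact hr _ _ (by simp)
  rw [h3] at h2
  have := h2.unique (hasDerivAt_radialPart hQ 0)
  linarith

theorem norm_gradient_sq (hr : ∀ x y : EuclideanSpace ℝ (Fin 2), ‖x‖ = ‖y‖ → Q x = Q y)
    (hQ : ContDiff ℝ 2 Q) {x : EuclideanSpace ℝ (Fin 2)} (hx : x ≠ 0) :
    ‖gradient Q x‖ ^ 2 = deriv (radialPart Q) ‖x‖ ^ 2 := by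
  have hx0 : ‖x‖ ≠ 0 := norm_ne_zero_iff.2 hx
  have h1 : HasFDerivAt (fun y : EuclideanSpace ℝ (Fin 2) => ‖y‖) (‖x‖⁻¹ • innerSL ℝ x) x := by
    have h2 := (hasStrictFDerivAt_norm_sq x).hasFDerivAt.sqrt (pow_ne_zero 2 hx0)
    simp only [Real.sqrt_sq (norm_nonneg _)] at h2
    refine h2.congr_fderiv ?_
    ext v
    simp
    field_simp
  have h3 : HasGradientAt Q ((deriv (radialPart Q) ‖x‖ * ‖x‖⁻¹) • x) x := by
    rw [hasGradientAt_iff_hasFDerivAt]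
    refine (((hasDerivAt_radialPart hQ ‖x‖).comp_hasFDerivAt x h1).congr_of_eventuallyEq
      (Eventually.of_forall (eq_radialPart_norm hr))).congr_fderiv ?_
    ext v
    simp [mul_assoc]
  rw [h3.gradient, norm_smul, norm_mul, norm_inv, norm_norm, mul_assoc, inv_mul_cancel₀ hx0,
    mul_one, Real.norm_eq_abs, sq_abs]

theorem lap2_single (hr : ∀ x y : EuclideanSpace ℝ (Fin 2), ‖x‖ = ‖y‖ → Q x = Q y)
    (hQ : ContDiff ℝ 2 Q) {r : ℝ} (hr0 : 0 < r) :
    lap2 Q (EuclideanSpace.single 0 r)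
      = deriv (deriv (radialPart Q)) r + deriv (radialPart Q) r / r := by
  have hd : ∀ x, HasFDerivAt Q (fderiv ℝ Q x) x := fun x =>
    (hQ.differentiable (by norm_num) x).hasFDerivAt
  have hd2 : ∀ (v : EuclideanSpace ℝ (Fin 2)) (x : EuclideanSpace ℝ (Fin 2)),
      HasFDerivAt (fun y => fderiv ℝ Q y v) (fderiv ℝ (fun y => fderiv ℝ Q y v) x) x := by
    intro v x
    have h1 : ContDiff ℝ 1 (fderiv ℝ Q) := hQ.fderiv_right (by norm_num)
    have h2 : ContDiff ℝ 1 fun y => fderiv ℝ Q y v := h1.clm_apply contDiff_const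
    exact (h2.differentiable (by norm_num) x).hasFDerivAt
  rw [lap2, Fin.sum_univ_two]
  congr 1
  · have h1 : deriv (radialPart Q)
        = fun s => fderiv ℝ Q (EuclideanSpace.single 0 s) (EuclideanSpace.single 0 1) := by
      ext s
      exact ((hd _).comp_hasDerivAt s (hasDerivAt_euclideanSpace_single 0 s)).deriv
    rw [h1]
    exact ((hd2 _ _).comp_hasDerivAt r (hasDerivAt_euclideanSpace_single 0 r)).deriv.symm
  · set γ : ℝ → EuclideanSpace ℝ (Fin 2) := fun t =>
      EuclideanSpace.single 0 r + EuclideanSpace.single 1 t with hγ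
    have hγd : ∀ t, HasDerivAt γ (EuclideanSpace.single 1 1) t := fun t =>
      (hasDerivAt_euclideanSpace_single 1 t).const_add _
    have hγ0 : γ 0 = EuclideanSpace.single 0 r := by simp [hγ]
    set n : ℝ → ℝ := fun t => √(r ^ 2 + t ^ 2) with hn
    have hnorm : ∀ t, ‖γ t‖ = n t := fun t => by
      rw [EuclideanSpace.norm_eq, Fin.sum_univ_two]
      simp [hγ, hn]
    have hnpos : ∀ t, 0 < n t := fun t => Real.sqrt_pos.2 (by positivity)
    have hnd : ∀ t, HasDerivAt n (t / n t) t := fun t => by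
      refine ((((hasDerivAt_id t).pow 2).const_add (r ^ 2)).sqrt ?_).congr_deriv ?_
      · simp only [Pi.pow_apply, id]
        positivity
      · simp only [Pi.pow_apply, id, hn]
        field_simp
        simp
    have hn0 : n 0 = r := by simp [hn, Real.sqrt_sq hr0.le]
    have h1 : (fun t => fderiv ℝ Q (γ t) (EuclideanSpace.single 1 1))
        = fun t => t * (deriv (radialPart Q) (n t) / n t) := by
      ext t
      refine ((hd _).comp_hasDerivAt t (hγd t)).unique ?_
      refine (((hasDerivAt_radialPart hQ (n t)).comp t (hnd t)).congr_of_eventuallyEq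
        (Eventually.of_forall fun s => ?_)).congr_deriv (by ring)
      simp only [Function.comp, eq_radialPart_norm hr, hnorm]
    have h2 := (hd2 (EuclideanSpace.single 1 1) (γ 0)).comp_hasDerivAt 0 (hγd 0)
    have h3 : HasDerivAt (fun t => t * (deriv (radialPart Q) (n t) / n t))
        (deriv (radialPart Q) r / r) 0 := by
      have h4 : DifferentiableAt ℝ (deriv (radialPart Q)) (n 0) :=
        (contDiff_deriv_radialPart hQ).differentiable (by norm_num) _
      have h5 := (hasDerivAt_id (0 : ℝ)).mul
        (((h4.hasDerivAt).comp 0 (hnd 0)).div (hnd 0) (hnpos 0).ne')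
      refine h5.congr_deriv ?_
      simp [hn0]
    rw [← hγ0]
    refine h2.unique ?_
    rw [Function.comp_def, h1]
    exact h3

theorem isGroundProfile_radialPart (hQpos : ∀ x, 0 < Q x)
    (hQrad : ∀ x y : EuclideanSpace ℝ (Fin 2), ‖x‖ = ‖y‖ → Q x = Q y)
    (hQsmooth : ContDiff ℝ 2 Q)
    (hQL2 : Integrable (fun x => Q x ^ 2))
    (hQgrad : Integrable (fun x => ‖gradient Q x‖ ^ 2))
    (hQ4 : Integrable (fun x => Q x ^ 4))
    (hpde : ∀ x, -lap2 Q x + Q x - Q x ^ 3 = 0) :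
    IsGroundProfile (radialPart Q) (deriv (radialPart Q)) := by
  have hc : Continuous (radialPart Q) := (contDiff_radialPart hQsmooth).continuous
  have hc' := (contDiff_deriv_radialPart hQsmooth).continuous
  have hne : ∀ᵐ x : EuclideanSpace ℝ (Fin 2), x ≠ 0 := by
    simp [ae_iff]
  refine ⟨fun r _ => hQpos _, fun r _ => hasDerivAt_radialPart hQsmooth r, fun r hr => ?_,
    ⟨_, hQpos _, (hc.tendsto 0).mono_left nhdsWithin_le_nhds⟩, ?_, fun R => ?_, ?_, ?_, ?_⟩
  · refine ((contDiff_deriv_radialPart hQsmooth).differentiable (by norm_num)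
      r).hasDerivAt.congr_deriv ?_
    have := hpde (EuclideanSpace.single 0 r)
    rw [lap2_single hQrad hQsmooth hr] at this
    rw [radialPart, neg_div]
    linarith
  · have := hc'.tendsto 0
    rw [deriv_radialPart_zero hQrad hQsmooth] at this
    exact this.mono_left nhdsWithin_le_nhds
  · obtain ⟨B, hB⟩ := (isCompact_Icc (a := (0 : ℝ)) (b := R)).bddAbove_image hc.continuousOn
    exact ⟨B, fun r hr hrR => hB ⟨r, ⟨hr.le, hrR⟩, rfl⟩⟩
  · refine (integrable_radial_iff fun r => radialPart Q r ^ 2).1 (hQL2.congr ?_)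
    exact Eventually.of_forall fun x => by simp only [eq_radialPart_norm hQrad x]
  · refine (integrable_radial_iff fun r => deriv (radialPart Q) r ^ 2).1 (hQgrad.congr ?_)
    exact hne.mono fun x hx => norm_gradient_sq hQrad hQsmooth hx
  · refine (integrable_radial_iff fun r => radialPart Q r ^ 4).1 (hQ4.congr ?_)
    exact Eventually.of_forall fun x => by simp only [eq_radialPart_norm hQrad x]

theorem integral_pow_eq_radialPart
    (hQrad : ∀ x y : EuclideanSpace ℝ (Fin 2), ‖x‖ = ‖y‖ → Q x = Q y) (k : ℕ) :
    ∫ x, Q x ^ k = 2 * Real.pi * ∫ r in Set.Ioi (0 : ℝ), r * radialPart Q r ^ k := by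
  rw [← integral_radial fun r => radialPart Q r ^ k]
  congr 1 with x
  rw [eq_radialPart_norm hQrad x]

theorem integral_norm_gradient_sq_eq_radialPart
    (hQrad : ∀ x y : EuclideanSpace ℝ (Fin 2), ‖x‖ = ‖y‖ → Q x = Q y)
    (hQsmooth : ContDiff ℝ 2 Q) :
    ∫ x, ‖gradient Q x‖ ^ 2
      = 2 * Real.pi * ∫ r in Set.Ioi (0 : ℝ), r * deriv (radialPart Q) r ^ 2 := by
  rw [← integral_radial fun r => deriv (radialPart Q) r ^ 2]
  refine integral_congr_ae ?_
  have hne : ∀ᵐ x : EuclideanSpace ℝ (Fin 2), x ≠ 0 := by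
    simp [ae_iff]
  exact hne.mono fun x hx => norm_gradient_sq hQrad hQsmooth hx

end radialPart

section Mollification

open scoped Convolution

theorem norm_integral_smul_sq_le {α F : Type*} [MeasurableSpace α] {μ : Measure α}
    [NormedAddCommGroup F] [NormedSpace ℝ F] {φ : α → ℝ} {f : α → F} (h0 : ∀ x, 0 ≤ φ x)
    (hφ : Integrable φ μ) (h1 : ∫ x, φ x ∂μ = 1) (hf : Integrable (fun x => φ x • f x) μ)
    (hf2 : Integrable (fun x => φ x * ‖f x‖ ^ 2) μ) :
    ‖∫ x, φ x • f x ∂μ‖ ^ 2 ≤ ∫ x, φ x * ‖f x‖ ^ 2 ∂μ := by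
  set m := ∫ x, φ x * ‖f x‖ ∂μ with hm
  have hi : Integrable (fun x => φ x * ‖f x‖) μ := by
    refine hf.norm.congr (Eventually.of_forall fun x => ?_)
    simp only [norm_smul, Real.norm_of_nonneg (h0 x)]
  have h2 : ‖∫ x, φ x • f x ∂μ‖ ≤ m := by
    refine (norm_integral_le_integral_norm _).trans_eq ?_
    simp only [norm_smul, Real.norm_of_nonneg (h0 _), hm]
  have h3 : 0 ≤ ∫ x, φ x * ‖f x‖ ^ 2 - 2 * m * (φ x * ‖f x‖) + m ^ 2 * φ x ∂μ :=
    integral_nonneg fun x => by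
      have := mul_nonneg (h0 x) (sq_nonneg (‖f x‖ - m))
      simp only [Pi.zero_apply]
      linarith
  rw [integral_add (by exact hf2.sub (hi.const_mul _)) (hφ.const_mul _),
    integral_sub hf2 (hi.const_mul _), integral_const_mul, integral_const_mul, h1, ← hm] at h3
  have h4 := pow_le_pow_left₀ (norm_nonneg _) h2 2
  linarith

variable {E : Type*} [NormedAddCommGroup E] [InnerProductSpace ℝ E] [FiniteDimensional ℝ E]
  [MeasurableSpace E] [BorelSpace E] (φ : ContDiffBump (0 : E))

/-- Convolution with a normalised bump function. -/
noncomputable def mollify (v : E → ℝ) : E → ℝ :=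
  φ.normed volume ⋆[ContinuousLinearMap.lsmul ℝ ℝ, volume] v

theorem integral_normed_mul_comp_sub {g : E → ℝ} (hg : Integrable g) :
    Integrable (fun x => ∫ y, φ.normed volume y * g (x - y)) ∧
      ∫ x, ∫ y, φ.normed volume y * g (x - y) = ∫ x, g x := by
  refine ⟨φ.integrable_normed.integrable_convolution (ContinuousLinearMap.lsmul ℝ ℝ) hg, ?_⟩
  have := integral_convolution (ContinuousLinearMap.lsmul ℝ ℝ)
    (φ.integrable_normed (μ := volume)) hg
  rw [φ.integral_normed] at this
  simpa [convolution] using this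

theorem integrable_normed_smul_comp_sub {F : Type*} [NormedAddCommGroup F] [NormedSpace ℝ F]
    {g : E → F} (hg : LocallyIntegrable g) (x : E) :
    Integrable (fun y => φ.normed volume y • g (x - y)) :=
  φ.hasCompactSupport_normed.convolutionExists_left (ContinuousLinearMap.lsmul ℝ ℝ)
    φ.continuous_normed hg x

theorem locallyIntegrable_of_integrable_norm_sq {F : Type*} [NormedAddCommGroup F] {g : E → F}
    (hm : AEStronglyMeasurable g) (hg : Integrable fun x => ‖g x‖ ^ 2) : LocallyIntegrable g := by
  refine ((locallyIntegrable_const (1 : ℝ)).add hg.locallyIntegrable).mono hm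
    (Eventually.of_forall fun x => ?_)
  simp only [Pi.add_apply]
  rw [Real.norm_of_nonneg (by positivity)]
  nlinarith [sq_nonneg (‖g x‖ - 1), norm_nonneg (g x)]

theorem integral_norm_integral_normed_smul_sq_le {F : Type*} [NormedAddCommGroup F]
    [NormedSpace ℝ F] {g : E → F} {G : E → F} (hgm : AEStronglyMeasurable g)
    (hg : Integrable fun x => ‖g x‖ ^ 2)
    (hGm : AEStronglyMeasurable G) (hG : ∀ x, G x = ∫ y, φ.normed volume y • g (x - y)) :
    (Integrable fun x => ‖G x‖ ^ 2) ∧ ∫ x, ‖G x‖ ^ 2 ≤ ∫ x, ‖g x‖ ^ 2 := by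
  obtain ⟨h1, h2⟩ := integral_normed_mul_comp_sub φ hg
  have h3 : ∀ x, ‖G x‖ ^ 2 ≤ ∫ y, φ.normed volume y * ‖g (x - y)‖ ^ 2 := fun x => by
    rw [hG x]
    exact norm_integral_smul_sq_le (fun y => φ.nonneg_normed y) φ.integrable_normed
      φ.integral_normed
      (integrable_normed_smul_comp_sub φ (locallyIntegrable_of_integrable_norm_sq hgm hg) x)
      (integrable_normed_smul_comp_sub φ hg.locallyIntegrable x)
  have h4 : Integrable fun x => ‖G x‖ ^ 2 :=
    h1.mono' (hGm.norm.pow 2) (Eventually.of_forall fun x => by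
      rw [Real.norm_of_nonneg (by positivity)]
      exact h3 x)
  exact ⟨h4, (integral_mono h4 h1 h3).trans_eq h2⟩

variable {v : E → ℝ}

theorem contDiff_mollify (hv : Continuous v) : ContDiff ℝ 1 (mollify φ v) :=
  φ.hasCompactSupport_normed.contDiff_convolution_left _ (φ.contDiff_normed (n := 1))
    hv.locallyIntegrable

theorem fderiv_mollify (hv : Differentiable ℝ v) (hv' : Integrable fun x => ‖fderiv ℝ v x‖ ^ 2)
    (x : E) : fderiv ℝ (mollify φ v) x = ∫ y, φ.normed volume y • fderiv ℝ v (x - y) := by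
  have hloc := locallyIntegrable_of_integrable_norm_sq
    (measurable_fderiv ℝ v).aestronglyMeasurable hv'
  have hvl := hv.continuous.locallyIntegrable (μ := volume)
  have h1 := (φ.hasCompactSupport_normed (μ := volume)).hasFDerivAt_convolution_left
    (ContinuousLinearMap.lsmul ℝ ℝ) (φ.contDiff_normed (n := 1)) hvl x
  rw [mollify, h1.fderiv]
  ext e
  have hi := integrable_normed_smul_comp_sub φ hloc x
  have hψ : ContDiff ℝ 1 (φ.normed (volume : Measure E)) := φ.contDiff_normed
  have hcs : HasCompactSupport (φ.normed (volume : Measure E)) := φ.hasCompactSupport_normed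
  have hce : HasCompactSupport fun y => fderiv ℝ (φ.normed (volume : Measure E)) y e :=
    hcs.fderiv_apply (𝕜 := ℝ) e
  have hde : Continuous fun y => fderiv ℝ (φ.normed (volume : Measure E)) y e :=
    (hψ.continuous_fderiv (by norm_num)).clm_apply continuous_const
  have hex := (hcs.fderiv (𝕜 := ℝ)).convolutionExists_left
    ((ContinuousLinearMap.lsmul ℝ ℝ : ℝ →L[ℝ] ℝ →L[ℝ] ℝ).precompL E)
    (hψ.continuous_fderiv (by norm_num)) hvl x
  rw [ContinuousLinearMap.integral_apply hi, convolution_def,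
    ContinuousLinearMap.integral_apply hex]
  have hg : ∀ y, fderiv ℝ (fun y => v (x - y)) y e = -fderiv ℝ v (x - y) e := fun y => by
    have h2 := (hv (x - y)).hasFDerivAt.comp y ((hasFDerivAt_id y).const_sub x)
    have h3 : fderiv ℝ (fun y => v (x - y)) y = _ := h2.fderiv
    rw [h3]
    simp
  have hibp := integral_mul_fderiv_eq_neg_fderiv_mul_of_integrable (μ := (volume : Measure E))
    (f := φ.normed volume) (g := fun y => v (x - y)) (v := e)
    (hce.convolutionExists_left (ContinuousLinearMap.lsmul ℝ ℝ) hde hvl x) (by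
      simp only [hg, mul_neg]
      exact (hi.apply_continuousLinearMap e).neg)
    (integrable_normed_smul_comp_sub φ hvl x)
    (fun y _ => hψ.differentiable (by norm_num) y)
    (fun y _ => (hv (x - y)).comp y ((hasFDerivAt_id y).const_sub x).differentiableAt)
  simp only [hg, mul_neg, integral_neg, neg_inj] at hibp
  simpa [convolution] using hibp.symm

end Mollification

theorem exists_seq_contDiffBump_rOut_tendsto_zero {E : Type*} [NormedAddCommGroup E]
    [InnerProductSpace ℝ E] :
    ∃ φ : ℕ → ContDiffBump (0 : E), Tendsto (fun n => (φ n).rOut) atTop (𝓝 0) :=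
  ⟨fun n => ⟨1 / ((n : ℝ) + 1) / 2, 1 / ((n : ℝ) + 1), by positivity,
    half_lt_self (by positivity)⟩, tendsto_one_div_add_atTop_nhds_zero_nat⟩

section GagliardoNirenberg

variable {C : ℝ} {u : EuclideanSpace ℝ (Fin 2) → ℝ}

theorem integrable_pow_of_hasCompactSupport (hu : Continuous u) (hcs : HasCompactSupport u) {k : ℕ}
    (hk : k ≠ 0) : Integrable fun x => u x ^ k := by
  refine (hu.pow k).integrable_of_hasCompactSupport (hcs.mono fun x hx h0 => hx ?_)
  simp [show u x = 0 from h0, hk]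

theorem ProfileGN.integral_le_of_contDiff (hC : ProfileGN C) (hC0 : 0 ≤ C)
    (hu : ContDiff ℝ 1 u) (hcs : HasCompactSupport u) :
    ∫ x, u x ^ 4 ≤ C / (2 * Real.pi) * (∫ x, ‖fderiv ℝ u x‖ ^ 2) * ∫ x, u x ^ 2 := by
  obtain ⟨K, hK⟩ := hu.lipschitzWith_of_hasCompactSupport hcs one_ne_zero
  have hK' : LipschitzWith K fun x => |u x| := by
    have := LipschitzWith.comp (lipschitzWith_one_norm (E := ℝ)) hK
    rwa [one_mul] at this
  have hc : Continuous fun x => ‖fderiv ℝ u x‖ ^ 2 :=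
    (hu.continuous_fderiv one_ne_zero).norm.pow 2
  have hcc : HasCompactSupport fun x => ‖fderiv ℝ u x‖ ^ 2 :=
    (hcs.fderiv (𝕜 := ℝ)).comp_left (g := fun L => ‖L‖ ^ 2) (by simp)
  have h := hC.integral_le hC0 hK' (fun x => abs_nonneg _) hcs.norm
    (G := fun x => ‖fderiv ℝ u x‖) (hc.integrable_of_hasCompactSupport hcc)
    (Eventually.of_forall fun x ε hε => by
      have h1 := (hasFDerivAt_iff_isLittleO.1
        (hu.differentiable one_ne_zero x).hasFDerivAt).def hε
      obtain ⟨δ, hδ, h2⟩ := Metric.eventually_nhds_iff.1 h1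
      refine ⟨δ, hδ, fun y hy => ?_⟩
      have h3 := h2 (show dist y x < δ from by rwa [dist_eq_norm, norm_sub_rev])
      have h4 := (fderiv ℝ u x).le_opNorm (y - x)
      have h5 : |u y| - |u x| ≤ |u y - u x| := abs_sub_abs_le_abs_sub _ _
      have h6 := norm_add_le (u y - u x - fderiv ℝ u x (y - x)) (fderiv ℝ u x (y - x))
      rw [sub_add_cancel, Real.norm_eq_abs (u y - u x)] at h6
      rw [norm_sub_rev x y]
      linarith)
  have habs : ∀ x, |u x| ^ 4 = u x ^ 4 := fun x => Even.pow_abs (by decide) (u x)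
  simpa only [sq_abs, habs] using h

theorem ProfileGN.integral_le_of_hasCompactSupport (hC : ProfileGN C) (hC0 : 0 ≤ C)
    (hu : Differentiable ℝ u) (hcs : HasCompactSupport u)
    (hu' : Integrable fun x => ‖fderiv ℝ u x‖ ^ 2) :
    ∫ x, u x ^ 4 ≤ C / (2 * Real.pi) * (∫ x, ‖fderiv ℝ u x‖ ^ 2) * ∫ x, u x ^ 2 := by
  have hi2 : Integrable fun x => ‖u x‖ ^ 2 :=
    integrable_pow_of_hasCompactSupport hu.continuous.norm hcs.norm two_ne_zero
  obtain ⟨φ, hφ⟩ := exists_seq_contDiffBump_rOut_tendsto_zero (E := EuclideanSpace ℝ (Fin 2))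
  have hw : ∀ n, ContDiff ℝ 1 (mollify (φ n) u) := fun n => contDiff_mollify _ hu.continuous
  have hwc : ∀ n, HasCompactSupport (mollify (φ n) u) := fun n =>
    (φ n).hasCompactSupport_normed.convolution _ hcs
  refine (integral_le_of_tendsto_of_nonneg (g := fun n x => mollify (φ n) u x ^ 4)
    (fun n => integrable_pow_of_hasCompactSupport (hw n).continuous (hwc n) four_ne_zero)
    (fun n => Eventually.of_forall fun x => Even.pow_nonneg (by decide) _)
    (Eventually.of_forall fun x => (ContDiffBump.convolution_tendsto_right_of_continuous hφ
      hu.continuous x).pow 4) (fun n => ?_) tendsto_const_nhds).2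
  have h1 := integral_norm_integral_normed_smul_sq_le (φ n) hu.continuous.aestronglyMeasurable hi2
    (hw n).continuous.aestronglyMeasurable fun x => rfl
  have h2 := integral_norm_integral_normed_smul_sq_le (φ n)
    (measurable_fderiv ℝ u).aestronglyMeasurable hu'
    (measurable_fderiv ℝ (mollify (φ n) u)).aestronglyMeasurable (fderiv_mollify (φ n) hu hu')
  simp only [Real.norm_eq_abs, sq_abs] at h1
  refine (hC.integral_le_of_contDiff hC0 (hw n) (hwc n)).trans ?_
  have hpi := Real.pi_pos
  exact mul_le_mul (mul_le_mul_of_nonneg_left h2.2 (by positivity)) h1.2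
    (integral_nonneg fun x => sq_nonneg _)
    (mul_nonneg (by positivity) (integral_nonneg fun x => sq_nonneg _))

theorem integral_norm_fderiv_mul_sq_le (hu : Differentiable ℝ u)
    (hi : Integrable fun x => u x ^ 2) (hi' : Integrable fun x => ‖fderiv ℝ u x‖ ^ 2)
    {χ : EuclideanSpace ℝ (Fin 2) → ℝ} (hχ : Differentiable ℝ χ) (hχ1 : ∀ x, |χ x| ≤ 1)
    {a : ℝ} (ha : ∀ x, ‖fderiv ℝ χ x‖ ≤ a) :
    Integrable (fun x => ‖fderiv ℝ (fun x => χ x * u x) x‖ ^ 2) ∧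
      ∫ x, ‖fderiv ℝ (fun x => χ x * u x) x‖ ^ 2
        ≤ (1 + a) * (∫ x, ‖fderiv ℝ u x‖ ^ 2) + (a + a ^ 2) * ∫ x, u x ^ 2 := by
  have ha0 : 0 ≤ a := (norm_nonneg _).trans (ha 0)
  have hle : ∀ x, ‖fderiv ℝ (fun x => χ x * u x) x‖ ^ 2
      ≤ (1 + a) * ‖fderiv ℝ u x‖ ^ 2 + (a + a ^ 2) * u x ^ 2 := fun x => by
    have h1 : ‖fderiv ℝ (fun x => χ x * u x) x‖ ≤ ‖fderiv ℝ u x‖ + a * |u x| := by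
      rw [fderiv_fun_mul (hχ x) (hu x)]
      refine (norm_add_le _ _).trans ?_
      rw [norm_smul, norm_smul, Real.norm_eq_abs, Real.norm_eq_abs, mul_comm a]
      gcongr
      · exact mul_le_of_le_one_left (norm_nonneg _) (hχ1 x)
      · exact ha x
    have h2 := pow_le_pow_left₀ (norm_nonneg _) h1 2
    have h3 := mul_nonneg ha0 (sq_nonneg (‖fderiv ℝ u x‖ - |u x|))
    nlinarith [sq_abs (u x)]
  have hbi := (hi'.const_mul (1 + a)).add (hi.const_mul (a + a ^ 2))
  have h4 : Integrable (fun x => ‖fderiv ℝ (fun x => χ x * u x) x‖ ^ 2) :=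
    hbi.mono' ((measurable_fderiv ℝ _).norm.pow_const 2).aestronglyMeasurable
      (Eventually.of_forall fun x => by
        rw [Real.norm_of_nonneg (by positivity)]
        exact hle x)
  refine ⟨h4, (integral_mono h4 hbi hle).trans_eq ?_⟩
  simp only [Pi.add_apply]
  rw [integral_add (hi'.const_mul _) (hi.const_mul _), integral_const_mul, integral_const_mul]

theorem ProfileGN.integral_le_of_differentiable (hC : ProfileGN C) (hC0 : 0 ≤ C)
    (hu : Differentiable ℝ u) (hi : Integrable fun x => u x ^ 2)
    (hi' : Integrable fun x => ‖fderiv ℝ u x‖ ^ 2) :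
    ∫ x, u x ^ 4 ≤ C / (2 * Real.pi) * (∫ x, ‖fderiv ℝ u x‖ ^ 2) * ∫ x, u x ^ 2 := by
  let φ : ContDiffBump (0 : EuclideanSpace ℝ (Fin 2)) := ⟨1, 2, one_pos, one_lt_two⟩
  have hφ : ContDiff ℝ 1 φ := φ.contDiff
  obtain ⟨K, hK⟩ := hφ.lipschitzWith_of_hasCompactSupport φ.hasCompactSupport one_ne_zero
  obtain ⟨s, hs, hs0⟩ : ∃ s : ℕ → ℝ, Tendsto s atTop (𝓝 0) ∧ ∀ n, 0 < s n :=
    ⟨fun n => 1 / ((n : ℝ) + 1), tendsto_one_div_add_atTop_nhds_zero_nat, fun n => by positivity⟩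
  set χ : ℕ → EuclideanSpace ℝ (Fin 2) → ℝ := fun n x => φ (s n • x) with hχdef
  have hχ : ∀ n, Differentiable ℝ (χ n) := fun n =>
    (hφ.differentiable one_ne_zero).comp (differentiable_id.const_smul (s n))
  have hχ0 : ∀ n x, 0 ≤ χ n x := fun n x => φ.nonneg
  have hχ1 : ∀ n x, χ n x ≤ 1 := fun n x => φ.le_one
  have hχa : ∀ n x, |χ n x| ≤ 1 := fun n x => by
    rw [abs_of_nonneg (hχ0 n x)]
    exact hχ1 n x
  have hχd : ∀ n x, ‖fderiv ℝ (χ n) x‖ ≤ K * s n := fun n x => by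
    have hL : LipschitzWith (K * ‖s n‖₊) (χ n) := hK.comp (lipschitzWith_smul (s n))
    have := norm_fderiv_le_of_lipschitz ℝ hL (x₀ := x)
    rwa [NNReal.coe_mul, coe_nnnorm, Real.norm_of_nonneg (hs0 n).le] at this
  have hχc : ∀ n, HasCompactSupport (χ n) := fun n =>
    φ.hasCompactSupport.comp_smul (hs0 n).ne'
  have hc : ∀ n, HasCompactSupport fun x => χ n x * u x := fun n => (hχc n).mul_right
  have hd : ∀ n, Differentiable ℝ fun x => χ n x * u x := fun n => (hχ n).mul hu
  have hi2 : ∀ n, Integrable fun x => (χ n x * u x) ^ 2 := fun n =>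
    integrable_pow_of_hasCompactSupport (hd n).continuous (hc n) two_ne_zero
  have h2 : ∀ n, ∫ x, (χ n x * u x) ^ 2 ≤ ∫ x, u x ^ 2 := fun n => by
    refine integral_mono (hi2 n) hi fun x => ?_
    simp only [mul_pow]
    exact mul_le_of_le_one_left (sq_nonneg _) (pow_le_one₀ (hχ0 n x) (hχ1 n x))
  have hpi := Real.pi_pos
  refine (integral_le_of_tendsto_of_nonneg (g := fun n x => (χ n x * u x) ^ 4)
    (c := fun n => C / (2 * Real.pi) * ((1 + K * s n) * (∫ x, ‖fderiv ℝ u x‖ ^ 2) +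
      (K * s n + (K * s n) ^ 2) * ∫ x, u x ^ 2) * ∫ x, u x ^ 2)
    (fun n => integrable_pow_of_hasCompactSupport (hd n).continuous (hc n) four_ne_zero)
    (fun n => Eventually.of_forall fun x => Even.pow_nonneg (by decide) _)
    (Eventually.of_forall fun x => ?_) (fun n => ?_) ?_).2
  · have h3 : Tendsto (fun n => s n • x) atTop (𝓝 0) := by
      simpa using hs.smul_const x
    have h4 : Tendsto (fun n => χ n x) atTop (𝓝 1) := by
      have := (hφ.continuous.tendsto 0).comp h3
      rwa [φ.one_of_mem_closedBall (Metric.mem_closedBall_self φ.rIn_pos.le)] at this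
    simpa using (h4.mul_const (u x)).pow 4
  · obtain ⟨h5, h6⟩ := integral_norm_fderiv_mul_sq_le hu hi hi' (hχ n) (hχa n) (hχd n)
    refine (hC.integral_le_of_hasCompactSupport hC0 (hd n) (hc n) h5).trans ?_
    exact mul_le_mul (mul_le_mul_of_nonneg_left h6 (by positivity)) (h2 n)
      (integral_nonneg fun x => sq_nonneg _)
      (mul_nonneg (by positivity) ((integral_nonneg fun x => sq_nonneg _).trans h6))
  · have hKs : Tendsto (fun n => K * s n) atTop (𝓝 0) := by
      simpa using hs.const_mul (K : ℝ)
    have h7 := ((((hKs.const_add 1).mul_const (∫ x, ‖fderiv ℝ u x‖ ^ 2)).add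
      ((hKs.add (hKs.pow 2)).mul_const (∫ x, u x ^ 2))).const_mul
        (C / (2 * Real.pi))).mul_const (∫ x, u x ^ 2)
    simpa using h7

end GagliardoNirenberg

theorem norm_gradient_eq_norm_fderiv (u : EuclideanSpace ℝ (Fin 2) → ℝ)
    (x : EuclideanSpace ℝ (Fin 2)) : ‖gradient u x‖ = ‖fderiv ℝ u x‖ :=
  LinearIsometryEquiv.norm_map _ _

/-- The sharp Gagliardo–Nirenberg (Weinstein) inequality in 2D:
`∫|u|⁴ ≤ (2/a*) (∫|∇u|²)(∫|u|²)` where `a* = ‖Q‖²_{L²}` and `Q` is the positive radial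
solution of `−ΔQ + Q − Q³ = 0`; the constant is sharp (equality holds for `Q`). -/
theorem stmt_11 (Q : EuclideanSpace ℝ (Fin 2) → ℝ)
    (hQpos : ∀ x, 0 < Q x)
    (hQrad : ∀ x y : EuclideanSpace ℝ (Fin 2), ‖x‖ = ‖y‖ → Q x = Q y)
    (hQsmooth : ContDiff ℝ 2 Q)
    (hQL2 : Integrable (fun x => Q x ^ 2))
    (hQgrad : Integrable (fun x => ‖gradient Q x‖ ^ 2))
    (hQ4 : Integrable (fun x => Q x ^ 4))
    (hpde : ∀ x, -lap2 Q x + Q x - Q x ^ 3 = 0)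
    (astar : ℝ) (hastar : astar = ∫ x, Q x ^ 2) :
    (∀ u : EuclideanSpace ℝ (Fin 2) → ℝ, Differentiable ℝ u →
      Integrable (fun x => u x ^ 2) → Integrable (fun x => ‖gradient u x‖ ^ 2) →
      Integrable (fun x => u x ^ 4) →
      (∫ x, u x ^ 4) ≤ (2 / astar) * (∫ x, ‖gradient u x‖ ^ 2) * (∫ x, u x ^ 2)) ∧
    (∫ x, Q x ^ 4) = (2 / astar) * (∫ x, ‖gradient Q x‖ ^ 2) * (∫ x, Q x ^ 2) := by
  have hQ := isGroundProfile_radialPart hQpos hQrad hQsmooth hQL2 hQgrad hQ4 hpde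
  have hpi := Real.pi_pos
  have hastar' := hastar.trans (integral_pow_eq_radialPart hQrad 2)
  have hpos : 0 < astar := by
    rw [hastar]
    refine (integral_pos_iff_support_of_nonneg (fun x => sq_nonneg _) hQL2).2 ?_
    rw [show (Function.support fun x => Q x ^ 2) = Set.univ from
      Set.eq_univ_of_forall fun x => (pow_pos (hQpos x) 2).ne']
    exact isOpen_univ.measure_pos volume Set.univ_nonempty
  set A := ∫ r in Set.Ioi (0 : ℝ), r * radialPart Q r ^ 2 with hA
  have hA0 : 0 < A := by
    by_contra! h
    nlinarith
  refine ⟨fun u hu hi hi' _ => ?_, ?_⟩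
  · simp only [norm_gradient_eq_norm_fderiv] at hi' ⊢
    refine (hQ.profileGN.integral_le_of_differentiable (by positivity) hu hi hi').trans_eq ?_
    rw [← hA, hastar', div_div, mul_comm A]
  · have h4 := hQ.integral_pohozaev (contDiff_radialPart hQsmooth).continuous
      (contDiff_deriv_radialPart hQsmooth).continuous
    have h2 := hQ.integral_deriv_sq (contDiff_radialPart hQsmooth).continuous
      (contDiff_deriv_radialPart hQsmooth).continuous
    rw [integral_pow_eq_radialPart hQrad 4, integral_pow_eq_radialPart hQrad 2,
      integral_norm_gradient_sq_eq_radialPart hQrad hQsmooth, h4, h2, ← hA, hastar']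
    field_simp
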